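/- The number β₂ = √3 · arctan(√3) (which equals π·√3/3) has irrationality measure at most 4.60106; that is, for every real κ > 4.60106, there exist only finitely many pairs (p, q) with p ∈ ℤ and q a positive integer such that |β₂ − p/q| < q^(−κ). -/

import Mathlib

/-!
Let `x = exp (π i / 3)` and let `R` be the product of the binomials `C(n + h, 2h + 1)` with
`h = 3m, 5m, 7m`, a polynomial in `n`. By Lipschitz summation the Abel sums of `R(n) xⁿ` and of
`R'(n) xⁿ` are sums over the lattice `π / 3 + 2πℤ`, and the combinations `∑ R(n) xⁿ` and
`θ ∑ R(n) xⁿ + i ∑ R'(n) xⁿ`, `θ = π / 3`, become integrals over `y > 0` of the polynomial `R(iy)`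
against explicit positive kernels; note that `θ` is a rational multiple of `√3` times
`√3 * arctan √3`. On the other hand both Abel sums are values of rational functions with pole at `1`
only, and `1 - x` is a root of unity, so that they are algebraic integers once multiplied by a
common denominator: the least common multiple of `1, …, 14m + 1`, deprived of the primes which a
digit argument shows to divide every value `R(n)`. This yields integers `a`, `b` such that
`b * (√3 * arctan √3) - a` and `b` are that denominator times explicit integrals.

The prime number theorem, proved via the Wiener–Ikehara theorem, gives the growth of the
denominator, and a tangent bound for the log-concave integrands near their maxima gives that of the
integrals: the form is at most `exp (-9.480471 * m)` and `b` at most `exp (34.13973 * m)`, whence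
the exponent `1 + 34.13973 / 9.480471 < 4.60106`.
-/

namespace BetaTwo

/-! ### The Fejér kernel -/

section FejerKernel

open MeasureTheory Filter Topology Set

/-- The tent function on `[-1, 1]`, whose Fourier transform is the Fejér kernel. -/
noncomputable def tent (t : ℝ) : ℝ := max (1 - |t|) 0

/-- The (unnormalised) Fejér kernel of the real line. Its value at `0` is the junk value `0`
instead of the limit `1`, which is harmless as it only occurs under integral signs. -/
noncomputable def fejerKernel (v : ℝ) : ℝ := 2 * (1 - Real.cos v) / v ^ 2

lemma continuous_tent : Continuous tent := by unfold tent; fun_prop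

lemma tent_nonneg (t : ℝ) : 0 ≤ tent t := le_max_right _ _

lemma tent_of_notMem_Icc {t : ℝ} (ht : t ∉ Icc (-1 : ℝ) 1) : tent t = 0 :=
  max_eq_right (sub_nonpos.mpr (le_of_not_ge fun h => ht (abs_le.mp h)))

lemma tent_of_mem_Icc {t : ℝ} (ht : t ∈ Icc (-1 : ℝ) 1) : tent t = 1 - |t| :=
  max_eq_left (sub_nonneg.mpr (abs_le.mpr ht))

lemma tent_neg (t : ℝ) : tent (-t) = tent t := by rw [tent, abs_neg, tent]

lemma integrable_tent : Integrable tent :=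
  continuous_tent.integrable_of_hasCompactSupport
    (HasCompactSupport.intro isCompact_Icc fun _ => tent_of_notMem_Icc)

lemma fejerKernel_nonneg (v : ℝ) : 0 ≤ fejerKernel v :=
  div_nonneg (by linarith [Real.cos_le_one v]) (sq_nonneg _)

lemma measurable_fejerKernel : Measurable fejerKernel := by unfold fejerKernel; fun_prop

lemma fejerKernel_le (v : ℝ) : fejerKernel v ≤ 5 * (1 + v ^ 2)⁻¹ := by
  rcases eq_or_ne v 0 with rfl | hv
  · simp [fejerKernel]
  rw [fejerKernel, ← div_eq_mul_inv, div_le_div_iff₀ (by positivity) (by positivity)]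
  nlinarith [Real.one_sub_sq_div_two_le_cos (x := v), Real.neg_one_le_cos v, sq_nonneg v]

lemma integrable_fejerKernel : Integrable fejerKernel := by
  refine (integrable_inv_one_add_sq.const_mul 5).mono' measurable_fejerKernel.aestronglyMeasurable
    (ae_of_all _ fun v => ?_)
  rw [Real.norm_of_nonneg (fejerKernel_nonneg v)]
  exact fejerKernel_le v

lemma integral_fejerKernel_pos : 0 < ∫ v, fejerKernel v := by
  rw [integral_pos_iff_support_of_nonneg fejerKernel_nonneg integrable_fejerKernel]
  refine lt_of_lt_of_le (by simp) (measure_mono (s := Ioo (1 : ℝ) 2) fun v hv => ne_of_gt ?_)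
  have hcos : Real.cos v < 1 := by
    simpa using Real.cos_lt_cos_of_nonneg_of_le_pi le_rfl
      (by linarith [hv.2, Real.pi_gt_three]) (zero_lt_one.trans hv.1)
  exact div_pos (by linarith) (pow_pos (zero_lt_one.trans hv.1) 2)

lemma tendsto_setIntegral_Icc_fejerKernel :
    Tendsto (fun n : ℕ => ∫ v in Icc (-(n : ℝ)) n, fejerKernel v) atTop
      (𝓝 (∫ v, fejerKernel v)) := by
  refine (intervalIntegral_tendsto_integral integrable_fejerKernel
    (tendsto_neg_atTop_atBot.comp tendsto_natCast_atTop_atTop)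
    tendsto_natCast_atTop_atTop).congr fun n => ?_
  rw [integral_Icc_eq_integral_Ioc]
  exact intervalIntegral.integral_of_le (neg_le_self n.cast_nonneg)

lemma integral_one_sub_mul_cos {v : ℝ} (hv : v ≠ 0) :
    ∫ t in (0 : ℝ)..1, (1 - t) * Real.cos (v * t) = (1 - Real.cos v) / v ^ 2 := by
  have hderiv (t : ℝ) : HasDerivAt
      (fun t => (1 - t) * Real.sin (v * t) / v - Real.cos (v * t) / v ^ 2)
      ((1 - t) * Real.cos (v * t)) t := by
    have hlin : HasDerivAt (fun t => v * t) v t := by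
      simpa using (hasDerivAt_id t).const_mul v
    refine (((((hasDerivAt_id t).const_sub 1).mul hlin.sin).div_const v).sub
      (hlin.cos.div_const (v ^ 2))).congr_deriv ?_
    simp only [id]
    field_simp
    ring
  rw [intervalIntegral.integral_eq_sub_of_hasDerivAt (fun t _ => hderiv t)
    (Continuous.intervalIntegrable (by fun_prop) _ _)]
  simp
  ring

theorem integral_tent_mul_exp {v : ℝ} (hv : v ≠ 0) :
    ∫ t : ℝ, (tent t : ℂ) * Complex.exp (Complex.I * v * t) = fejerKernel v := by
  set f : ℝ → ℂ := fun t => (tent t : ℂ) * Complex.exp (Complex.I * v * t) with hf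
  have hcont : Continuous f := by have := continuous_tent; fun_prop
  have hsupp : ∫ t, f t = ∫ t in (-1 : ℝ)..1, f t := by
    rw [intervalIntegral.integral_of_le (by norm_num), ← integral_Icc_eq_integral_Ioc]
    exact (setIntegral_eq_integral_of_forall_compl_eq_zero fun t ht => by
      simp [hf, tent_of_notMem_Icc ht]).symm
  have heven (t : ℝ) (ht : t ∈ uIcc (0 : ℝ) 1) :
      f (-t) + f t = ((2 * ((1 - t) * Real.cos (v * t)) : ℝ) : ℂ) := by
    rw [uIcc_of_le zero_le_one] at ht
    have htent : tent t = 1 - t := by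
      rw [tent_of_mem_Icc ⟨by linarith [ht.1], ht.2⟩, abs_of_nonneg ht.1]
    simp only [hf, tent_neg, htent]
    push_cast
    rw [Complex.cos]
    ring_nf
  have hcontNeg : Continuous fun t => f (-t) := hcont.comp continuous_neg
  have hfold : ∫ t in (-1 : ℝ)..0, f t = ∫ t in (0 : ℝ)..1, f (-t) := by simp
  rw [hsupp, ← intervalIntegral.integral_add_adjacent_intervals (b := 0)
    (hcont.intervalIntegrable _ _) (hcont.intervalIntegrable _ _), hfold,
    ← intervalIntegral.integral_add (hcontNeg.intervalIntegrable _ _)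
      (hcont.intervalIntegrable _ _), intervalIntegral.integral_congr heven,
    intervalIntegral.integral_ofReal, intervalIntegral.integral_const_mul,
    integral_one_sub_mul_cos hv, fejerKernel, mul_div_assoc]

end FejerKernel

/-! ### The Wiener–Ikehara theorem -/

section LaplaceExtension

open MeasureTheory Filter Topology Set

/-- The function `b`, bounded by `C` and supported on `(0, ∞)`, has a Laplace transform that
extends to a continuous function `G` on the closed right half-plane. -/
structure HasLaplaceExtension (b : ℝ → ℝ) (C : ℝ) (G : ℂ → ℂ) : Prop where
  measurable : Measurable b
  abs_le : ∀ u, |b u| ≤ C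
  eq_zero_of_nonpos : ∀ u ≤ 0, b u = 0
  laplace : ∀ z : ℂ, 0 < z.re → ∫ u : ℝ, (b u : ℂ) * Complex.exp (-z * u) = G z
  continuousOn : ContinuousOn G {z | 0 ≤ z.re}

/-- The average of `a` around `y` against the Fejér kernel at scale `1 / l`. -/
noncomputable def fejerMean (a : ℝ → ℝ) (l y : ℝ) : ℝ := ∫ v : ℝ, a (y - v / l) * fejerKernel v

lemma integrable_mul_fejerKernel {a : ℝ → ℝ} {C : ℝ} (hm : Measurable a) (hC : ∀ u, |a u| ≤ C)
    (l y : ℝ) : Integrable fun v : ℝ => a (y - v / l) * fejerKernel v :=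
  integrable_fejerKernel.bdd_mul (hm.comp (by fun_prop)).aestronglyMeasurable
    (ae_of_all _ fun _ => hC _)

lemma fejerMean_eq_mul_integral (a : ℝ → ℝ) {l : ℝ} (hl : 0 < l) (y : ℝ) :
    fejerMean a l y = l * ∫ u : ℝ, a u * fejerKernel (l * (y - u)) := by
  have hscale := Measure.integral_comp_mul_left (fun v => a (y - v / l) * fejerKernel v) l
  rw [smul_eq_mul, abs_of_pos (inv_pos.mpr hl)] at hscale
  rw [← integral_sub_left_eq_self _ volume y, fejerMean]
  simp only [sub_sub_cancel]
  simp only [mul_div_cancel_left₀ _ hl.ne'] at hscale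
  rw [hscale, mul_inv_cancel_left₀ hl.ne']

namespace HasLaplaceExtension

variable {b : ℝ → ℝ} {C : ℝ} {G : ℂ → ℂ}

lemma nonneg (h : HasLaplaceExtension b C G) : 0 ≤ C := (abs_nonneg _).trans (h.abs_le 0)

lemma norm_mul_exp_le (h : HasLaplaceExtension b C G) {ε : ℝ} (hε : 0 ≤ ε) (u : ℝ) :
    ‖b u * Real.exp (-ε * u)‖ ≤ C := by
  rcases le_or_gt u 0 with hu | hu
  · simpa [h.eq_zero_of_nonpos u hu] using h.nonneg
  · rw [norm_mul, Real.norm_of_nonneg (Real.exp_pos _).le]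
    refine (mul_le_of_le_one_right (norm_nonneg _) ?_).trans (h.abs_le u)
    exact Real.exp_le_one_iff.mpr (by nlinarith)

lemma integrable_abs_mul_exp (h : HasLaplaceExtension b C G) {ε : ℝ} (hε : 0 < ε) :
    Integrable fun u : ℝ => |b u| * Real.exp (-ε * u) := by
  rw [← integrableOn_iff_integrable_of_support_subset (s := Ioi 0) fun u hu => by
    by_contra hneg
    exact hu (by simp [h.eq_zero_of_nonpos u (not_lt.mp hneg)])]
  refine Integrable.bdd_mul (c := C) (exp_neg_integrableOn_Ioi 0 hε)
    h.measurable.abs.aestronglyMeasurable (ae_of_all _ fun u => ?_)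
  simpa using h.abs_le u

lemma integral_mul_exp_mul_fejerKernel (h : HasLaplaceExtension b C G) {l : ℝ} (hl : 0 < l)
    (y : ℝ) {ε : ℝ} (hε : 0 < ε) :
    ∫ u : ℝ, ((b u * Real.exp (-ε * u) * fejerKernel (l * (y - u)) : ℝ) : ℂ) =
      ∫ t : ℝ, (tent t : ℂ) * Complex.exp (Complex.I * (l * y) * t) *
        G (ε + Complex.I * (l * t)) := by
  have hG (t : ℝ) : G (ε + Complex.I * (l * t)) =
      ∫ u : ℝ, (b u : ℂ) * Complex.exp (-(ε + Complex.I * (l * t)) * u) :=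
    (h.laplace _ (by simp [hε])).symm
  simp only [hG, ← integral_const_mul]
  rw [integral_integral_swap]
  · apply integral_congr_ae
    filter_upwards [(by simp [ae_iff] : ∀ᵐ u : ℝ, u ≠ y)] with u hu
    push_cast
    rw [← integral_tent_mul_exp (mul_ne_zero hl.ne' (sub_ne_zero.mpr hu.symm)),
      ← integral_const_mul]
    congr 1 with t
    have hexp : Complex.exp (-ε * u) * Complex.exp (Complex.I * (l * (y - u)) * t) =
        Complex.exp (Complex.I * (l * y) * t) *
          Complex.exp (-(ε + Complex.I * (l * t)) * u) := by
      rw [← Complex.exp_add, ← Complex.exp_add]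
      ring_nf
    push_cast
    linear_combination (b u : ℂ) * tent t * hexp
  · have hmeas : Measurable (Function.uncurry fun t u : ℝ =>
        (tent t : ℂ) * Complex.exp (Complex.I * (l * y) * t) *
          ((b u : ℂ) * Complex.exp (-(ε + Complex.I * (l * t)) * u))) := by
      have := continuous_tent.measurable
      have := h.measurable
      unfold Function.uncurry
      fun_prop
    refine (integrable_tent.mul_prod (h.integrable_abs_mul_exp hε)).mono'
      hmeas.aestronglyMeasurable (ae_of_all _ fun p => ?_)
    simp [Function.uncurry, Complex.norm_exp, abs_of_nonneg (tent_nonneg _)]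

lemma tendsto_integral_mul_exp_mul_fejerKernel (h : HasLaplaceExtension b C G) {l : ℝ}
    (hl : 0 < l) (y : ℝ) :
    Tendsto (fun ε : ℝ =>
        ∫ u : ℝ, ((b u * Real.exp (-ε * u) * fejerKernel (l * (y - u)) : ℝ) : ℂ)) (𝓝[>] 0)
      (𝓝 (∫ u : ℝ, ((b u * fejerKernel (l * (y - u)) : ℝ) : ℂ))) := by
  have hmb := h.measurable
  have hmK := measurable_fejerKernel
  refine tendsto_integral_filter_of_dominated_convergence (fun u => C * fejerKernel (l * (y - u)))
    (Eventually.of_forall fun ε => Measurable.aestronglyMeasurable (by fun_prop)) ?_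
    (((integrable_fejerKernel.comp_mul_left' hl.ne').comp_sub_left y).const_mul _) ?_
  · filter_upwards [self_mem_nhdsWithin] with ε hε
    refine ae_of_all _ fun u => ?_
    rw [Complex.norm_real, norm_mul, Real.norm_of_nonneg (fejerKernel_nonneg _)]
    exact mul_le_mul_of_nonneg_right (h.norm_mul_exp_le (le_of_lt hε) u) (fejerKernel_nonneg _)
  · refine ae_of_all _ fun u => ?_
    have hcont : Continuous fun ε : ℝ =>
        ((b u * Real.exp (-ε * u) * fejerKernel (l * (y - u)) : ℝ) : ℂ) := by fun_prop
    simpa using (hcont.tendsto 0).mono_left nhdsWithin_le_nhds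

lemma tendsto_integral_tent_mul (h : HasLaplaceExtension b C G) (l y : ℝ) :
    Tendsto (fun ε : ℝ => ∫ t : ℝ, (tent t : ℂ) * Complex.exp (Complex.I * (l * y) * t) *
        G (ε + Complex.I * (l * t))) (𝓝[>] 0)
      (𝓝 (∫ t : ℝ, (tent t : ℂ) * Complex.exp (Complex.I * (l * y) * t) *
        G (Complex.I * (l * t)))) := by
  set path : ℝ × ℝ → ℂ := fun q => q.1 + Complex.I * (l * q.2) with hpath
  have hpathc : Continuous path := by fun_prop
  have hGc : ContinuousOn (fun q => G (path q)) (Ici 0 ×ˢ univ) :=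
    h.continuousOn.comp hpathc.continuousOn fun q hq => by simpa [hpath] using hq
  obtain ⟨M, hM⟩ := (isCompact_Icc.prod isCompact_Icc).exists_bound_of_continuousOn
    (hGc.mono (prod_mono (Icc_subset_Ici_self (a := (1 : ℝ)) (b := 0))
      (subset_univ (Icc (-1 : ℝ) 1))))
  refine tendsto_integral_filter_of_dominated_convergence (fun t => tent t * M) ?_ ?_
    (integrable_tent.mul_const _) (ae_of_all _ fun t => ?_)
  · filter_upwards [self_mem_nhdsWithin] with ε hε
    have hGε : Continuous fun t : ℝ => G (ε + Complex.I * (l * t)) :=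
      hGc.comp_continuous (f := fun t : ℝ => (ε, t)) (by fun_prop)
        fun t => ⟨mem_Ici.mpr (le_of_lt hε), mem_univ t⟩
    exact (((Complex.continuous_ofReal.comp continuous_tent).mul
      (by fun_prop)).mul hGε).aestronglyMeasurable
  · filter_upwards [Ioc_mem_nhdsGT zero_lt_one] with ε hε
    refine ae_of_all _ fun t => ?_
    by_cases ht : t ∈ Icc (-1 : ℝ) 1
    · have hphase : ‖Complex.exp (Complex.I * (l * y) * t)‖ = 1 := by simp [Complex.norm_exp]
      rw [norm_mul, norm_mul, Complex.norm_real, Real.norm_of_nonneg (tent_nonneg t), hphase,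
        mul_one]
      exact mul_le_mul_of_nonneg_left (hM (ε, t) ⟨⟨hε.1.le, hε.2⟩, ht⟩) (tent_nonneg t)
    · simp [tent_of_notMem_Icc ht]
  · have hlim : Tendsto (fun ε : ℝ => ((ε, t) : ℝ × ℝ)) (𝓝[>] 0)
        (𝓝[Ici 0 ×ˢ univ] (0, t)) := by
      refine tendsto_nhdsWithin_iff.mpr ⟨?_, ?_⟩
      · exact ((Continuous.prodMk_left t).tendsto 0).mono_left nhdsWithin_le_nhds
      · filter_upwards [self_mem_nhdsWithin] with ε hε using ⟨mem_Ici.mpr (le_of_lt hε), mem_univ t⟩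
    have := (hGc (0, t) ⟨self_mem_Ici, mem_univ t⟩).tendsto.comp hlim
    exact Tendsto.const_mul _ (by simpa [hpath, Function.comp_def] using this)

theorem integral_mul_fejerKernel (h : HasLaplaceExtension b C G) {l : ℝ} (hl : 0 < l) (y : ℝ) :
    ((∫ u : ℝ, b u * fejerKernel (l * (y - u)) : ℝ) : ℂ) =
      ∫ t : ℝ, (tent t : ℂ) * Complex.exp (Complex.I * (l * y) * t) *
        G (Complex.I * (l * t)) := by
  rw [← integral_complex_ofReal]
  refine tendsto_nhds_unique (h.tendsto_integral_mul_exp_mul_fejerKernel hl y)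
    ((h.tendsto_integral_tent_mul l y).congr' ?_)
  filter_upwards [self_mem_nhdsWithin] with ε hε
  exact (h.integral_mul_exp_mul_fejerKernel hl y hε).symm

theorem tendsto_fejerMean (h : HasLaplaceExtension b C G) {l : ℝ} (hl : 0 < l) :
    Tendsto (fejerMean b l) atTop (𝓝 0) := by
  have hfreq : Tendsto (fun y : ℝ => -(l / (2 * Real.pi)) * y) atTop (cocompact ℝ) :=
    (tendsto_id.const_mul_atTop_of_neg (neg_neg_of_pos (by positivity))).mono_right
      atBot_le_cocompact
  have hriemannLebesgue := (Real.tendsto_integral_exp_smul_cocompact fun t : ℝ =>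
    (tent t : ℂ) * G (Complex.I * (l * t))).comp hfreq
  have hint : Tendsto (fun y : ℝ => ((∫ u : ℝ, b u * fejerKernel (l * (y - u)) : ℝ) : ℂ)) atTop
      (𝓝 0) := by
    refine hriemannLebesgue.congr fun y => ?_
    rw [h.integral_mul_fejerKernel hl y, Function.comp_apply]
    congr 1 with t
    have hphase : 2 * Real.pi * -(t * (-(l / (2 * Real.pi)) * y)) = l * y * t := by field_simp
    rw [Circle.smul_def, Real.fourierChar_apply, smul_eq_mul, hphase]
    push_cast
    ring_nf
  have hre := ((Complex.continuous_re.tendsto _).comp hint).const_mul l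
  simp only [Complex.zero_re, mul_zero] at hre
  exact hre.congr fun y => (fejerMean_eq_mul_integral b hl y).symm

end HasLaplaceExtension

end LaplaceExtension

section WienerIkehara

open MeasureTheory Filter Topology Set

/-- A nondecreasing function `S` vanishing on `(-∞, 1]` and satisfying a Chebyshev bound
`S x ≤ C * x`, such as the summatory function of a nonnegative arithmetic function. -/
structure HasChebyshevBound (S : ℝ → ℝ) (C : ℝ) : Prop where
  monotone : Monotone S
  eq_zero_of_le_one : ∀ x ≤ 1, S x = 0
  le_mul : ∀ x, 0 ≤ x → S x ≤ C * x

/-- The density `S x / x` of `S` in the logarithmic variable `x = exp u`. -/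
noncomputable def logDensity (S : ℝ → ℝ) (u : ℝ) : ℝ := S (Real.exp u) * Real.exp (-u)

namespace HasChebyshevBound

variable {S : ℝ → ℝ} {C : ℝ}

lemma logDensity_eq_zero (h : HasChebyshevBound S C) {u : ℝ} (hu : u ≤ 0) :
    logDensity S u = 0 := by
  rw [logDensity, h.eq_zero_of_le_one _ (Real.exp_le_one_iff.mpr hu), zero_mul]

lemma logDensity_nonneg (h : HasChebyshevBound S C) (u : ℝ) : 0 ≤ logDensity S u := by
  refine mul_nonneg ?_ (Real.exp_pos _).le
  rw [← h.eq_zero_of_le_one (min (Real.exp u) 1) (min_le_right _ _)]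
  exact h.monotone (min_le_left _ _)

lemma logDensity_le (h : HasChebyshevBound S C) (u : ℝ) : logDensity S u ≤ C := by
  rw [logDensity, Real.exp_neg, ← div_eq_mul_inv, div_le_iff₀ (Real.exp_pos u)]
  exact h.le_mul _ (Real.exp_pos u).le

lemma abs_logDensity_le (h : HasChebyshevBound S C) (u : ℝ) : |logDensity S u| ≤ C := by
  rw [abs_of_nonneg (h.logDensity_nonneg u)]
  exact h.logDensity_le u

lemma measurable_logDensity (h : HasChebyshevBound S C) : Measurable (logDensity S) :=
  (h.monotone.measurable.comp Real.measurable_exp).mul (by fun_prop)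

lemma logDensity_le_mul_exp (h : HasChebyshevBound S C) {u v d : ℝ} (huv : u ≤ v)
    (hd : v ≤ u + d) : logDensity S u ≤ logDensity S v * Real.exp d := by
  have hdensity : logDensity S u ≤ logDensity S v * Real.exp (v - u) := by
    rw [logDensity, logDensity, mul_assoc, ← Real.exp_add, show -v + (v - u) = -u by ring]
    exact mul_le_mul_of_nonneg_right (h.monotone (Real.exp_le_exp.mpr huv)) (Real.exp_pos _).le
  exact hdensity.trans (mul_le_mul_of_nonneg_left (Real.exp_le_exp.mpr (by linarith))
    (h.logDensity_nonneg v))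

lemma integrable_logDensity_mul (h : HasChebyshevBound S C) (l y : ℝ) :
    Integrable fun v : ℝ => logDensity S (y - v / l) * fejerKernel v :=
  integrable_mul_fejerKernel h.measurable_logDensity h.abs_logDensity_le l y

end HasChebyshevBound

lemma div_sq_mem_Icc {L v : ℝ} (hL : 0 < L) (hv : v ∈ Icc (-L) L) :
    v / L ^ 2 ∈ Icc (-(1 / L)) (1 / L) := by
  have hinv : 1 / L = L / L ^ 2 := by field_simp
  rw [hinv, ← neg_div]
  exact ⟨by gcongr; exact hv.1, by gcongr; exact hv.2⟩

namespace HasChebyshevBound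

variable {S : ℝ → ℝ} {C : ℝ}

lemma mul_setIntegral_le_fejerMean (h : HasChebyshevBound S C) {L : ℝ} (hL : 0 < L) (y : ℝ) :
    logDensity S y * Real.exp (-(2 / L)) * ∫ v in Icc (-L) L, fejerKernel v ≤
      fejerMean (logDensity S) (L ^ 2) (y + 1 / L) := by
  rw [← integral_const_mul]
  calc ∫ v in Icc (-L) L, logDensity S y * Real.exp (-(2 / L)) * fejerKernel v
      ≤ ∫ v in Icc (-L) L, logDensity S (y + 1 / L - v / L ^ 2) * fejerKernel v := by
        refine setIntegral_mono_on (integrable_fejerKernel.const_mul _).integrableOn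
          (h.integrable_logDensity_mul _ _).integrableOn measurableSet_Icc fun v hv =>
          mul_le_mul_of_nonneg_right ?_ (fejerKernel_nonneg v)
        obtain ⟨hlo, hhi⟩ := div_sq_mem_Icc hL hv
        have hle := h.logDensity_le_mul_exp (show y ≤ y + 1 / L - v / L ^ 2 by linarith)
          (show _ ≤ y + 2 / L by linarith [show 2 / L = 1 / L + 1 / L by ring])
        rwa [Real.exp_neg, ← div_eq_mul_inv, div_le_iff₀ (Real.exp_pos _)]
    _ ≤ fejerMean (logDensity S) (L ^ 2) (y + 1 / L) :=
        setIntegral_le_integral (h.integrable_logDensity_mul _ _) (ae_of_all _ fun v =>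
          mul_nonneg (h.logDensity_nonneg _) (fejerKernel_nonneg v))

lemma fejerMean_le_mul_integral_add (h : HasChebyshevBound S C) {L : ℝ} (hL : 0 < L) (y : ℝ) :
    fejerMean (logDensity S) (L ^ 2) (y - 1 / L) ≤
      logDensity S y * Real.exp (2 / L) * (∫ v, fejerKernel v) +
        C * ((∫ v, fejerKernel v) - ∫ v in Icc (-L) L, fejerKernel v) := by
  have htail : (∫ v, fejerKernel v) - ∫ v in Icc (-L) L, fejerKernel v =
      ∫ v in (Icc (-L) L)ᶜ, fejerKernel v := by
    rw [← integral_add_compl (measurableSet_Icc (a := -L) (b := L)) integrable_fejerKernel]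
    ring
  rw [fejerMean, htail,
    ← integral_add_compl (measurableSet_Icc (a := -L) (b := L)) (h.integrable_logDensity_mul _ _)]
  refine add_le_add ?_ ?_
  · calc ∫ v in Icc (-L) L, logDensity S (y - 1 / L - v / L ^ 2) * fejerKernel v
        ≤ ∫ v in Icc (-L) L, logDensity S y * Real.exp (2 / L) * fejerKernel v := by
          refine setIntegral_mono_on (h.integrable_logDensity_mul _ _).integrableOn
            (integrable_fejerKernel.const_mul _).integrableOn measurableSet_Icc fun v hv =>
            mul_le_mul_of_nonneg_right ?_ (fejerKernel_nonneg v)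
          obtain ⟨hlo, hhi⟩ := div_sq_mem_Icc hL hv
          exact h.logDensity_le_mul_exp (by linarith)
            (by linarith [show 2 / L = 1 / L + 1 / L by ring])
      _ ≤ ∫ v, logDensity S y * Real.exp (2 / L) * fejerKernel v :=
          setIntegral_le_integral (integrable_fejerKernel.const_mul _) (ae_of_all _ fun v =>
            mul_nonneg (mul_nonneg (h.logDensity_nonneg _) (Real.exp_pos _).le)
              (fejerKernel_nonneg v))
      _ = logDensity S y * Real.exp (2 / L) * ∫ v, fejerKernel v := integral_const_mul _ _
  · rw [← integral_const_mul]
    exact setIntegral_mono_on (h.integrable_logDensity_mul _ _).integrableOn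
      (integrable_fejerKernel.const_mul _).integrableOn measurableSet_Icc.compl fun v _ =>
      mul_le_mul_of_nonneg_right (h.logDensity_le _) (fejerKernel_nonneg v)

end HasChebyshevBound

lemma integrable_indicator_Ioi_mul_fejerKernel (A l y : ℝ) :
    Integrable fun v : ℝ => (Ioi 0).indicator (fun _ => A) (y - v / l) * fejerKernel v :=
  integrable_mul_fejerKernel (measurable_const.indicator measurableSet_Ioi)
    (fun _ => norm_indicator_le_norm_self (fun _ => A) _) l y

lemma tendsto_fejerMean_indicator_Ioi (A l : ℝ) :
    Tendsto (fejerMean ((Ioi 0).indicator fun _ => A) l) atTop (𝓝 (A * ∫ v, fejerKernel v)) := by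
  rw [← integral_const_mul]
  refine tendsto_integral_filter_of_dominated_convergence (fun v => |A| * fejerKernel v)
    (Eventually.of_forall fun y => (integrable_indicator_Ioi_mul_fejerKernel A l y).1)
    (Eventually.of_forall fun y => ae_of_all _ fun v => ?_)
    (integrable_fejerKernel.const_mul _) (ae_of_all _ fun v => tendsto_const_nhds.congr' ?_)
  · rw [norm_mul, Real.norm_of_nonneg (fejerKernel_nonneg v)]
    exact mul_le_mul_of_nonneg_right (norm_indicator_le_norm_self (fun _ => A) _)
      (fejerKernel_nonneg v)
  · filter_upwards [eventually_gt_atTop (v / l)] with y hy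
    rw [indicator_of_mem (show y - v / l ∈ Ioi 0 from sub_pos.mpr hy)]

namespace HasChebyshevBound

variable {S : ℝ → ℝ} {A C D : ℝ} {G : ℂ → ℂ}

lemma tendsto_fejerMean_logDensity (h : HasChebyshevBound S C)
    (hG : HasLaplaceExtension ((Ioi 0).indicator fun u => logDensity S u - A) D G)
    {l : ℝ} (hl : 0 < l) :
    Tendsto (fejerMean (logDensity S) l) atTop (𝓝 (A * ∫ v, fejerKernel v)) := by
  have hsum := (hG.tendsto_fejerMean hl).add (tendsto_fejerMean_indicator_Ioi A l)
  rw [zero_add] at hsum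
  refine hsum.congr fun y => ?_
  have hsplit (u : ℝ) : logDensity S u = (Ioi 0).indicator (fun u => logDensity S u - A) u +
      (Ioi 0).indicator (fun _ => A) u := by
    by_cases hu : u ∈ Ioi (0 : ℝ)
    · simp [hu]
    · simp [hu, h.logDensity_eq_zero (not_lt.mp hu)]
  rw [fejerMean, fejerMean, ← integral_add
    (integrable_mul_fejerKernel hG.measurable hG.abs_le l y)
    (integrable_indicator_Ioi_mul_fejerKernel A l y), fejerMean]
  simp only [← add_mul, ← hsplit]

private lemma tendsto_exp_div_natCast (c : ℝ) :
    Tendsto (fun n : ℕ => Real.exp (c / n)) atTop (𝓝 1) := by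
  rw [← Real.exp_zero]
  exact (Real.continuous_exp.tendsto 0).comp (tendsto_const_div_atTop_nhds_zero_nat c)

lemma eventually_lt_logDensity (h : HasChebyshevBound S C)
    (hG : HasLaplaceExtension ((Ioi 0).indicator fun u => logDensity S u - A) D G)
    {c : ℝ} (hc : c < A) : ∀ᶠ y in atTop, c < logDensity S y := by
  have hpos := integral_fejerKernel_pos
  set κ := ∫ v, fejerKernel v
  have hlim : Tendsto (fun n : ℕ => c * Real.exp (2 / n) * κ +
      C * (κ - ∫ v in Icc (-(n : ℝ)) n, fejerKernel v)) atTop (𝓝 (c * 1 * κ + C * (κ - κ))) :=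
    (((tendsto_exp_div_natCast 2).const_mul c).mul_const κ).add
      ((tendsto_setIntegral_Icc_fejerKernel.const_sub κ).const_mul C)
  have hgap : c * 1 * κ + C * (κ - κ) < A * κ := by nlinarith
  obtain ⟨n, hn, hn0⟩ := ((hlim.eventually_lt_const hgap).and (eventually_gt_atTop 0)).exists
  have hn0 : (0 : ℝ) < n := by exact_mod_cast hn0
  have hmean := (h.tendsto_fejerMean_logDensity hG (pow_pos hn0 2)).comp
    (tendsto_atTop_add_const_right atTop (-(1 / (n : ℝ))) tendsto_id)
  filter_upwards [hmean.eventually_const_lt hn] with y hy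
  by_contra! hle
  have hup := h.fejerMean_le_mul_integral_add hn0 y
  have : logDensity S y * Real.exp (2 / n) * κ ≤ c * Real.exp (2 / n) * κ := by gcongr
  simp only [Function.comp_apply, id, ← sub_eq_add_neg] at hy
  linarith

lemma eventually_logDensity_lt (h : HasChebyshevBound S C)
    (hG : HasLaplaceExtension ((Ioi 0).indicator fun u => logDensity S u - A) D G)
    {c : ℝ} (hc : A < c) : ∀ᶠ y in atTop, logDensity S y < c := by
  have hpos := integral_fejerKernel_pos
  set κ := ∫ v, fejerKernel v
  have hlim : Tendsto (fun n : ℕ => c * Real.exp (-2 / n) *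
      ∫ v in Icc (-(n : ℝ)) n, fejerKernel v) atTop (𝓝 (c * 1 * κ)) :=
    ((tendsto_exp_div_natCast (-2)).const_mul c).mul tendsto_setIntegral_Icc_fejerKernel
  have hgap : A * κ < c * 1 * κ := by nlinarith
  obtain ⟨n, ⟨hn, hn0⟩, hκn⟩ := (((hlim.eventually_const_lt hgap).and (eventually_gt_atTop 0)).and
    (tendsto_setIntegral_Icc_fejerKernel.eventually_const_lt hpos)).exists
  have hn0 : (0 : ℝ) < n := by exact_mod_cast hn0
  have hmean := (h.tendsto_fejerMean_logDensity hG (pow_pos hn0 2)).comp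
    (tendsto_atTop_add_const_right atTop (1 / (n : ℝ)) tendsto_id)
  filter_upwards [hmean.eventually_lt_const hn] with y hy
  by_contra! hle
  have hlow := h.mul_setIntegral_le_fejerMean hn0 y
  rw [← neg_div] at hlow
  have : c * Real.exp (-2 / n) * (∫ v in Icc (-(n : ℝ)) n, fejerKernel v) ≤
      logDensity S y * Real.exp (-2 / n) * ∫ v in Icc (-(n : ℝ)) n, fejerKernel v := by gcongr
  simp only [Function.comp_apply, id] at hy
  linarith

theorem tendsto_div (h : HasChebyshevBound S C)
    (hG : HasLaplaceExtension ((Ioi 0).indicator fun u => logDensity S u - A) D G) :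
    Tendsto (fun x => S x / x) atTop (𝓝 A) := by
  have hdensity : Tendsto (logDensity S) atTop (𝓝 A) := tendsto_order.mpr
    ⟨fun _ hc => h.eventually_lt_logDensity hG hc, fun _ hc => h.eventually_logDensity_lt hG hc⟩
  refine (hdensity.comp Real.tendsto_log_atTop).congr' ?_
  filter_upwards [eventually_gt_atTop 0] with x hx
  rw [Function.comp_apply, logDensity, Real.exp_neg, Real.exp_log hx, div_eq_mul_inv]

end HasChebyshevBound

end WienerIkehara

/-! ### The prime number theorem -/

section PrimeNumberTheorem

open MeasureTheory Filter Topology Set ArithmeticFunction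

lemma image_exp_Ioi_zero : Real.exp '' Ioi 0 = Ioi 1 := by
  ext x
  refine ⟨?_, fun hx => ⟨Real.log x, Real.log_pos hx, Real.exp_log (zero_lt_one.trans hx)⟩⟩
  rintro ⟨y, hy, rfl⟩
  exact Real.one_lt_exp_iff.mpr hy

lemma LSeries_eq_mul_integral_logDensity {f : ℕ → ℝ} {C : ℝ} (hf : ∀ n, 0 ≤ f n)
    (hC : HasChebyshevBound (fun x => ∑ k ∈ Finset.Icc 1 ⌊x⌋₊, f k) C) {s : ℂ} (hs : 1 < s.re) :
    LSeries (fun n => (f n : ℂ)) s = s * ∫ u in Ioi (0 : ℝ),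
      (logDensity (fun x => ∑ k ∈ Finset.Icc 1 ⌊x⌋₊, f k) u : ℂ) *
        Complex.exp (-(s - 1) * u) := by
  have hbigO : (fun n : ℕ => ∑ k ∈ Finset.Icc 1 n, f k) =O[atTop] fun n => (n : ℝ) ^ (1 : ℝ) := by
    refine Asymptotics.IsBigO.of_bound C (Eventually.of_forall fun n => ?_)
    rw [Real.rpow_one, Real.norm_of_nonneg (Finset.sum_nonneg fun k _ => hf k),
      Real.norm_of_nonneg n.cast_nonneg]
    simpa using hC.le_mul n n.cast_nonneg
  rw [LSeries_eq_mul_integral_of_nonneg f zero_le_one hs hbigO hf, ← image_exp_Ioi_zero,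
    integral_image_eq_integral_abs_deriv_smul measurableSet_Ioi
      (fun x _ => (Real.hasDerivAt_exp x).hasDerivWithinAt) Real.exp_injective.injOn]
  congr 1
  refine setIntegral_congr_fun measurableSet_Ioi fun u _ => ?_
  have hpow : ((Real.exp u : ℝ) : ℂ) ^ (-(s + 1)) = Complex.exp (-(s + 1) * u) := by
    rw [Complex.ofReal_exp, Complex.cpow_def_of_ne_zero (Complex.exp_ne_zero _),
      ← Complex.ofReal_exp, ← Complex.ofReal_log (Real.exp_pos u).le, Real.log_exp, mul_comm]
  have hexp : Complex.exp u * Complex.exp (-(s + 1) * u) =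
      Complex.exp (-u) * Complex.exp (-(s - 1) * u) := by
    rw [← Complex.exp_add, ← Complex.exp_add]
    ring_nf
  simp only [abs_of_pos (Real.exp_pos u), hpow, logDensity, Complex.real_smul]
  push_cast
  linear_combination (∑ k ∈ Finset.Icc 1 ⌊Real.exp u⌋₊, (f k : ℂ)) * hexp

lemma chebyshevPsi_eq_sum_Icc_one :
    Chebyshev.psi = fun x => ∑ k ∈ Finset.Icc 1 ⌊x⌋₊, vonMangoldt k := rfl

lemma hasChebyshevBound_psi : HasChebyshevBound Chebyshev.psi (Real.log 4 + 4) where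
  monotone := Chebyshev.psi_mono
  eq_zero_of_le_one x hx := Chebyshev.psi_eq_zero_of_lt_two (by linarith)
  le_mul _ hx := Chebyshev.psi_le_const_mul_self hx

/-- The function `-ζ'(s) / ζ(s) - 1 / (s - 1)` at `s = 1 + z`, corrected by the constant term and
divided by `s`: it is the Laplace transform of `u ↦ ψ(exp u) * exp (-u) - 1`. -/
noncomputable def psiLaplace (z : ℂ) : ℂ :=
  (vonMangoldt.LFunctionResidueClassAux (1 : ZMod 1) (1 + z) - 1) / (1 + z)

lemma continuousOn_psiLaplace : ContinuousOn psiLaplace {z | 0 ≤ z.re} := by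
  refine ((ContinuousOn.comp (vonMangoldt.continuousOn_LFunctionResidueClassAux (1 : ZMod 1))
    (by fun_prop) fun z hz => ?_).sub continuousOn_const).div (by fun_prop) fun z hz h0 => ?_
  · simpa using hz
  · have hre : 1 + z.re = 0 := by simpa using congrArg Complex.re h0
    linarith [show 0 ≤ z.re from hz]

lemma LSeries_vonMangoldt_eq {s : ℂ} (hs : 1 < s.re) :
    LSeries (fun n => (vonMangoldt n : ℂ)) s =
      vonMangoldt.LFunctionResidueClassAux (1 : ZMod 1) s + 1 / (s - 1) := by
  have hres (n : ℕ) : vonMangoldt.residueClass (1 : ZMod 1) n = vonMangoldt n := by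
    rw [vonMangoldt.residueClass, show {n : ℕ | (n : ZMod 1) = 1} = univ from
      eq_univ_of_forall fun n => Subsingleton.elim (n : ZMod 1) 1, indicator_univ]
  have haux := vonMangoldt.eqOn_LFunctionResidueClassAux (q := 1) (a := 1) isUnit_one hs
  simp only [hres, Nat.totient_one, Nat.cast_one, inv_one] at haux
  rw [haux, sub_add_cancel]

lemma integral_logDensity_psi_sub_one {z : ℂ} (hz : 0 < z.re) :
    ∫ u : ℝ, (((Ioi 0).indicator (fun u => logDensity Chebyshev.psi u - 1) u : ℝ) : ℂ) *
      Complex.exp (-z * u) = psiLaplace z := by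
  have hexp : IntegrableOn (fun u : ℝ => Complex.exp (-z * u)) (Ioi 0) :=
    integrableOn_exp_mul_complex_Ioi (by simpa using hz) 0
  have hdensity : IntegrableOn (fun u : ℝ =>
      (logDensity Chebyshev.psi u : ℂ) * Complex.exp (-z * u)) (Ioi 0) :=
    Integrable.bdd_mul hexp (Complex.measurable_ofReal.comp
      hasChebyshevBound_psi.measurable_logDensity).aestronglyMeasurable
      (ae_of_all _ fun u => by
        simpa using hasChebyshevBound_psi.abs_logDensity_le u)
  have hindicator : (fun u : ℝ =>
      (((Ioi 0).indicator (fun u => logDensity Chebyshev.psi u - 1) u : ℝ) : ℂ) *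
        Complex.exp (-z * u)) = (Ioi 0).indicator fun u : ℝ =>
      (logDensity Chebyshev.psi u : ℂ) * Complex.exp (-z * u) - Complex.exp (-z * u) := by
    ext u
    by_cases hu : u ∈ Ioi (0 : ℝ)
    · simp [hu, sub_mul]
    · simp [hu]
  have hz0 : z ≠ 0 := by rintro rfl; simp at hz
  have hz1 : 1 + z ≠ 0 := fun h0 => by
    have hre : 1 + z.re = 0 := by simpa using congrArg Complex.re h0
    linarith
  have hs : 1 < (1 + z).re := by simpa using hz
  have hL := LSeries_eq_mul_integral_logDensity (fun _ => vonMangoldt_nonneg)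
    (chebyshevPsi_eq_sum_Icc_one ▸ hasChebyshevBound_psi) hs
  rw [← chebyshevPsi_eq_sum_Icc_one, LSeries_vonMangoldt_eq hs, add_sub_cancel_left] at hL
  rw [hindicator, integral_indicator measurableSet_Ioi, integral_sub hdensity hexp,
    integral_exp_mul_complex_Ioi (by simpa using hz), psiLaplace, eq_div_iff hz1]
  simp only [Complex.ofReal_zero, mul_zero, Complex.exp_zero]
  rw [sub_mul, mul_comm _ (1 + z), ← hL]
  field_simp
  ring

lemma hasLaplaceExtension_psi :
    HasLaplaceExtension ((Ioi 0).indicator fun u => logDensity Chebyshev.psi u - 1)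
      (Real.log 4 + 4 + 1) psiLaplace where
  measurable :=
    (hasChebyshevBound_psi.measurable_logDensity.sub_const 1).indicator measurableSet_Ioi
  abs_le u := (norm_indicator_le_norm_self (fun u => logDensity Chebyshev.psi u - 1) u).trans
    ((norm_sub_le _ _).trans (by simpa using hasChebyshevBound_psi.abs_logDensity_le u))
  eq_zero_of_nonpos u hu := indicator_of_notMem (not_lt.mpr hu) _
  laplace _ hz := integral_logDensity_psi_sub_one hz
  continuousOn := continuousOn_psiLaplace

theorem tendsto_chebyshevPsi_div : Tendsto (fun x => Chebyshev.psi x / x) atTop (𝓝 1) :=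
  hasChebyshevBound_psi.tendsto_div hasLaplaceExtension_psi

theorem tendsto_chebyshevTheta_div : Tendsto (fun x => Chebyshev.theta x / x) atTop (𝓝 1) := by
  have hsqrt : Real.sqrt =o[atTop] fun x : ℝ => x := by
    rw [Asymptotics.isLittleO_iff_tendsto (by rintro x rfl; simp)]
    simp only [Real.sqrt_div_self]
    exact tendsto_inv_atTop_zero.comp Real.tendsto_sqrt_atTop
  have hdiff := (Chebyshev.isBigO_psi_sub_theta_sqrt.trans_isLittleO hsqrt).tendsto_div_nhds_zero
  simpa [sub_div] using tendsto_chebyshevPsi_div.sub hdiff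

end PrimeNumberTheorem

/-! ### Irrationality measures from sequences of linear forms -/

section LinearForms

open Filter Set

lemma finite_setOf_abs_sub_div_lt {β κ : ℝ} (hκ : 0 ≤ κ)
    (h : ∀ᶠ q : ℕ in atTop, ∀ p : ℤ, (q : ℝ) ^ (-κ) ≤ |β - p / q|) :
    {pq : ℤ × ℕ+ | |β - (pq.1 : ℝ) / ((pq.2 : ℕ) : ℝ)| < ((pq.2 : ℕ) : ℝ) ^ (-κ)}.Finite := by
  obtain ⟨Q, hQ⟩ := eventually_atTop.mp h
  set P : ℤ := ⌈(|β| + 1) * Q⌉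
  have hinj : Function.Injective fun x : ℤ × ℕ+ => (x.1, (x.2 : ℕ)) := fun x y hxy =>
    Prod.ext (Prod.ext_iff.mp hxy).1 (PNat.coe_injective (Prod.ext_iff.mp hxy).2)
  refine (((finite_Icc (-P) P).prod (finite_Icc 0 Q)).preimage hinj.injOn).subset ?_
  rintro ⟨p, q⟩ (hpq : |β - p / (q : ℕ)| < ((q : ℕ) : ℝ) ^ (-κ))
  have hqQ : (q : ℕ) ≤ Q := by
    by_contra! hcon
    exact absurd hpq (not_lt.mpr (hQ q hcon.le p))
  have hq : (1 : ℝ) ≤ (q : ℕ) := by exact_mod_cast q.pos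
  have hpow : ((q : ℕ) : ℝ) ^ (-κ) ≤ 1 :=
    Real.rpow_le_one_of_one_le_of_nonpos hq (neg_nonpos.mpr hκ)
  have hquot : |(p : ℝ) / (q : ℕ)| ≤ |β| + 1 := by
    have htri := abs_sub_abs_le_abs_sub ((p : ℝ) / (q : ℕ)) β
    rw [abs_sub_comm] at htri
    linarith
  rw [abs_div, abs_of_pos (by linarith : (0 : ℝ) < (q : ℕ)), div_le_iff₀ (by linarith)] at hquot
  have hp : |(p : ℝ)| ≤ P := calc
    |(p : ℝ)| ≤ (|β| + 1) * (q : ℕ) := hquot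
    _ ≤ (|β| + 1) * Q := by gcongr
    _ ≤ P := Int.le_ceil _
  exact ⟨abs_le.mp (by exact_mod_cast hp), Nat.zero_le _, hqQ⟩

lemma abs_mul_sub_div_lt_of_mul_ne {β δ : ℝ} {a b p : ℤ} {q : ℕ} (hq : 0 < q)
    (hne : b * p ≠ a * q) (hform : |b * β - a| ≤ 1 / (2 * q)) (hβ : |β - p / q| < δ)
    (hb : b ≠ 0) : 1 / (2 * q) < |(b : ℝ)| * δ := by
  have hq' : (0 : ℝ) < q := by exact_mod_cast hq
  have hint : (1 : ℝ) ≤ |(b : ℝ) * p - a * q| := by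
    exact_mod_cast Int.one_le_abs (sub_ne_zero.mpr hne)
  have hsplit : (b : ℝ) * p - a * q = q * (-(b * (β - p / q)) + (b * β - a)) := by
    field_simp
    ring
  have htri : |(b : ℝ) * p - a * q| ≤ q * (|(b : ℝ)| * |β - p / q| + |b * β - a|) := by
    rw [hsplit, abs_mul, abs_of_pos hq', ← abs_mul (b : ℝ), ← abs_neg ((b : ℝ) * _)]
    exact mul_le_mul_of_nonneg_left (abs_add_le _ _) hq'.le
  have hlt : |(b : ℝ)| * |β - p / q| < |(b : ℝ)| * δ :=
    mul_lt_mul_of_pos_left hβ (abs_pos.mpr (Int.cast_ne_zero.mpr hb))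
  have hsum : 1 / (q : ℝ) < |(b : ℝ)| * δ + 1 / (2 * q) := by
    rw [div_lt_iff₀' hq']
    exact (hint.trans htri).trans_lt (mul_lt_mul_of_pos_left (add_lt_add_of_lt_of_le hlt hform) hq')
  have hhalf : 1 / (q : ℝ) = 1 / (2 * q) + 1 / (2 * q) := by
    field_simp
    norm_num
  linarith

/-- Either `b * p ≠ a * q`, and then `hform` and `hb` contradict that a nonzero integer is at least
`1` in absolute value, or `p / q = a / b`, and `hratio` is the claim. -/
lemma rpow_neg_le_abs_sub_div_of_linearForm {β κ : ℝ} {a b p : ℤ} {q : ℕ} (hq : 0 < q)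
    (hb₀ : b ≠ 0) (hform : |b * β - a| ≤ 1 / (2 * q))
    (hb : |(b : ℝ)| * (q : ℝ) ^ (-κ) ≤ 1 / (2 * q))
    (hratio : (q : ℝ) ^ (-κ) * |(b : ℝ)| ≤ |b * β - a|) : (q : ℝ) ^ (-κ) ≤ |β - p / q| := by
  by_contra! hcon
  by_cases heq : b * p = a * q
  · have hq' : (q : ℝ) ≠ 0 := by exact_mod_cast hq.ne'
    have heq' : (b : ℝ) * p = a * q := by exact_mod_cast heq
    have hval : b * β - a = b * (β - p / q) := by
      rw [mul_sub, ← mul_div_assoc, heq', mul_div_cancel_right₀ _ hq']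
    rw [hval, abs_mul, mul_comm _ |(b : ℝ)|] at hratio
    exact (le_of_mul_le_mul_left hratio (by simpa using hb₀)).not_gt hcon
  · exact (abs_mul_sub_div_lt_of_mul_ne hq heq hform hcon hb₀).not_ge hb

/-- The approximations with denominator `q` are compared with the form of index
`m = ⌈log (2 * q) / τ⌉`, the first one that is at most `1 / (2 * q)`. -/
theorem finite_setOf_abs_sub_div_lt_of_linearForms {β κ τ σ ρ : ℝ} {a b : ℕ → ℤ} (hτ : 0 < τ)
    (hσ : 0 ≤ σ) (hρ : 0 ≤ ρ) (hστ : 1 + σ / τ < κ) (hρτ : ρ / τ < κ) (hb₀ : ∀ᶠ m in atTop, b m ≠ 0)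
    (hform : ∀ᶠ m : ℕ in atTop, |b m * β - a m| ≤ Real.exp (-τ * m))
    (hb : ∀ᶠ m : ℕ in atTop, |(b m : ℝ)| ≤ Real.exp (σ * m))
    (hratio : ∀ᶠ m : ℕ in atTop, Real.exp (-ρ * m) * |(b m : ℝ)| ≤ |b m * β - a m|) :
    {pq : ℤ × ℕ+ | |β - (pq.1 : ℝ) / ((pq.2 : ℕ) : ℝ)| < ((pq.2 : ℕ) : ℝ) ^ (-κ)}.Finite := by
  have hστ₀ : 0 ≤ σ / τ := by positivity
  refine finite_setOf_abs_sub_div_lt (by linarith) ?_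
  have hlog : Tendsto (fun q : ℕ => Real.log q) atTop atTop :=
    Real.tendsto_log_atTop.comp tendsto_natCast_atTop_atTop
  have hindex : Tendsto (fun q : ℕ => ⌈(Real.log 2 + Real.log q) / τ⌉₊) atTop atTop :=
    tendsto_nat_ceil_atTop.comp ((tendsto_atTop_add_const_left _ _ hlog).atTop_div_const hτ)
  filter_upwards [eventually_gt_atTop 0, hindex.eventually (hb₀.and (hform.and (hb.and hratio))),
    hlog.eventually_ge_atTop 0,
    (hlog.const_mul_atTop (sub_pos.mpr hστ)).eventually_ge_atTop
      (Real.log 2 + σ * (Real.log 2 / τ + 1)),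
    (hlog.const_mul_atTop (sub_pos.mpr hρτ)).eventually_ge_atTop (ρ * (Real.log 2 / τ + 1))]
    with q hq ⟨hb₀, hform, hb, hratio⟩ hlogq hqσ hqρ p
  set m := ⌈(Real.log 2 + Real.log q) / τ⌉₊
  have hq' : (0 : ℝ) < q := by exact_mod_cast hq
  have hle_m : Real.log 2 + Real.log q ≤ m * τ := (div_le_iff₀ hτ).mp (Nat.le_ceil _)
  have hm_le : (m : ℝ) ≤ (Real.log 2 / τ + 1) + Real.log q / τ := by
    have hceil := Nat.ceil_lt_add_one
      (div_nonneg (add_nonneg (Real.log_pos one_lt_two).le hlogq) hτ.le)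
    linarith [add_div (Real.log 2) (Real.log q) τ]
  have hpow : (q : ℝ) ^ (-κ) = Real.exp (-κ * Real.log q) := by
    rw [Real.rpow_def_of_pos hq', mul_comm]
  have htwo : 1 / (2 * q : ℝ) = Real.exp (-(Real.log 2 + Real.log q)) := by
    rw [Real.exp_neg, Real.exp_add, Real.exp_log two_pos, Real.exp_log hq', one_div]
  refine rpow_neg_le_abs_sub_div_of_linearForm hq hb₀ (hform.trans ?_)
    ((mul_le_mul_of_nonneg_right hb (by positivity)).trans ?_)
    ((mul_le_mul_of_nonneg_right ?_ (abs_nonneg _)).trans hratio)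
  · rw [htwo, Real.exp_le_exp]
    linarith
  · rw [hpow, htwo, ← Real.exp_add, Real.exp_le_exp]
    have hσm := mul_le_mul_of_nonneg_left hm_le hσ
    linarith [mul_div_right_comm σ (Real.log q) τ, mul_div_assoc σ (Real.log q) τ]
  · rw [hpow, Real.exp_le_exp]
    have hρm := mul_le_mul_of_nonneg_left hm_le hρ
    linarith [mul_div_right_comm ρ (Real.log q) τ, mul_div_assoc ρ (Real.log q) τ]

end LinearForms

/-! ### Abel sums of polynomials and Lipschitz's formula -/

section AbelSum

open Filter Topology Finset Polynomial

/-- The coefficient of `n.choose l` in the Newton expansion of the polynomial function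
`n ↦ Q(n)`, that is the `l`-th finite difference of `Q` at `0`. -/
noncomputable def newtonCoeff (Q : ℂ[X]) (l : ℕ) : ℂ := (fwdDiff (1 : ℂ))^[l] (fun x => Q.eval x) 0

/-- The Abel sum of the series `∑ Q(n) wⁿ`: the rational function of `w`, with its only pole at
`w = 1`, which this series represents in the unit disc. -/
noncomputable def abelSum (Q : ℂ[X]) (w : ℂ) : ℂ :=
  ∑ l ∈ range (Q.natDegree + 1), newtonCoeff Q l * (w ^ l / (1 - w) ^ (l + 1))

lemma newtonCoeff_eq_zero_of_natDegree_lt {Q : ℂ[X]} {l : ℕ} (hl : Q.natDegree < l) :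
    newtonCoeff Q l = 0 := by
  rw [newtonCoeff, Polynomial.fwdDiff_iter_eq_zero_of_degree_lt hl, Pi.zero_apply]

lemma newtonCoeff_eq_sum_eval (Q : ℂ[X]) (l : ℕ) :
    newtonCoeff Q l = ∑ i ∈ range (l + 1), ((-1) ^ (l - i) * l.choose i : ℤ) * Q.eval (i : ℂ) := by
  rw [newtonCoeff, fwdDiff_iter_eq_sum_shift]
  simp

lemma newtonCoeff_eq_sum_coeff (Q : ℂ[X]) (l : ℕ) {N : ℕ} (hN : Q.natDegree < N) :
    newtonCoeff Q l = ∑ k ∈ range N, Q.coeff k * newtonCoeff (X ^ k) l := by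
  simp only [newtonCoeff_eq_sum_eval, eval_pow, eval_X, eval_eq_sum_range' hN, mul_sum]
  rw [sum_comm]
  exact sum_congr rfl fun k _ => sum_congr rfl fun i _ => by ring

lemma eval_natCast_eq_sum_newtonCoeff (Q : ℂ[X]) (n : ℕ) :
    Q.eval (n : ℂ) = ∑ l ∈ range (Q.natDegree + 1), newtonCoeff Q l * n.choose l := by
  have hnewton : Q.eval (n : ℂ) = ∑ l ∈ range (n + 1), newtonCoeff Q l * n.choose l := by
    simpa [newtonCoeff, mul_comm] using
      shift_eq_sum_fwdDiff_iter (1 : ℂ) (fun x => Q.eval x) n 0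
  rcases le_total n Q.natDegree with h | h
  · refine hnewton.trans (sum_subset (range_subset_range.mpr (by lia)) fun l _ hl => ?_)
    rw [Nat.choose_eq_zero_of_lt (by simpa using hl), Nat.cast_zero, mul_zero]
  · refine hnewton.trans (sum_subset (range_subset_range.mpr (by lia)) fun l _ hl => ?_).symm
    rw [newtonCoeff_eq_zero_of_natDegree_lt (by simpa using hl), zero_mul]

lemma hasSum_choose_mul_pow (l : ℕ) {w : ℂ} (hw : ‖w‖ < 1) :
    HasSum (fun n : ℕ => (n.choose l : ℂ) * w ^ n) (w ^ l / (1 - w) ^ (l + 1)) := by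
  rw [← hasSum_nat_add_iff' l, sum_eq_zero fun i hi => by
    rw [Nat.choose_eq_zero_of_lt (mem_range.mp hi), Nat.cast_zero, zero_mul], sub_zero,
    div_eq_mul_one_div]
  refine ((hasSum_choose_mul_geometric_of_norm_lt_one l hw).mul_left (w ^ l)).congr_fun fun n => ?_
  ring

lemma hasSum_eval_mul_pow (Q : ℂ[X]) {w : ℂ} (hw : ‖w‖ < 1) :
    HasSum (fun n : ℕ => Q.eval (n : ℂ) * w ^ n) (abelSum Q w) := by
  simp only [eval_natCast_eq_sum_newtonCoeff, sum_mul, mul_assoc]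
  exact hasSum_sum fun l _ => (hasSum_choose_mul_pow l hw).mul_left _

lemma abelSum_eq_sum_range {Q : ℂ[X]} {N : ℕ} (hN : Q.natDegree < N) (w : ℂ) :
    abelSum Q w = ∑ l ∈ range N, newtonCoeff Q l * (w ^ l / (1 - w) ^ (l + 1)) :=
  sum_subset (range_subset_range.mpr hN) fun l _ hl => by
    rw [newtonCoeff_eq_zero_of_natDegree_lt (by simpa using hl), zero_mul]

lemma abelSum_eq_sum_coeff {Q : ℂ[X]} {N : ℕ} (hN : Q.natDegree < N) (w : ℂ) :
    abelSum Q w = ∑ k ∈ range N, Q.coeff k * abelSum (X ^ k) w := by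
  have hmono (k : ℕ) (hk : k ∈ range N) : Q.coeff k * abelSum (X ^ k) w =
      Q.coeff k * ∑ l ∈ range N, newtonCoeff (X ^ k) l * (w ^ l / (1 - w) ^ (l + 1)) := by
    rw [abelSum_eq_sum_range (by simpa using hk)]
  rw [abelSum_eq_sum_range hN, sum_congr rfl hmono]
  simp only [newtonCoeff_eq_sum_coeff Q _ hN, mul_sum, sum_mul]
  rw [sum_comm]
  exact sum_congr rfl fun k _ => sum_congr rfl fun l _ => by ring

lemma continuousAt_abelSum (Q : ℂ[X]) {w : ℂ} (hw : w ≠ 1) : ContinuousAt (abelSum Q) w := by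
  unfold abelSum
  have hpow (l : ℕ) : (1 - w) ^ (l + 1) ≠ 0 := pow_ne_zero _ (sub_ne_zero.mpr hw.symm)
  refine tendsto_finsetSum _ fun l _ => ?_
  exact ContinuousAt.mul (by fun_prop) (ContinuousAt.div (by fun_prop) (by fun_prop) (hpow l))

lemma factorial_mul_tsum_eq_abelSum {k : ℕ} (hk : 1 ≤ k) {z : ℂ} (hz : 0 < z.im) :
    k.factorial * ∑' n : ℤ, 1 / (z + 2 * Real.pi * n) ^ (k + 1) =
      (-Complex.I) ^ (k + 1) * abelSum (X ^ k) (Complex.exp (z * Complex.I)) := by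
  have hpi : (2 * Real.pi : ℂ) ≠ 0 :=
    mul_ne_zero two_ne_zero (Complex.ofReal_ne_zero.mpr Real.pi_ne_zero)
  have him : 0 < (z / (2 * Real.pi)).im := by
    rw [show (2 * Real.pi : ℂ) = ((2 * Real.pi : ℝ) : ℂ) by push_cast; ring, Complex.div_ofReal_im]
    exact div_pos hz Real.two_pi_pos
  have hterm (n : ℤ) : 1 / (z + 2 * Real.pi * n) ^ (k + 1) =
      1 / (2 * Real.pi) ^ (k + 1) * (1 / (z / (2 * Real.pi) + n) ^ (k + 1)) := by
    rw [one_div_mul_one_div, ← mul_pow, mul_add, mul_div_cancel₀ _ hpi]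
  have hexp : Complex.exp (2 * Real.pi * Complex.I * (z / (2 * Real.pi))) =
      Complex.exp (z * Complex.I) := by
    congr 1
    field_simp
  have hnorm : ‖Complex.exp (z * Complex.I)‖ < 1 := by
    rw [Complex.norm_exp, Real.exp_lt_one_iff]
    simpa using hz
  have hsum : ∑' n : ℕ, (n : ℂ) ^ k * Complex.exp (z * Complex.I) ^ n =
      abelSum (X ^ k) (Complex.exp (z * Complex.I)) := by
    simpa using (hasSum_eval_mul_pow (X ^ k) hnorm).tsum_eq
  have hlipschitz := EisensteinSeries.qExpansion_identity hk ⟨z / (2 * Real.pi), him⟩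
  have hpow_mul : (-2 * Real.pi * Complex.I) ^ (k + 1) =
      (2 * Real.pi) ^ (k + 1) * (-Complex.I) ^ (k + 1) := by
    rw [← mul_pow]
    ring_nf
  simp only [hexp, hsum, hpow_mul] at hlipschitz
  rw [tsum_congr hterm, tsum_mul_left, hlipschitz]
  have hfact : (k.factorial : ℂ) ≠ 0 := by exact_mod_cast k.factorial_ne_zero
  have hpow := pow_ne_zero (k + 1) hpi
  generalize (2 * (Real.pi : ℂ)) ^ (k + 1) = c at hpow ⊢
  field_simp

/-- The lattice sum `∑ 1 / (θ + 2πn) ^ (k + 1)` over `n ∈ ℤ`, up to the factor `k!` a polygamma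
value symmetrised under reflection. -/
noncomputable def latticeSum (θ : ℝ) (k : ℕ) : ℝ := ∑' n : ℤ, 1 / (θ + 2 * Real.pi * n) ^ (k + 1)

lemma summable_one_div_abs_add_two_pi_mul_pow (θ : ℝ) {k : ℕ} (hk : 1 ≤ k) :
    Summable fun n : ℤ => 1 / |θ + 2 * Real.pi * n| ^ (k + 1) := by
  have hpi := Real.two_pi_pos
  have hsum := (Real.summable_one_div_int_add_rpow (θ / (2 * Real.pi)) (k + 1 : ℕ)).mpr (by
    exact_mod_cast Nat.succ_lt_succ hk)
  refine (hsum.mul_left (1 / (2 * Real.pi) ^ (k + 1))).congr fun n => ?_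
  rw [Real.rpow_natCast, one_div_mul_one_div, ← mul_pow, ← abs_of_pos hpi, ← abs_mul,
    abs_of_pos hpi, mul_add, mul_div_cancel₀ _ hpi.ne', add_comm]

lemma add_two_pi_mul_ne_zero {θ : ℝ} (hθ : 0 < θ) (hθ' : θ < 2 * Real.pi) (n : ℤ) :
    θ + 2 * Real.pi * n ≠ 0 := by
  intro h
  have hlt : ((-1 : ℤ) : ℝ) < n := by push_cast; nlinarith [Real.two_pi_pos]
  have hlt' : (n : ℝ) < (0 : ℤ) := by push_cast; nlinarith [Real.two_pi_pos]
  rw [Int.cast_lt] at hlt hlt'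
  lia

theorem factorial_mul_latticeSum_eq_abelSum {θ : ℝ} (hθ : 0 < θ) (hθ' : θ < 2 * Real.pi) {k : ℕ}
    (hk : 1 ≤ k) : (k.factorial * latticeSum θ k : ℂ) =
      (-Complex.I) ^ (k + 1) * abelSum (X ^ k) (Complex.exp (θ * Complex.I)) := by
  have hz : Tendsto (fun t : ℝ => (θ + t * Complex.I : ℂ)) (𝓝[>] 0) (𝓝 θ) := by
    have hcont : Continuous fun t : ℝ => (θ + t * Complex.I : ℂ) := by fun_prop
    simpa using (hcont.tendsto 0).mono_left nhdsWithin_le_nhds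
  have hlhs : Tendsto (fun t : ℝ => ∑' n : ℤ, 1 / (θ + t * Complex.I + 2 * Real.pi * n) ^ (k + 1))
      (𝓝[>] 0) (𝓝 (latticeSum θ k)) := by
    rw [latticeSum, Complex.ofReal_tsum]
    refine tendsto_tsum_of_dominated_convergence (summable_one_div_abs_add_two_pi_mul_pow θ hk)
      (fun n => ?_) (Eventually.of_forall fun t n => ?_)
    · have hne := Complex.ofReal_ne_zero.mpr (add_two_pi_mul_ne_zero hθ hθ' n)
      push_cast at hne ⊢
      exact tendsto_const_nhds.div ((hz.add_const _).pow _) (pow_ne_zero _ hne)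
    · rw [norm_div, norm_one, norm_pow]
      have hre := Complex.abs_re_le_norm (θ + t * Complex.I + 2 * Real.pi * n)
      have hpos : 0 < |θ + 2 * Real.pi * n| := abs_pos.mpr (add_two_pi_mul_ne_zero hθ hθ' n)
      gcongr
      simpa using hre
  have hne : Complex.exp (θ * Complex.I) ≠ 1 := by
    rw [Ne, Complex.exp_eq_one_iff]
    rintro ⟨n, hn⟩
    apply add_two_pi_mul_ne_zero hθ hθ' (-n)
    have hθn : (θ : ℂ) = 2 * Real.pi * n :=
      mul_right_cancel₀ Complex.I_ne_zero (by rw [hn]; ring)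
    exact_mod_cast (by rw [hθn]; push_cast; ring : (θ : ℂ) + 2 * Real.pi * (-n : ℤ) = 0)
  have hrhs := ((continuousAt_abelSum (X ^ k) hne).tendsto.comp
    ((Complex.continuous_exp.tendsto _).comp (hz.mul_const Complex.I))).const_mul
      ((-Complex.I) ^ (k + 1))
  refine tendsto_nhds_unique (hlhs.const_mul _) (hrhs.congr' ?_)
  filter_upwards [self_mem_nhdsWithin] with t ht
  exact (factorial_mul_tsum_eq_abelSum hk (by simpa using ht)).symm

end AbelSum

/-! ### Integral kernels for the lattice sums -/

section Kernels

open Filter Topology Set MeasureTheory Real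

lemma integral_pow_mul_eq_of_hasSum {ι : Type*} [Countable ι] {a p : ι → ℝ} {K : ℝ → ℝ} {j : ℕ}
    {S : ℝ} (hp : ∀ i, 0 < p i) (hK : ∀ y, 0 < y → HasSum (fun i => a i * exp (-p i * y)) (K y))
    (hS : HasSum (fun i => a i / p i ^ (j + 1)) S) :
    ∫ y in Ioi 0, y ^ j * K y = j.factorial * S := by
  have hs : ((j : ℂ) + 1).re = (j + 1 : ℕ) := by simp
  have hmellin := hasSum_mellin (a := fun i => (a i : ℂ)) (F := fun y => (K y : ℂ))
    (s := (j : ℂ) + 1) (fun i => Or.inr (hp i)) (by rw [hs]; positivity)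
    (fun y hy => by exact_mod_cast Complex.hasSum_ofReal.mpr (hK y hy))
    (hS.summable.norm.congr fun i => by
      rw [hs, rpow_natCast, norm_div, norm_pow, norm_of_nonneg (hp i).le, Complex.norm_real])
  have hmellin_eq : mellin (fun y => (K y : ℂ)) (j + 1) = (∫ y in Ioi 0, y ^ j * K y : ℝ) := by
    rw [mellin, ← integral_complex_ofReal]
    refine setIntegral_congr_fun measurableSet_Ioi fun y _ => ?_
    simp
  have hterm (i : ι) : Complex.Gamma (j + 1) * a i / (p i : ℂ) ^ ((j : ℂ) + 1) =
      (j.factorial * (a i / p i ^ (j + 1)) : ℝ) := by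
    rw [Complex.Gamma_nat_eq_factorial, ← Nat.cast_add_one, Complex.cpow_natCast, mul_div_assoc]
    norm_cast
  rw [hmellin_eq] at hmellin
  simp only [hterm, Complex.hasSum_ofReal] at hmellin
  exact hmellin.unique (hS.mul_left _)

/-- The kernel `K` has at most a double pole at `0` and decays like `exp (-μ * y)`. -/
structure IsExpDecayKernel (K : ℝ → ℝ) (μ : ℝ) : Prop where
  continuousOn : ContinuousOn K (Ioi 0)
  nonneg : ∀ y, 0 < y → 0 ≤ K y
  le_exp : ∃ C, 0 < C ∧ ∀ y, 0 < y → K y ≤ C * (1 + 1 / y) ^ 2 * exp (-μ * y)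
  exp_le : ∃ c, 0 < c ∧ ∀ y, 1 ≤ y → c * exp (-μ * y) ≤ K y

lemma integrableOn_pow_mul_exp_neg (j : ℕ) {μ : ℝ} (hμ : 0 < μ) :
    IntegrableOn (fun y : ℝ => y ^ j * exp (-μ * y)) (Ioi 0) := by
  have h := integrableOn_rpow_mul_exp_neg_mul_rpow (p := 1) (s := j)
    (by linarith [(Nat.cast_nonneg j : (0 : ℝ) ≤ j)]) one_pos hμ
  simpa [rpow_natCast] using h

lemma IsExpDecayKernel.integrableOn_pow_mul {K : ℝ → ℝ} {μ : ℝ} (h : IsExpDecayKernel K μ)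
    (hμ : 0 < μ) {j : ℕ} (hj : 2 ≤ j) : IntegrableOn (fun y => y ^ j * K y) (Ioi 0) := by
  obtain ⟨C, -, hC⟩ := h.le_exp
  obtain ⟨i, rfl⟩ := Nat.exists_eq_add_of_le' hj
  have hdom : IntegrableOn (fun y : ℝ => C * (y ^ (i + 2) * exp (-μ * y) +
      2 * (y ^ (i + 1) * exp (-μ * y)) + y ^ i * exp (-μ * y))) (Ioi 0) :=
    (((integrableOn_pow_mul_exp_neg _ hμ).add ((integrableOn_pow_mul_exp_neg _ hμ).const_mul 2)).add
      (integrableOn_pow_mul_exp_neg _ hμ)).const_mul C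
  refine Integrable.mono' hdom (ContinuousOn.aestronglyMeasurable
    ((continuousOn_pow _).mul h.continuousOn) measurableSet_Ioi) ?_
  filter_upwards [ae_restrict_mem measurableSet_Ioi] with y (hy : 0 < y)
  rw [norm_of_nonneg (mul_nonneg (by positivity) (h.nonneg y hy))]
  calc y ^ (i + 2) * K y ≤ y ^ (i + 2) * (C * (1 + 1 / y) ^ 2 * exp (-μ * y)) := by
        gcongr
        exact hC y hy
    _ = _ := by
        field_simp
        ring

/-- The kernel whose odd moments are the lattice sums; it produces the integer coefficients of the
linear forms. -/
noncomputable def coeffKernel (θ y : ℝ) : ℝ :=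
  (exp (-θ * y) + exp (-(2 * π - θ) * y)) / (1 - exp (-(2 * π) * y))

/-- The kernel whose integrals against odd polynomials are the values of the linear forms. -/
noncomputable def formKernel (θ y : ℝ) : ℝ :=
  2 * π ^ 2 * (exp (θ * y) - exp (-θ * y)) *
    (exp (-(2 * π) * y) / (1 - exp (-(2 * π) * y)) ^ 2)

lemma exp_neg_two_pi_mul_lt_one {y : ℝ} (hy : 0 < y) : exp (-(2 * π) * y) < 1 := by
  rw [exp_lt_one_iff, neg_mul, neg_lt_zero]
  exact mul_pos two_pi_pos hy

lemma one_div_one_sub_exp_neg_two_pi_mul_le {y : ℝ} (hy : 0 < y) :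
    1 / (1 - exp (-(2 * π) * y)) ≤ 1 + 1 / y := by
  have hy_le : y ≤ 2 * π * y := le_mul_of_one_le_left hy.le (by linarith [pi_gt_three])
  have hexp : exp (-(2 * π) * y) ≤ 1 / (1 + y) := by
    rw [neg_mul, exp_neg, ← one_div]
    gcongr
    linarith [add_one_le_exp (2 * π * y)]
  rw [div_le_iff₀ (sub_pos.mpr (exp_neg_two_pi_mul_lt_one hy))]
  calc (1 : ℝ) = (1 + 1 / y) * (1 - 1 / (1 + y)) := by
        field_simp
        ring
    _ ≤ _ := by gcongr

lemma continuousOn_coeffKernel (θ : ℝ) : ContinuousOn (coeffKernel θ) (Ioi 0) := by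
  refine ContinuousOn.div (by fun_prop) (by fun_prop) fun y hy => ?_
  exact (sub_pos.mpr (exp_neg_two_pi_mul_lt_one hy)).ne'

lemma continuousOn_formKernel (θ : ℝ) : ContinuousOn (formKernel θ) (Ioi 0) := by
  refine ContinuousOn.mul (by fun_prop) <|
    ContinuousOn.div (by fun_prop) (by fun_prop) fun y hy => ?_
  exact pow_ne_zero 2 (sub_pos.mpr (exp_neg_two_pi_mul_lt_one hy)).ne'

lemma isExpDecayKernel_coeffKernel {θ : ℝ} (hθ : θ ≤ π) :
    IsExpDecayKernel (coeffKernel θ) θ where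
  continuousOn := continuousOn_coeffKernel θ
  nonneg y hy := by
    have := sub_pos.mpr (exp_neg_two_pi_mul_lt_one hy)
    unfold coeffKernel
    positivity
  le_exp := by
    refine ⟨2, two_pos, fun y hy => ?_⟩
    have hexp : exp (-(2 * π - θ) * y) ≤ exp (-θ * y) := by
      gcongr
      linarith
    have hone : 1 ≤ 1 + 1 / y := by linarith [one_div_pos.mpr hy]
    have hpos := sub_pos.mpr (exp_neg_two_pi_mul_lt_one hy)
    calc coeffKernel θ y
        = (exp (-θ * y) + exp (-(2 * π - θ) * y)) * (1 / (1 - exp (-(2 * π) * y))) := by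
          rw [coeffKernel, mul_one_div]
      _ ≤ (exp (-θ * y) + exp (-θ * y)) * (1 + 1 / y) := by
          gcongr
          exact one_div_one_sub_exp_neg_two_pi_mul_le hy
      _ ≤ (exp (-θ * y) + exp (-θ * y)) * (1 + 1 / y) ^ 2 := by
          gcongr
          exact le_self_pow₀ hone two_ne_zero
      _ = 2 * (1 + 1 / y) ^ 2 * exp (-θ * y) := by ring
  exp_le := by
    refine ⟨1, one_pos, fun y hy => ?_⟩
    have hpos := sub_pos.mpr (exp_neg_two_pi_mul_lt_one (one_pos.trans_le hy))
    rw [coeffKernel, le_div_iff₀ hpos, one_mul]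
    calc exp (-θ * y) * (1 - exp (-(2 * π) * y)) ≤ exp (-θ * y) :=
          mul_le_of_le_one_right (exp_pos _).le (by linarith [exp_pos (-(2 * π) * y)])
      _ ≤ _ := le_add_of_nonneg_right (exp_pos _).le

lemma exp_neg_mul_le_exp_mul {θ y : ℝ} (hθ : 0 ≤ θ) (hy : 0 ≤ y) : exp (-θ * y) ≤ exp (θ * y) := by
  gcongr
  linarith

lemma isExpDecayKernel_formKernel {θ : ℝ} (hθ : 0 < θ) :
    IsExpDecayKernel (formKernel θ) (2 * π - θ) where
  continuousOn := continuousOn_formKernel θ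
  nonneg y hy := by
    have := sub_nonneg.mpr (exp_neg_mul_le_exp_mul hθ.le hy.le)
    unfold formKernel
    positivity
  le_exp := by
    refine ⟨2 * π ^ 2, by positivity, fun y hy => ?_⟩
    have hpos := sub_pos.mpr (exp_neg_two_pi_mul_lt_one hy)
    calc formKernel θ y = 2 * π ^ 2 * (exp (θ * y) - exp (-θ * y)) *
          (exp (-(2 * π) * y) * (1 / (1 - exp (-(2 * π) * y))) ^ 2) := by
          rw [formKernel, one_div, inv_pow, ← div_eq_mul_inv]
      _ ≤ 2 * π ^ 2 * exp (θ * y) * (exp (-(2 * π) * y) * (1 + 1 / y) ^ 2) := by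
          gcongr
          · exact sub_le_self _ (exp_pos _).le
          · exact one_div_one_sub_exp_neg_two_pi_mul_le hy
      _ = 2 * π ^ 2 * (1 + 1 / y) ^ 2 * exp (-(2 * π - θ) * y) := by
          rw [show -(2 * π - θ) * y = θ * y + -(2 * π) * y by ring, exp_add]
          ring
  exp_le := by
    have hc : 0 < 1 - exp (-(2 * θ)) := sub_pos.mpr (exp_lt_one_iff.mpr (by linarith))
    refine ⟨2 * π ^ 2 * (1 - exp (-(2 * θ))), by positivity, fun y hy => ?_⟩
    have hy' := one_pos.trans_le hy
    have hpos := sub_pos.mpr (exp_neg_two_pi_mul_lt_one hy')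
    have hsub := sub_nonneg.mpr (exp_neg_mul_le_exp_mul hθ.le hy'.le)
    calc 2 * π ^ 2 * (1 - exp (-(2 * θ))) * exp (-(2 * π - θ) * y)
        ≤ 2 * π ^ 2 * (1 - exp (-(2 * θ) * y)) * exp (-(2 * π - θ) * y) := by
          gcongr
          nlinarith
      _ = 2 * π ^ 2 * (exp (θ * y) - exp (-θ * y)) * exp (-(2 * π) * y) := by
          rw [show -(2 * π - θ) * y = θ * y + -(2 * π) * y by ring, exp_add,
            show -θ * y = θ * y + -(2 * θ) * y by ring, exp_add]
          ring
      _ ≤ formKernel θ y := by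
          rw [formKernel]
          gcongr
          exact le_div_self (exp_pos _).le (by positivity)
            (pow_le_one₀ hpos.le (by linarith [exp_pos (-(2 * π) * y)]))

lemma abs_add_two_pi_mul_natCast {θ : ℝ} (hθ : 0 < θ) (n : ℕ) :
    |θ + 2 * π * n| = θ + 2 * π * n :=
  abs_of_pos (by positivity)

lemma abs_add_two_pi_mul_neg_natCast_add_one {θ : ℝ} (hθ' : θ < 2 * π) (n : ℕ) :
    |θ + 2 * π * -(n + 1)| = 2 * π - θ + 2 * π * n := by
  rw [← abs_neg, show -(θ + 2 * π * -((n : ℝ) + 1)) = 2 * π - θ + 2 * π * n by ring]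
  have := sub_pos.mpr hθ'
  exact abs_of_pos (by positivity)

lemma exp_neg_add_two_pi_mul (ω y : ℝ) (n : ℕ) :
    exp (-(ω + 2 * π * n) * y) = exp (-ω * y) * exp (-(2 * π) * y) ^ n := by
  rw [← exp_nat_mul, ← exp_add]
  ring_nf

lemma hasSum_coeffKernel {θ y : ℝ} (hθ : 0 < θ) (hθ' : θ < 2 * π) (hy : 0 < y) :
    HasSum (fun n : ℤ => 1 * exp (-|θ + 2 * π * n| * y)) (coeffKernel θ y) := by
  have hgeom := hasSum_geometric_of_lt_one (exp_pos _).le (exp_neg_two_pi_mul_lt_one hy)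
  rw [coeffKernel, add_div, div_eq_mul_inv, div_eq_mul_inv]
  refine HasSum.of_nat_of_neg_add_one ((hgeom.mul_left _).congr_fun fun n => ?_)
    ((hgeom.mul_left _).congr_fun fun n => ?_)
  · rw [Int.cast_natCast, abs_add_two_pi_mul_natCast hθ, exp_neg_add_two_pi_mul, one_mul]
  · push_cast
    rw [abs_add_two_pi_mul_neg_natCast_add_one hθ', exp_neg_add_two_pi_mul, one_mul]

lemma hasSum_formKernel {θ y : ℝ} (hθ : 0 < θ) (hθ' : θ < 2 * π) (hy : 0 < y) :
    HasSum (fun n : ℤ => -(2 * π ^ 2 * n) * exp (-|θ + 2 * π * n| * y)) (formKernel θ y) := by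
  set r := exp (-(2 * π) * y) with hr
  have hgeom : HasSum (fun n : ℕ => (n : ℝ) * r ^ n) (r / (1 - r) ^ 2) :=
    hasSum_coe_mul_geometric_of_norm_lt_one
      (by rw [norm_of_nonneg (exp_pos _).le]; exact exp_neg_two_pi_mul_lt_one hy)
  have hkernel : formKernel θ y = -(2 * π ^ 2 * exp (-θ * y)) * (r / (1 - r) ^ 2) +
      2 * π ^ 2 * exp (θ * y) * (r / (1 - r) ^ 2) -
        -(2 * π ^ 2 * (0 : ℤ)) * exp (-|θ + 2 * π * (0 : ℤ)| * y) := by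
    rw [formKernel, ← hr, Int.cast_zero]
    ring
  rw [hkernel]
  refine HasSum.of_nat_of_neg ((hgeom.mul_left _).congr_fun fun n => ?_)
    ((hgeom.mul_left _).congr_fun fun n => ?_)
  · rw [Int.cast_natCast, abs_add_two_pi_mul_natCast hθ, exp_neg_add_two_pi_mul]
    ring
  · rcases n with _ | n
    · simp
    · push_cast
      rw [abs_add_two_pi_mul_neg_natCast_add_one hθ', exp_neg_add_two_pi_mul,
        show -(2 * π - θ) * y = θ * y + -(2 * π) * y by ring, exp_add]
      ring

variable {θ : ℝ} (hθ : 0 < θ) (hθ' : θ < 2 * π) {j : ℕ} (hodd : Odd j)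

include hθ hθ' hodd

theorem integral_pow_mul_coeffKernel (hj : 1 ≤ j) :
    ∫ y in Ioi 0, y ^ j * coeffKernel θ y = j.factorial * latticeSum θ j := by
  have habs (n : ℤ) : |θ + 2 * π * n| ^ (j + 1) = (θ + 2 * π * n) ^ (j + 1) :=
    hodd.add_one.pow_abs _
  refine integral_pow_mul_eq_of_hasSum (fun n => abs_pos.mpr (add_two_pi_mul_ne_zero hθ hθ' n))
    (fun y hy => hasSum_coeffKernel hθ hθ' hy) ?_
  simpa only [latticeSum, habs] using (summable_one_div_abs_add_two_pi_mul_pow θ hj).hasSum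

theorem integral_pow_mul_formKernel (hj : 2 ≤ j) :
    ∫ y in Ioi 0, y ^ j * formKernel θ y =
      j.factorial * (π * (θ * latticeSum θ j - latticeSum θ (j - 1))) := by
  have hsum {k : ℕ} (hk : 1 ≤ k) :
      HasSum (fun n : ℤ => 1 / (θ + 2 * π * n) ^ (k + 1)) (latticeSum θ k) :=
    (Summable.of_norm ((summable_one_div_abs_add_two_pi_mul_pow θ hk).congr fun n => by
      rw [norm_div, norm_pow, norm_one, norm_eq_abs])).hasSum
  refine integral_pow_mul_eq_of_hasSum (fun n => abs_pos.mpr (add_two_pi_mul_ne_zero hθ hθ' n))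
    (fun y hy => hasSum_formKernel hθ hθ' hy) ?_
  refine (((hsum (by lia : 1 ≤ j)).mul_left θ).sub (hsum (by lia : 1 ≤ j - 1))).mul_left π
    |>.congr_fun fun n => ?_
  have hne := add_two_pi_mul_ne_zero hθ hθ' n
  rw [hodd.add_one.pow_abs, Nat.sub_add_cancel (by lia)]
  field_simp
  ring

end Kernels

/-! ### Linear forms in `1` and `β₂` -/

section LinearForm

open Set MeasureTheory Polynomial Real

variable {T : ℝ[X]} {K : ℝ → ℝ} {μ : ℝ}

lemma IsExpDecayKernel.integrableOn_coeff_mul (hK : IsExpDecayKernel K μ) (hμ : 0 < μ)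
    (hT : X ^ 2 ∣ T) (j : ℕ) : IntegrableOn (fun y => T.coeff j * (y ^ j * K y)) (Ioi 0) := by
  rcases lt_or_ge j 2 with hj | hj
  · simp [X_pow_dvd_iff.mp hT j hj]
  · exact (hK.integrableOn_pow_mul hμ hj).const_mul _

lemma eval_mul_eq_sum_range (T : ℝ[X]) (K : ℝ → ℝ) (y : ℝ) :
    T.eval y * K y = ∑ j ∈ Finset.range (T.natDegree + 1), T.coeff j * (y ^ j * K y) := by
  simp only [eval_eq_sum_range, Finset.sum_mul, mul_assoc]

lemma IsExpDecayKernel.integrableOn_eval_mul (hK : IsExpDecayKernel K μ) (hμ : 0 < μ)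
    (hT : X ^ 2 ∣ T) : IntegrableOn (fun y => T.eval y * K y) (Ioi 0) := by
  simp only [eval_mul_eq_sum_range]
  exact integrable_finsetSum _ fun j _ => hK.integrableOn_coeff_mul hμ hT j

lemma IsExpDecayKernel.integral_eval_mul (hK : IsExpDecayKernel K μ) (hμ : 0 < μ)
    (hT : X ^ 2 ∣ T) : ∫ y in Ioi 0, T.eval y * K y =
      ∑ j ∈ Finset.range (T.natDegree + 1), T.coeff j * ∫ y in Ioi 0, y ^ j * K y := by
  simp only [eval_mul_eq_sum_range]
  rw [integral_finsetSum _ fun j _ => hK.integrableOn_coeff_mul hμ hT j]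
  simp only [integral_const_mul]

/-- `T` is the odd real polynomial `T(y) = (-1) ^ s * i * R(i * y)`, with at least a double zero
at `0`. -/
structure IsRotation (T : ℝ[X]) (R : ℂ[X]) (s : ℕ) : Prop where
  map_eq : T.map Complex.ofRealHom = C ((-1) ^ s * Complex.I) * R.comp (C Complex.I * X)
  comp_neg_X : T.comp (-X) = -T
  X_sq_dvd : X ^ 2 ∣ T

namespace IsRotation

variable {R : ℂ[X]} {s : ℕ} (h : IsRotation T R s)

include h

lemma ofReal_coeff (j : ℕ) :
    (T.coeff j : ℂ) = (-1) ^ s * Complex.I * (R.coeff j * Complex.I ^ j) := by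
  have hcoeff := congrArg (fun p => p.coeff j) h.map_eq
  simpa only [coeff_map, coeff_C_mul, comp_C_mul_X_coeff, Complex.ofRealHom_eq_coe] using hcoeff

lemma coeff_eq_zero_iff {j : ℕ} : T.coeff j = 0 ↔ R.coeff j = 0 := by
  rw [← Complex.ofReal_eq_zero, h.ofReal_coeff]
  simp

lemma odd_of_coeff_ne_zero {j : ℕ} (hj : T.coeff j ≠ 0) : Odd j := by
  by_contra hodd
  have hcoeff := congrArg (fun p => p.coeff j) h.comp_neg_X
  rw [show (-X : ℝ[X]) = C (-1) * X by simp] at hcoeff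
  simp only [comp_C_mul_X_coeff, (Nat.not_odd_iff_even.mp hodd).neg_one_pow, mul_one,
    coeff_neg] at hcoeff
  exact hj (by linarith)

lemma two_le_of_coeff_ne_zero {j : ℕ} (hj : T.coeff j ≠ 0) : 2 ≤ j := by
  by_contra! hlt
  exact hj (X_pow_dvd_iff.mp h.X_sq_dvd j hlt)

lemma natDegree_eq : R.natDegree = T.natDegree := by
  refine le_antisymm ?_ ?_ <;> refine natDegree_le_iff_coeff_eq_zero.mpr fun j hj => ?_
  · exact h.coeff_eq_zero_iff.mp (coeff_eq_zero_of_natDegree_lt hj)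
  · exact h.coeff_eq_zero_iff.mpr (coeff_eq_zero_of_natDegree_lt hj)

variable {θ : ℝ} (hθ : 0 < θ)

include hθ

lemma coeff_mul_factorial_mul_latticeSum (hθ' : θ < 2 * π) (j : ℕ) :
    (T.coeff j * (j.factorial * latticeSum θ j) : ℂ) =
      (-1) ^ s * (R.coeff j * abelSum (X ^ j) (Complex.exp (θ * Complex.I))) := by
  by_cases hj : T.coeff j = 0
  · simp [hj, h.coeff_eq_zero_iff.mp hj]
  have hI : Complex.I ^ (j + 1) * (-Complex.I) ^ (j + 1) = 1 := by simp [← mul_pow]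
  have hj₂ := h.two_le_of_coeff_ne_zero hj
  rw [factorial_mul_latticeSum_eq_abelSum hθ hθ' (by lia), h.ofReal_coeff]
  linear_combination
    (-1) ^ s * R.coeff j * abelSum (X ^ j) (Complex.exp (θ * Complex.I)) * hI

lemma coeff_mul_factorial_mul_latticeSum_pred (hθ' : θ < 2 * π) (j : ℕ) :
    (T.coeff (j + 1) * ((j + 1).factorial * latticeSum θ j) : ℂ) = (-1) ^ s * Complex.I *
      ((derivative R).coeff j * abelSum (X ^ j) (Complex.exp (θ * Complex.I))) := by
  rw [coeff_derivative]
  by_cases hj : T.coeff (j + 1) = 0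
  · simp [hj, h.coeff_eq_zero_iff.mp hj]
  have hI : Complex.I ^ (j + 1) * (-Complex.I) ^ (j + 1) = 1 := by simp [← mul_pow]
  have hj₂ := h.two_le_of_coeff_ne_zero hj
  rw [Nat.factorial_succ, Nat.cast_mul, mul_assoc,
    factorial_mul_latticeSum_eq_abelSum hθ hθ' (by lia), h.ofReal_coeff]
  push_cast
  linear_combination (-1) ^ s * Complex.I * R.coeff (j + 1) * (j + 1) *
    abelSum (X ^ j) (Complex.exp (θ * Complex.I)) * hI

theorem integral_eval_mul_coeffKernel (hθ' : θ ≤ π) :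
    ((∫ y in Ioi 0, T.eval y * coeffKernel θ y : ℝ) : ℂ) =
      (-1) ^ s * abelSum R (Complex.exp (θ * Complex.I)) := by
  have hlt : θ < 2 * π := by linarith [pi_pos]
  rw [(isExpDecayKernel_coeffKernel hθ').integral_eval_mul hθ h.X_sq_dvd,
    abelSum_eq_sum_coeff (h.natDegree_eq.trans_lt (Nat.lt_succ_self _)), Finset.mul_sum,
    Complex.ofReal_sum]
  refine Finset.sum_congr rfl fun j _ => ?_
  rw [← h.coeff_mul_factorial_mul_latticeSum hθ hlt]
  by_cases hj : T.coeff j = 0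
  · simp [hj]
  have hj₂ := h.two_le_of_coeff_ne_zero hj
  rw [integral_pow_mul_coeffKernel hθ hlt (h.odd_of_coeff_ne_zero hj) (by lia)]
  push_cast
  ring

lemma sum_coeff_mul_latticeSum_pred (hθ' : θ < 2 * π) :
    ∑ j ∈ Finset.range (T.natDegree + 1),
        (T.coeff j * (j.factorial * latticeSum θ (j - 1)) : ℂ) =
      (-1) ^ s * Complex.I * abelSum (derivative R) (Complex.exp (θ * Complex.I)) := by
  have hT₀ : T.coeff 0 = 0 := X_pow_dvd_iff.mp h.X_sq_dvd 0 two_pos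
  rcases Nat.eq_zero_or_pos T.natDegree with hdeg | hdeg
  · have hR : R = C (R.coeff 0) := eq_C_of_natDegree_eq_zero (h.natDegree_eq.trans hdeg)
    rw [hR, derivative_C, abelSum_eq_sum_range (N := 1) (by simp)]
    simp [hdeg, hT₀, newtonCoeff]
  · have hdeg' : (derivative R).natDegree < T.natDegree := by
      rw [← h.natDegree_eq] at hdeg ⊢
      exact natDegree_derivative_lt hdeg.ne'
    rw [Finset.sum_range_succ', hT₀, abelSum_eq_sum_coeff hdeg', Finset.mul_sum]
    simp only [Nat.add_sub_cancel, h.coeff_mul_factorial_mul_latticeSum_pred hθ hθ',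
      Complex.ofReal_zero, zero_mul, add_zero]

theorem integral_eval_mul_formKernel (hθ' : θ < 2 * π) :
    ((∫ y in Ioi 0, T.eval y * formKernel θ y : ℝ) : ℂ) =
      (-1) ^ s * π * (θ * abelSum R (Complex.exp (θ * Complex.I)) -
        Complex.I * abelSum (derivative R) (Complex.exp (θ * Complex.I))) := by
  have hterm (j : ℕ) : T.coeff j * ∫ y in Ioi 0, y ^ j * formKernel θ y =
      π * (θ * (T.coeff j * (j.factorial * latticeSum θ j)) -
        T.coeff j * (j.factorial * latticeSum θ (j - 1))) := by
    by_cases hj : T.coeff j = 0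
    · simp [hj]
    rw [integral_pow_mul_formKernel hθ hθ' (h.odd_of_coeff_ne_zero hj)
      (h.two_le_of_coeff_ne_zero hj)]
    ring
  have hsum := h.sum_coeff_mul_latticeSum_pred hθ hθ'
  have hsum' := Finset.sum_congr (s₁ := Finset.range (T.natDegree + 1)) rfl fun j _ =>
    h.coeff_mul_factorial_mul_latticeSum hθ hθ' j
  rw [← Finset.mul_sum, ← abelSum_eq_sum_coeff
    (h.natDegree_eq.trans_lt (Nat.lt_succ_self _))] at hsum'
  rw [(isExpDecayKernel_formKernel hθ).integral_eval_mul (sub_pos.mpr hθ') h.X_sq_dvd,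
    Finset.sum_congr rfl fun j _ => hterm j, ← Finset.mul_sum, Finset.sum_sub_distrib,
    ← Finset.mul_sum]
  push_cast
  rw [hsum, hsum']
  ring

end IsRotation

/-- The primitive sixth root of unity `exp (π * i / 3)`. -/
noncomputable def sixthRoot : ℂ := Complex.exp ((π / 3 : ℝ) * Complex.I)

lemma sixthRoot_eq : sixthRoot = 1 / 2 + √3 / 2 * Complex.I := by
  rw [sixthRoot, Complex.exp_mul_I, ← Complex.ofReal_cos, ← Complex.ofReal_sin, cos_pi_div_three,
    sin_pi_div_three]
  push_cast
  rfl

lemma sixthRoot_sq : sixthRoot ^ 2 = sixthRoot - 1 := by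
  have hsqrt : (√3 : ℂ) ^ 2 = 3 := by exact_mod_cast sq_sqrt (by norm_num : (0 : ℝ) ≤ 3)
  rw [sixthRoot_eq]
  linear_combination Complex.I ^ 2 / 4 * hsqrt + 3 / 4 * Complex.I_sq

lemma sixthRoot_pow_three : sixthRoot ^ 3 = -1 := by
  linear_combination (sixthRoot + 1) * sixthRoot_sq

lemma abelSum_sixthRoot (Q : ℂ[X]) : abelSum Q sixthRoot =
    ∑ l ∈ Finset.range (Q.natDegree + 1), newtonCoeff Q l * sixthRoot ^ (2 * l + 1) := by
  have hmul : sixthRoot * (1 - sixthRoot) = 1 := by linear_combination -sixthRoot_sq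
  refine Finset.sum_congr rfl fun l _ => ?_
  congr 1
  rw [div_eq_iff (pow_ne_zero _ (right_ne_zero_of_mul_eq_one hmul)),
    show 2 * l + 1 = l + (l + 1) by lia, pow_add, mul_assoc, ← mul_pow, hmul, one_pow, mul_one]

lemma exists_two_mul_sixthRoot_pow_eq (l : ℕ) :
    ∃ u v : ℤ, 2 * sixthRoot ^ (2 * l + 1) = u + v * (√3 : ℂ) * Complex.I := by
  have hpow : sixthRoot ^ (2 * l + 1) = sixthRoot ^ (2 * (l % 3) + 1) := by
    conv_lhs => rw [← Nat.div_add_mod l 3]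
    rw [show 2 * (3 * (l / 3) + l % 3) + 1 = 3 * (2 * (l / 3)) + (2 * (l % 3) + 1) by ring,
      pow_add, pow_mul, sixthRoot_pow_three, Even.neg_one_pow (even_two_mul _), one_mul]
  rw [hpow]
  have hlt := Nat.mod_lt l three_pos
  interval_cases l % 3
  · exact ⟨1, 1, by rw [sixthRoot_eq]; push_cast; ring⟩
  · exact ⟨-2, 0, by linear_combination 2 * sixthRoot_pow_three⟩
  · refine ⟨1, -1, ?_⟩
    have hfive : sixthRoot ^ 5 = 1 - sixthRoot := by
      linear_combination sixthRoot ^ 2 * sixthRoot_pow_three - sixthRoot_sq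
    rw [hfive, sixthRoot_eq]
    push_cast
    ring

lemma exists_mul_newtonCoeff_eq {Q : ℂ[X]} {c : ℂ} (hQ : ∀ n : ℕ, ∃ z : ℤ, c * Q.eval (n : ℂ) = z)
    (l : ℕ) : ∃ z : ℤ, c * newtonCoeff Q l = z := by
  choose f hf using hQ
  refine ⟨∑ i ∈ Finset.range (l + 1), (-1) ^ (l - i) * l.choose i * f i, ?_⟩
  rw [newtonCoeff_eq_sum_eval, Finset.mul_sum]
  push_cast
  exact Finset.sum_congr rfl fun i _ => by rw [← hf]; ring

lemma exists_two_mul_abelSum_sixthRoot_eq {Q : ℂ[X]} {c : ℂ}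
    (hQ : ∀ n : ℕ, ∃ z : ℤ, c * Q.eval (n : ℂ) = z) :
    ∃ u v : ℤ, 2 * (c * abelSum Q sixthRoot) = u + v * (√3 : ℂ) * Complex.I := by
  choose f hf using exists_mul_newtonCoeff_eq hQ
  choose u v huv using exists_two_mul_sixthRoot_pow_eq
  refine ⟨∑ l ∈ Finset.range (Q.natDegree + 1), f l * u l,
    ∑ l ∈ Finset.range (Q.natDegree + 1), f l * v l, ?_⟩
  rw [abelSum_sixthRoot, Finset.mul_sum, Finset.mul_sum]
  push_cast
  rw [Finset.sum_mul, Finset.sum_mul, ← Finset.sum_add_distrib]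
  refine Finset.sum_congr rfl fun l _ => ?_
  rw [← hf]
  linear_combination c * newtonCoeff Q l * huv l

lemma arctan_sqrt_three : arctan √3 = π / 3 := by
  rw [← tan_pi_div_three, arctan_tan] <;> linarith [pi_pos]

theorem IsRotation.exists_linearForm {R : ℂ[X]} {s : ℕ} (h : IsRotation T R s) {D : ℝ}
    (hR : ∀ n : ℕ, ∃ z : ℤ, (D : ℂ) * R.eval (n : ℂ) = z)
    (hR' : ∀ n : ℕ, ∃ z : ℤ, (D : ℂ) * (derivative R).eval (n : ℂ) = z) :
    ∃ a b : ℤ, b = 2 * D * ∫ y in Ioi 0, T.eval y * coeffKernel (π / 3) y ∧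
      b * (√3 * arctan √3) - a =
        2 * √3 / π * D * ∫ y in Ioi 0, T.eval y * formKernel (π / 3) y := by
  obtain ⟨u, v, huv⟩ := exists_two_mul_abelSum_sixthRoot_eq hR
  obtain ⟨u', v', huv'⟩ := exists_two_mul_abelSum_sixthRoot_eq hR'
  have hpos : 0 < π / 3 := by positivity
  have hcoeff := h.integral_eval_mul_coeffKernel hpos (by linarith [pi_pos])
  have hform := h.integral_eval_mul_formKernel hpos (by linarith [pi_pos])
  rw [← sixthRoot] at hcoeff hform
  set B := ∫ y in Ioi 0, T.eval y * coeffKernel (π / 3) y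
  set F := ∫ y in Ioi 0, T.eval y * formKernel (π / 3) y
  obtain ⟨e, he⟩ : ∃ e : ℤ, (e : ℂ) = (-1) ^ s := ⟨(-1) ^ s, by push_cast; rfl⟩
  rw [← he] at hcoeff hform
  have hB : 2 * D * B = e * u := by
    have hB' : (2 * D * B : ℂ) = e * (u + v * √3 * Complex.I) := by
      linear_combination 2 * D * hcoeff + e * huv
    simpa using congrArg Complex.re hB'
  have hF : 2 * D * F = e * (π * (π / 3 * u + v' * √3)) := by
    have hF' : (2 * D * F : ℂ) = e * (π * ((π / 3 : ℝ) * (u + v * √3 * Complex.I) -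
        Complex.I * (u' + v' * √3 * Complex.I))) := by
      linear_combination 2 * D * hform + e * π * ((π / 3 : ℝ) * huv - Complex.I * huv')
    simpa using congrArg Complex.re hF'
  refine ⟨-(3 * e * v'), e * u, ?_, ?_⟩
  · rw [hB]
    push_cast
    rfl
  · have hsqrt : √3 ^ 2 = 3 := sq_sqrt (by norm_num)
    have hF_div : 2 * √3 / π * D * F = √3 * (e * (π / 3 * u + v' * √3)) := by
      calc 2 * √3 / π * D * F = √3 / π * (2 * D * F) := by ring
        _ = √3 * (e * (π / 3 * u + v' * √3)) := by
          rw [hF]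
          field_simp
    rw [arctan_sqrt_three, hF_div]
    push_cast
    linear_combination -e * v' * hsqrt

end LinearForm

/-! ### Binomial polynomials -/

section BinomialPolynomials

open Polynomial Finset
open scoped Nat

/-- The binomial coefficient `X.choose N` as a polynomial in `X`. -/
noncomputable def binomialPoly (N : ℕ) : ℂ[X] := C (N ! : ℂ)⁻¹ * descPochhammer ℂ N

lemma eval_natCast_binomialPoly (N n : ℕ) : (binomialPoly N).eval (n : ℂ) = n.choose N := by
  rw [binomialPoly, eval_mul, eval_C, Nat.cast_choose_eq_descPochhammer_div, div_eq_inv_mul]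

lemma eval_zero_derivative_binomialPoly (N : ℕ) :
    (derivative (binomialPoly N)).eval 0 = -(-1) ^ N / N := by
  cases N with
  | zero => simp [binomialPoly]
  | succ N =>
    have hpoch : (descPochhammer ℂ N).eval (-1) = (-1) ^ N * N ! := by
      have hneg := ascPochhammer_eval_neg_eq_descPochhammer ℂ (-1) N
      rw [neg_neg, ascPochhammer_eval_one] at hneg
      rw [hneg, ← mul_assoc, ← mul_pow, neg_one_mul, neg_neg, one_pow, one_mul]
    have hfact : (N ! : ℂ) ≠ 0 := by exact_mod_cast N.factorial_ne_zero
    rw [binomialPoly, derivative_C_mul, descPochhammer_succ_left, derivative_mul]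
    simp only [eval_mul, eval_C, eval_add, derivative_X, one_mul, eval_comp, eval_sub, eval_X,
      eval_one, zero_sub, hpoch, zero_mul, add_zero, Nat.factorial_succ]
    push_cast
    field_simp
    ring

lemma binomialPoly_comp_natCast_add_X (N n : ℕ) : (binomialPoly N).comp (C (n : ℂ) + X) =
    ∑ ij ∈ antidiagonal N, C (n.choose ij.1 : ℂ) * binomialPoly ij.2 := by
  refine eq_of_infinite_eval_eq _ _ ((Set.infinite_range_of_injective
    (Nat.cast_injective (R := ℂ))).mono ?_)
  rintro _ ⟨k, rfl⟩
  rw [Set.mem_ofPred_eq, eval_comp, eval_add, eval_C, eval_X, ← Nat.cast_add,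
    eval_natCast_binomialPoly, Nat.add_choose_eq, eval_finsetSum]
  simp only [eval_mul, eval_C, eval_natCast_binomialPoly]
  push_cast
  rfl

lemma eval_natCast_derivative_binomialPoly (N n : ℕ) :
    (derivative (binomialPoly N)).eval (n : ℂ) =
      ∑ ij ∈ antidiagonal N, (n.choose ij.1 : ℂ) * (-(-1) ^ ij.2 / ij.2) := by
  have hderiv := congrArg (fun p => (derivative p).eval 0) (binomialPoly_comp_natCast_add_X N n)
  simpa only [derivative_comp, derivative_add, derivative_C, derivative_X, zero_add, one_mul,
    eval_comp, eval_add, eval_C, eval_X, add_zero, derivative_sum, eval_finsetSum,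
    derivative_C_mul, eval_mul, eval_zero_derivative_binomialPoly] using hderiv

lemma dvd_lcmUpto {k L : ℕ} (hk : 1 ≤ k) (hkL : k ≤ L) : k ∣ Nat.lcmUpto L :=
  Finset.dvd_lcm (f := id) (Finset.mem_Icc.mpr ⟨hk, hkL⟩)

lemma dvd_choose_of_mod_lt_mod {p n N : ℕ} (hp : p.Prime) (h : n % p < N % p) :
    p ∣ n.choose N := by
  have := Fact.mk hp
  have hlucas := Choose.choose_modEq_choose_mod_mul_choose_div_nat (n := n) (k := N) (p := p)
  rw [Nat.choose_eq_zero_of_lt h, zero_mul] at hlucas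
  exact Nat.modEq_zero_iff_dvd.mp hlucas

lemma exists_lcmUpto_mul_eval_derivative_binomialPoly_eq {N L : ℕ} (hNL : N ≤ L) (n : ℕ) :
    ∃ z : ℤ, (Nat.lcmUpto L : ℂ) * (derivative (binomialPoly N)).eval (n : ℂ) = z ∧
      ∀ p : ℕ, p.Prime → p ≤ L → n % p < N % p → (p : ℤ) ∣ z := by
  have hdvd {j : ℕ} (hj : j ≠ 0) (hjN : j ≤ N) : j ∣ Nat.lcmUpto L :=
    dvd_lcmUpto (Nat.one_le_iff_ne_zero.mpr hj) (hjN.trans hNL)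
  refine ⟨∑ ij ∈ antidiagonal N, -(-1) ^ ij.2 * ((n.choose ij.1 * (Nat.lcmUpto L / ij.2) : ℕ) : ℤ),
    ?_, fun p hp hpL hmod => Finset.dvd_sum fun ij hij => Dvd.dvd.mul_left ?_ _⟩
  · rw [eval_natCast_derivative_binomialPoly, Finset.mul_sum, Int.cast_sum]
    refine Finset.sum_congr rfl fun ij hij => ?_
    have hle := HasAntidiagonal.mem_antidiagonal.mp hij
    rcases eq_or_ne ij.2 0 with hj | hj
    · simp [hj]
    · rw [Int.cast_mul, Int.cast_natCast, Nat.cast_mul,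
        Nat.cast_div (hdvd hj (by lia)) (by exact_mod_cast hj)]
      push_cast
      ring
  · obtain ⟨i, j⟩ := ij
    rw [HasAntidiagonal.mem_antidiagonal] at hij
    rw [Int.natCast_dvd_natCast]
    by_cases hpj : p ∣ j
    · refine Dvd.dvd.mul_right (dvd_choose_of_mod_lt_mod hp ?_) _
      obtain ⟨t, rfl⟩ := hpj
      rwa [← hij, Nat.add_mul_mod_self_left] at hmod
    · have hj : j ≠ 0 := fun hj => hpj (hj ▸ dvd_zero p)
      refine Dvd.dvd.mul_left (((hp.dvd_mul.mp ?_).resolve_left hpj)) _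
      rw [Nat.mul_div_cancel' (hdvd hj (by lia))]
      exact dvd_lcmUpto hp.one_lt.le hpL

/-- The polynomial `(X + h).choose (2 * h + 1)`, which is odd and has its zeros at the integers of
absolute value at most `h`. -/
noncomputable def centralBinomial (h : ℕ) : ℂ[X] := (binomialPoly (2 * h + 1)).comp (X + C (h : ℂ))

/-- The real polynomial `(-1) ^ h * (i * y + h).choose (2 * h + 1) / i` in `y`. -/
noncomputable def rotatedBinomial (h : ℕ) : ℝ[X] :=
  C ((2 * h + 1)! : ℝ)⁻¹ * (X * ∏ j ∈ range h, (X ^ 2 + C ((j + 1 : ℝ) ^ 2)))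

lemma descPochhammer_comp_X_add_natCast (h : ℕ) :
    (descPochhammer ℂ (2 * h + 1)).comp (X + C (h : ℂ)) =
      X * ∏ j ∈ range h, (X ^ 2 - C ((j + 1 : ℂ) ^ 2)) := by
  induction h with
  | zero => simp
  | succ h ih =>
    have hshift : (X - 1 : ℂ[X]).comp (X + C ((h + 1 : ℕ) : ℂ)) = X + C (h : ℂ) := by
      rw [sub_comp, X_comp, one_comp]
      push_cast
      rw [C_add, C_1]
      ring
    rw [show 2 * (h + 1) + 1 = 2 * h + 1 + 1 + 1 by ring, descPochhammer_succ_left, mul_comp,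
      comp_assoc, hshift, descPochhammer_succ_right, mul_comp, ih, Finset.prod_range_succ]
    simp only [X_comp, sub_comp, natCast_comp]
    push_cast
    simp only [C_add, C_1, C_pow, map_natCast]
    ring

lemma centralBinomial_eq (h : ℕ) : centralBinomial h =
    C ((2 * h + 1)! : ℂ)⁻¹ * (X * ∏ j ∈ range h, (X ^ 2 - C ((j + 1 : ℂ) ^ 2))) := by
  rw [centralBinomial, binomialPoly, mul_comp, C_comp, descPochhammer_comp_X_add_natCast]

lemma eval_natCast_centralBinomial (h n : ℕ) :
    (centralBinomial h).eval (n : ℂ) = (n + h).choose (2 * h + 1) := by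
  rw [centralBinomial, eval_comp, eval_add, eval_X, eval_C, ← Nat.cast_add,
    eval_natCast_binomialPoly]

lemma eval_natCast_derivative_centralBinomial (h n : ℕ) :
    (derivative (centralBinomial h)).eval (n : ℂ) =
      (derivative (binomialPoly (2 * h + 1))).eval ((n + h : ℕ) : ℂ) := by
  rw [centralBinomial, derivative_comp, derivative_add, derivative_X, derivative_C, add_zero,
    one_mul, eval_comp, eval_add, eval_X, eval_C, Nat.cast_add]

lemma map_rotatedBinomial (h : ℕ) : (rotatedBinomial h).map Complex.ofRealHom =
    C (-((-1) ^ h * Complex.I)) * (centralBinomial h).comp (C Complex.I * X) := by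
  have hfactor (j : ℕ) : (C Complex.I * X : ℂ[X]) ^ 2 - C ((j + 1 : ℂ) ^ 2) =
      C (-1) * (X ^ 2 + C ((j + 1 : ℂ) ^ 2)) := by
    rw [mul_pow, ← C_pow, Complex.I_sq, C_neg, C_1]
    ring
  have hunit : (C (-((-1) ^ h * Complex.I)) * C Complex.I * C ((-1) ^ h) : ℂ[X]) = 1 := by
    have hsign : ((-1 : ℂ) ^ h) * (-1) ^ h = 1 := by rw [← mul_pow, neg_one_mul, neg_neg, one_pow]
    rw [← C_mul, ← C_mul, ← C_1]
    congr 1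
    linear_combination -Complex.I ^ 2 * hsign - Complex.I_sq
  rw [centralBinomial_eq, rotatedBinomial]
  simp only [Polynomial.map_mul, Polynomial.map_prod, Polynomial.map_add, Polynomial.map_pow,
    map_C, map_X, mul_comp, Polynomial.prod_comp, sub_comp, pow_comp, X_comp, C_comp, hfactor,
    Finset.prod_mul_distrib, Finset.prod_const, Finset.card_range, ← C_pow,
    Complex.ofRealHom_eq_coe]
  push_cast
  linear_combination (-C ((2 * h + 1)! : ℂ)⁻¹ * X *
    ∏ j ∈ range h, (X ^ 2 + C ((j + 1 : ℂ) ^ 2))) * hunit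

lemma rotatedBinomial_comp_neg_X (h : ℕ) : (rotatedBinomial h).comp (-X) = -rotatedBinomial h := by
  simp only [rotatedBinomial, mul_comp, Polynomial.prod_comp, add_comp, pow_comp, X_comp, C_comp,
    neg_sq, neg_mul, mul_neg]

lemma X_dvd_rotatedBinomial (h : ℕ) : X ∣ rotatedBinomial h :=
  Dvd.dvd.mul_left (dvd_mul_right _ _) _

lemma eval_rotatedBinomial (h : ℕ) (y : ℝ) : (rotatedBinomial h).eval y =
    y * (∏ j ∈ range h, (y ^ 2 + (j + 1 : ℝ) ^ 2)) / (2 * h + 1)! := by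
  simp only [rotatedBinomial, eval_mul, eval_C, eval_X, eval_prod, eval_add, eval_pow]
  ring

lemma X_sq_dvd_prod_rotatedBinomial {ι : Type*} [Fintype ι] (hι : 2 ≤ Fintype.card ι)
    (h : ι → ℕ) : X ^ 2 ∣ ∏ i, rotatedBinomial (h i) :=
  calc (X : ℝ[X]) ^ 2 ∣ X ^ Fintype.card ι := pow_dvd_pow X hι
    _ = ∏ _i : ι, X := by simp
    _ ∣ _ := Finset.prod_dvd_prod_of_dvd _ _ fun i _ => X_dvd_rotatedBinomial (h i)

theorem isRotation_prod_rotatedBinomial (h : Fin 3 → ℕ) :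
    IsRotation (∏ i, rotatedBinomial (h i)) (∏ i, centralBinomial (h i)) (∑ i, h i) where
  map_eq := by
    simp only [Polynomial.map_prod, map_rotatedBinomial, Polynomial.prod_comp,
      Finset.prod_mul_distrib, ← map_prod C, Finset.prod_neg, Finset.prod_pow_eq_pow_sum,
      Finset.prod_const, Finset.card_univ, Fintype.card_fin, Complex.I_pow_three]
    congr 2
    ring
  comp_neg_X := by
    rw [Polynomial.prod_comp]
    simp only [rotatedBinomial_comp_neg_X, Fin.prod_univ_three]
    ring
  X_sq_dvd := X_sq_dvd_prod_rotatedBinomial (by simp) h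

end BinomialPolynomials

/-! ### The common denominator of the derivative values -/

section Denominator

open Polynomial Finset

variable {ι : Type*}

/-- The primes `p ≤ L` dividing `∏ i, (n + h i).choose (2 * h i + 1)` for every `n` because, for
some `i`, the last base-`p` digit of `n + h i` is below that of `2 * h i + 1`. -/
noncomputable def goodPrimes (h : ι → ℕ) (L : ℕ) : Finset ℕ :=
  open Classical in
  {p ∈ range (L + 1) | p.Prime ∧ ∀ n, ∃ i, (n + h i) % p < (2 * h i + 1) % p}

/-- The least common multiple of `1, …, L` stripped of one factor `p` for each good prime `p`. -/
noncomputable def reducedLcm (h : ι → ℕ) (L : ℕ) : ℕ := Nat.lcmUpto L / ∏ p ∈ goodPrimes h L, p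

variable {h : ι → ℕ} {L : ℕ}

lemma mem_goodPrimes {p : ℕ} : p ∈ goodPrimes h L ↔
    p ≤ L ∧ p.Prime ∧ ∀ n, ∃ i, (n + h i) % p < (2 * h i + 1) % p := by
  classical
  simp only [goodPrimes, mem_filter, mem_range_succ_iff]

lemma prime_of_mem_goodPrimes {p : ℕ} (hp : p ∈ goodPrimes h L) : p.Prime :=
  (mem_goodPrimes.mp hp).2.1

lemma prod_goodPrimes_ne_zero : ∏ p ∈ goodPrimes h L, p ≠ 0 :=
  Finset.prod_ne_zero_iff.mpr fun _ hp => (prime_of_mem_goodPrimes hp).ne_zero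

lemma reducedLcm_mul_prod : reducedLcm h L * ∏ p ∈ goodPrimes h L, p = Nat.lcmUpto L :=
  Nat.div_mul_cancel <| Finset.prod_primes_dvd _ (fun _ hp => (prime_of_mem_goodPrimes hp).prime)
    fun _ hp => dvd_lcmUpto (prime_of_mem_goodPrimes hp).one_lt.le (mem_goodPrimes.mp hp).1

lemma reducedLcm_pos : 0 < reducedLcm h L := by
  have hpos := Nat.lcmUpto_pos L
  rw [← reducedLcm_mul_prod (h := h)] at hpos
  exact Nat.pos_of_mul_pos_right hpos

lemma log_reducedLcm : Real.log (reducedLcm h L) =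
    Chebyshev.psi L - ∑ p ∈ goodPrimes h L, Real.log p := by
  have hprod : ((∏ p ∈ goodPrimes h L, p : ℕ) : ℝ) ≠ 0 := by exact_mod_cast prod_goodPrimes_ne_zero
  rw [Chebyshev.psi_eq_log_lcmUpto, ← reducedLcm_mul_prod (h := h), Nat.cast_mul,
    Real.log_mul (by exact_mod_cast reducedLcm_pos.ne') hprod, Nat.cast_prod, Real.log_prod,
    add_sub_cancel_right]
  exact fun p hp => by exact_mod_cast (prime_of_mem_goodPrimes hp).ne_zero

variable [Fintype ι]

lemma exists_eval_prod_centralBinomial_eq (h : ι → ℕ) (n : ℕ) :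
    ∃ z : ℤ, (∏ i, centralBinomial (h i)).eval (n : ℂ) = z :=
  ⟨∏ i, ((n + h i).choose (2 * h i + 1) : ℤ), by
    simp only [eval_prod, eval_natCast_centralBinomial]
    push_cast
    rfl⟩

lemma exists_lcmUpto_mul_eval_derivative_eq (hL : ∀ i, 2 * h i + 1 ≤ L) (n : ℕ) :
    ∃ z : ℤ, (Nat.lcmUpto L : ℂ) * (derivative (∏ i, centralBinomial (h i))).eval (n : ℂ) = z ∧
      ∀ p ∈ goodPrimes h L, (p : ℤ) ∣ z := by
  classical
  choose z hz hdvd using fun i =>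
    exists_lcmUpto_mul_eval_derivative_binomialPoly_eq (hL i) (n + h i)
  refine ⟨∑ i, (∏ j ∈ univ.erase i, ((n + h j).choose (2 * h j + 1) : ℤ)) * z i, ?_,
    fun p hp => Finset.dvd_sum fun i _ => ?_⟩
  · rw [derivative_prod_finset, eval_finsetSum, Finset.mul_sum]
    push_cast
    refine Finset.sum_congr rfl fun i _ => ?_
    rw [eval_mul, eval_prod, eval_natCast_derivative_centralBinomial, ← hz, mul_left_comm]
    simp only [eval_natCast_centralBinomial]
  · obtain ⟨hpL, hprime, hgood⟩ := mem_goodPrimes.mp hp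
    obtain ⟨j, hj⟩ := hgood n
    rcases eq_or_ne j i with rfl | hji
    · exact Dvd.dvd.mul_left (hdvd j p hprime hpL hj) _
    · have hmem : j ∈ univ.erase i := mem_erase.mpr ⟨hji, mem_univ j⟩
      refine Dvd.dvd.mul_right (dvd_trans ?_ (dvd_prod_of_mem _ hmem)) _
      exact_mod_cast dvd_choose_of_mod_lt_mod hprime hj

theorem exists_reducedLcm_mul_eval_derivative_eq (hL : ∀ i, 2 * h i + 1 ≤ L) (n : ℕ) :
    ∃ z : ℤ, (reducedLcm h L : ℂ) * (derivative (∏ i, centralBinomial (h i))).eval (n : ℂ) = z := by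
  obtain ⟨z, hz, hdvd⟩ := exists_lcmUpto_mul_eval_derivative_eq hL n
  obtain ⟨w, rfl⟩ : ((∏ p ∈ goodPrimes h L, p : ℕ) : ℤ) ∣ z := by
    rw [Int.natCast_dvd]
    exact Finset.prod_primes_dvd _ (fun _ hp => (prime_of_mem_goodPrimes hp).prime)
      fun p hp => Int.natCast_dvd.mp (hdvd p hp)
  refine ⟨w, mul_left_cancel₀ (Nat.cast_ne_zero.mpr (prod_goodPrimes_ne_zero (h := h) (L := L))) ?_⟩
  rw [← reducedLcm_mul_prod (h := h)] at hz
  push_cast at hz ⊢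
  rw [← hz]
  ring

end Denominator

section GoodPrimes

open Finset

-- Since `2 (n + h) - (2 h + 1) = 2 n - 1` does not depend on `h`, the two inequalities can fail
-- together only if `2 s₁ - t₁` and `2 s₂ - t₂`, with `sᵢ = (n + hᵢ) % p` and
-- `tᵢ = (2 hᵢ + 1) % p`, differ by an odd multiple of `p`; but both lie in `[tᵢ, 2 p - 2 - tᵢ]`.
lemma mod_lt_mod_or_of_odd_div_add_div {p h₁ h₂ : ℕ}
    (hodd : Odd ((2 * h₁ + 1) / p + (2 * h₂ + 1) / p))
    (hsum : p ≤ (2 * h₁ + 1) % p + (2 * h₂ + 1) % p + 1) (n : ℕ) :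
    (n + h₁) % p < (2 * h₁ + 1) % p ∨ (n + h₂) % p < (2 * h₂ + 1) % p := by
  rcases p.eq_zero_or_pos with rfl | hp
  · simp at hodd
  by_contra! hcon
  obtain ⟨hle₁, hle₂⟩ := hcon
  have hlt₁ := Nat.mod_lt (n + h₁) hp
  have hlt₂ := Nat.mod_lt (n + h₂) hp
  obtain ⟨w, hw⟩ := hodd
  have hs₁ := Nat.div_add_mod (n + h₁) p
  have hs₂ := Nat.div_add_mod (n + h₂) p
  have ht₁ := Nat.div_add_mod (2 * h₁ + 1) p
  have ht₂ := Nat.div_add_mod (2 * h₂ + 1) p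
  zify at hlt₁ hlt₂ hle₁ hle₂ hw hs₁ hs₂ ht₁ ht₂ hsum
  set s₁ : ℤ := (n + h₁) % p
  set s₂ : ℤ := (n + h₂) % p
  set t₁ : ℤ := (2 * h₁ + 1) % p
  set t₂ : ℤ := (2 * h₂ + 1) % p
  obtain ⟨v, hv⟩ : ∃ v : ℤ, 2 * s₁ - t₁ - (2 * s₂ - t₂) = p * (2 * v + 1) :=
    ⟨((n + h₂) / p : ℤ) - (n + h₁) / p + w - ((2 * h₂ + 1) / p : ℤ), by
      linear_combination 2 * hs₁ - 2 * hs₂ - ht₁ + ht₂ + p * hw⟩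
  rcases lt_or_ge v 0 with hv₀ | hv₀ <;> nlinarith

lemma mul_add_one_div_and_mod {p m K r c e : ℕ} (hm : 2 * m = K * p + r) (hle : e * p ≤ c * r + 1)
    (hlt : c * r + 1 < (e + 1) * p) :
    (2 * (c * m) + 1) / p = c * K + e ∧ (2 * (c * m) + 1) % p = c * r + 1 - e * p := by
  have hrem : c * r + 1 - e * p < p := by
    rw [add_one_mul] at hlt
    lia
  have heq : 2 * (c * m) + 1 = (c * r + 1 - e * p) + p * (c * K + e) := by
    zify [hle] at hm ⊢
    linear_combination c * hm
  rw [heq, Nat.add_mul_div_left _ _ (by lia), Nat.add_mul_mod_self_left, Nat.div_eq_of_lt hrem,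
    Nat.mod_eq_of_lt hrem, zero_add]
  exact ⟨rfl, rfl⟩

lemma mod_lt_mod_or_of_digits {p m K r c₁ c₂ : ℕ} (e₁ e₂ : ℕ) (hm : 2 * m = K * p + r)
    (hc : Even (c₁ + c₂)) (he : Odd (e₁ + e₂)) (hle₁ : e₁ * p ≤ c₁ * r + 1)
    (hlt₁ : c₁ * r + 1 < (e₁ + 1) * p) (hle₂ : e₂ * p ≤ c₂ * r + 1)
    (hlt₂ : c₂ * r + 1 < (e₂ + 1) * p) (hsum : (e₁ + e₂ + 1) * p ≤ (c₁ + c₂) * r + 3) (n : ℕ) :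
    (n + c₁ * m) % p < (2 * (c₁ * m) + 1) % p ∨ (n + c₂ * m) % p < (2 * (c₂ * m) + 1) % p := by
  obtain ⟨hdiv₁, hmod₁⟩ := mul_add_one_div_and_mod hm hle₁ hlt₁
  obtain ⟨hdiv₂, hmod₂⟩ := mul_add_one_div_and_mod hm hle₂ hlt₂
  refine mod_lt_mod_or_of_odd_div_add_div ?_ ?_ n
  · rw [hdiv₁, hdiv₂, add_add_add_comm, ← add_mul]
    exact (hc.mul_right K).add_odd he
  · rw [add_mul, add_mul, add_mul] at hsum
    rw [hmod₁, hmod₂]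
    lia

/-- The parameters `h` of the three binomial factors `(X + h).choose (2 * h + 1)` used for the
`m`-th linear form. -/
def halfWidths (m : ℕ) (i : Fin 3) : ℕ := ![3, 5, 7] i * m

/-- The left endpoints of the five intervals in which the fractional part of `2 * m / p` makes `p`
a good prime for `halfWidths m`. -/
noncomputable def goodLower : Fin 5 → ℝ := ![1 / 6, 1 / 3, 1 / 2, 2 / 3, 3 / 4]

/-- The right endpoints of the intervals described in `goodLower`. -/
noncomputable def goodUpper : Fin 5 → ℝ := ![1 / 3, 3 / 7, 2 / 3, 5 / 7, 6 / 7]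

lemma exists_mod_lt_mod_of_remainder {p m K r : ℕ} (hm : 2 * m = K * p + r)
    (hr : (p ≤ 6 * r ∧ 3 * (r + 1) < p) ∨ (p ≤ 3 * r ∧ 7 * (r + 1) < 3 * p) ∨
      (p ≤ 2 * r ∧ 3 * (r + 1) < 2 * p) ∨ (2 * p ≤ 3 * r ∧ 7 * (r + 1) < 5 * p) ∨
      (3 * p ≤ 4 * r ∧ 7 * (r + 1) < 6 * p)) (n : ℕ) :
    ∃ i, (n + halfWidths m i) % p < (2 * halfWidths m i + 1) % p := by
  have h₃₅ e₁ e₂ he hle₁ hlt₁ hle₂ hlt₂ hsum :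
      ∃ i, (n + halfWidths m i) % p < (2 * halfWidths m i + 1) % p :=
    (mod_lt_mod_or_of_digits (c₁ := 3) (c₂ := 5) e₁ e₂ hm (by decide) he hle₁ hlt₁ hle₂ hlt₂ hsum
      n).elim (fun h => ⟨0, h⟩) fun h => ⟨1, h⟩
  have h₃₇ e₁ e₂ he hle₁ hlt₁ hle₂ hlt₂ hsum :
      ∃ i, (n + halfWidths m i) % p < (2 * halfWidths m i + 1) % p :=
    (mod_lt_mod_or_of_digits (c₁ := 3) (c₂ := 7) e₁ e₂ hm (by decide) he hle₁ hlt₁ hle₂ hlt₂ hsum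
      n).elim (fun h => ⟨0, h⟩) fun h => ⟨2, h⟩
  have h₅₇ e₁ e₂ he hle₁ hlt₁ hle₂ hlt₂ hsum :
      ∃ i, (n + halfWidths m i) % p < (2 * halfWidths m i + 1) % p :=
    (mod_lt_mod_or_of_digits (c₁ := 5) (c₂ := 7) e₁ e₂ hm (by decide) he hle₁ hlt₁ hle₂ hlt₂ hsum
      n).elim (fun h => ⟨1, h⟩) fun h => ⟨2, h⟩
  rcases hr with ⟨hlo, hhi⟩ | ⟨hlo, hhi⟩ | ⟨hlo, hhi⟩ | ⟨hlo, hhi⟩ | ⟨hlo, hhi⟩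
  · rcases lt_or_ge (5 * r + 1) p with h₅ | h₅
    · apply h₅₇ 0 1 <;> first | decide | lia
    rcases lt_or_ge (7 * r + 1) (2 * p) with h₇ | h₇
    · apply h₃₇ 0 1 <;> first | decide | lia
    · apply h₃₅ 0 1 <;> first | decide | lia
  · rcases lt_or_ge (5 * r + 1) (2 * p) with h₅ | h₅
    · apply h₅₇ 1 2 <;> first | decide | lia
    · apply h₃₇ 1 2 <;> first | decide | lia
  · rcases lt_or_ge (5 * r + 1) (3 * p) with h₅ | h₅
    · apply h₃₅ 1 2 <;> first | decide | lia
    · apply h₃₇ 1 4 <;> first | decide | lia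
  · apply h₅₇ 3 4 <;> first | decide | lia
  · rcases lt_or_ge (5 * r + 1) (4 * p) with h₅ | h₅
    · apply h₃₅ 2 3 <;> first | decide | lia
    · apply h₃₇ 2 5 <;> first | decide | lia

lemma mem_goodPrimes_of_mem_Ioc {p m K : ℕ} (j : Fin 5) (hp : p.Prime)
    (hmem : (p : ℝ) ∈ Set.Ioc ((2 * m + 1) / (K + goodUpper j)) (2 * m / (K + goodLower j))) :
    p ∈ goodPrimes (halfWidths m) (14 * m + 1) := by
  obtain ⟨hlo, hhi⟩ := hmem
  have hlower : 0 < goodLower j := by fin_cases j <;> norm_num [goodLower]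
  have hupper : 0 < goodUpper j := by fin_cases j <;> norm_num [goodUpper]
  rw [div_lt_iff₀ (by positivity)] at hlo
  rw [le_div_iff₀ (by positivity)] at hhi
  have _hp₀ : (0 : ℝ) < p := by exact_mod_cast hp.pos
  have hle : K * p ≤ 2 * m := by
    have hle' : (K * p : ℝ) ≤ 2 * m := by nlinarith
    exact_mod_cast hle'
  obtain ⟨r, hr⟩ := Nat.exists_eq_add_of_le hle
  have hrR : (2 * m : ℝ) = K * p + r := by exact_mod_cast hr
  have hlo' : goodLower j * p ≤ r := by linarith
  have hhi' : r + 1 < goodUpper j * p := by linarith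
  refine mem_goodPrimes.mpr ⟨?_, hp, exists_mod_lt_mod_of_remainder hr ?_⟩
  · have hlower' : 1 / 6 ≤ goodLower j := by fin_cases j <;> norm_num [goodLower]
    have hp₆ : p ≤ 6 * r := by
      have hp₆' : (p : ℝ) ≤ 6 * r := by nlinarith
      exact_mod_cast hp₆'
    lia
  · fin_cases j <;> simp only [goodLower, goodUpper, one_div, Fin.isValue, Fin.zero_eta, Fin.mk_one,
      Fin.reduceFinMk, Matrix.cons_val, Matrix.cons_val_zero, Matrix.cons_val_one] at hlo' hhi'
    · exact .inl ⟨by rify; linarith, by rify; linarith⟩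
    · exact .inr (.inl ⟨by rify; linarith, by rify; linarith⟩)
    · exact .inr (.inr (.inl ⟨by rify; linarith, by rify; linarith⟩))
    · exact .inr (.inr (.inr (.inl ⟨by rify; linarith, by rify; linarith⟩)))
    · exact .inr (.inr (.inr (.inr ⟨by rify; linarith, by rify; linarith⟩)))

end GoodPrimes

section GoodPrimesAsymptotics

open Filter Set Topology

lemma theta_sub_theta_le_sum_log {l u : ℝ} {G : Finset ℕ}
    (hG : ∀ p : ℕ, p.Prime → (p : ℝ) ∈ Ioc l u → p ∈ G) :
    Chebyshev.theta u - Chebyshev.theta l ≤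
      ∑ p ∈ G.filter fun p : ℕ => (p : ℝ) ∈ Ioc l u, Real.log p := by
  classical
  have hle {p : ℕ} {x : ℝ} (hp : p.Prime) : p ≤ ⌊x⌋₊ ↔ (p : ℝ) ≤ x := Nat.le_floor_iff' hp.ne_zero
  rw [sub_le_iff_le_add', Chebyshev.theta, Chebyshev.theta, ← Finset.sum_union]
  · refine Finset.sum_le_sum_of_subset_of_nonneg (fun p hp => ?_)
      fun p _ _ => Real.log_natCast_nonneg p
    obtain ⟨⟨hpos, hpu⟩, hprime⟩ := by simpa using hp
    have hpu' := (hle hprime).mp hpu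
    rcases le_or_gt (p : ℝ) l with hpl | hpl
    · simp [hpos, hprime, (hle hprime).mpr hpl]
    · simp [hG p hprime ⟨hpl, hpu'⟩, hpl, hpu']
  · refine Finset.disjoint_left.mpr fun p hp hp' => ?_
    obtain ⟨⟨-, hpl⟩, hprime⟩ := by simpa using hp
    exact ((Finset.mem_filter.mp hp').2.1.trans_le ((hle hprime).mp hpl)).false

lemma sum_theta_sub_theta_le_sum_log {ι : Type*} {s : Finset ι} {l u : ι → ℝ} {G : Finset ℕ}
    (hdisj : (s : Set ι).PairwiseDisjoint fun i => Ioc (l i) (u i))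
    (hG : ∀ i ∈ s, ∀ p : ℕ, p.Prime → (p : ℝ) ∈ Ioc (l i) (u i) → p ∈ G) :
    ∑ i ∈ s, (Chebyshev.theta (u i) - Chebyshev.theta (l i)) ≤ ∑ p ∈ G, Real.log p := by
  classical
  let S (i : ι) : Finset ℕ := G.filter fun p : ℕ => (p : ℝ) ∈ Ioc (l i) (u i)
  have hdisj' : (s : Set ι).PairwiseDisjoint S := fun i hi j hj hij =>
    Finset.disjoint_left.mpr fun p hp hp' => Set.disjoint_left.mp (hdisj hi hj hij)
      (Finset.mem_filter.mp hp).2 (Finset.mem_filter.mp hp').2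
  calc ∑ i ∈ s, (Chebyshev.theta (u i) - Chebyshev.theta (l i))
      ≤ ∑ i ∈ s, ∑ p ∈ S i, Real.log p :=
        Finset.sum_le_sum fun i hi => theta_sub_theta_le_sum_log (hG i hi)
    _ = ∑ p ∈ s.biUnion S, Real.log p := (Finset.sum_biUnion hdisj').symm
    _ ≤ ∑ p ∈ G, Real.log p :=
        Finset.sum_le_sum_of_subset_of_nonneg
          (Finset.biUnion_subset.mpr fun i _ => Finset.filter_subset _ _)
          fun p _ _ => Real.log_natCast_nonneg p

lemma pairwiseDisjoint_Ioc_goodUpper_goodLower (m : ℕ) (s : Set (ℕ × Fin 5)) :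
    s.PairwiseDisjoint fun i =>
      Ioc ((2 * m + 1 : ℝ) / (i.1 + goodUpper i.2)) (2 * m / (i.1 + goodLower i.2)) := by
  have hpos (j : Fin 5) : 0 < goodLower j ∧ 0 < goodUpper j ∧ goodUpper j < 1 := by
    fin_cases j <;> norm_num [goodLower, goodUpper]
  have hstep {j j' : Fin 5} (h : j < j') : goodUpper j ≤ goodLower j' := by
    fin_cases j <;> fin_cases j' <;> first | simp at h; done | norm_num [goodLower, goodUpper]
  have hdisj {K K' : ℕ} {j j' : Fin 5} (h : (K : ℝ) + goodUpper j ≤ K' + goodLower j') :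
      Disjoint (Ioc ((2 * m + 1 : ℝ) / (K + goodUpper j)) (2 * m / (K + goodLower j)))
        (Ioc ((2 * m + 1 : ℝ) / (K' + goodUpper j')) (2 * m / (K' + goodLower j'))) := by
    have hupper := (hpos j).2.1
    have hle : 2 * m / (K' + goodLower j') ≤ (2 * m + 1 : ℝ) / (K + goodUpper j) :=
      div_le_div₀ (by positivity) (by linarith) (by positivity) h
    exact Set.disjoint_left.mpr fun x hx hx' => (hx.1.trans_le (hx'.2.trans hle)).false
  have hlt {K K' : ℕ} (j j' : Fin 5) (h : K < K') : (K : ℝ) + goodUpper j ≤ K' + goodLower j' := by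
    have hcast : (K : ℝ) + 1 ≤ K' := by exact_mod_cast h
    linarith [(hpos j).2.2, (hpos j').1]
  rintro ⟨K, j⟩ - ⟨K', j'⟩ - hne
  rcases lt_trichotomy K K' with hK | rfl | hK
  · exact hdisj (hlt j j' hK)
  · rcases lt_or_gt_of_ne (fun h => hne (by rw [h]) : j ≠ j') with hj | hj
    · exact hdisj (by linarith [hstep hj])
    · exact (hdisj (by linarith [hstep hj])).symm
  · exact (hdisj (hlt j' j hK)).symm

lemma sum_theta_sub_theta_le_sum_log_goodPrimes (m M : ℕ) :
    ∑ K ∈ Finset.range M, ∑ j, (Chebyshev.theta (2 * m / (K + goodLower j)) -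
      Chebyshev.theta ((2 * m + 1) / (K + goodUpper j))) ≤
        ∑ p ∈ goodPrimes (halfWidths m) (14 * m + 1), Real.log p := by
  rw [← Finset.sum_product']
  exact sum_theta_sub_theta_le_sum_log (pairwiseDisjoint_Ioc_goodUpper_goodLower m _)
    fun i _ p hp hmem => mem_goodPrimes_of_mem_Ioc i.2 hp hmem

lemma tendsto_comp_affine_div {f : ℝ → ℝ} (hf : Tendsto (fun x => f x / x) atTop (𝓝 1))
    {a : ℝ} (ha : 0 < a) (b : ℝ) :
    Tendsto (fun m : ℕ => f (a * m + b) / m) atTop (𝓝 a) := by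
  have haff : Tendsto (fun m : ℕ => a * m + b) atTop atTop :=
    tendsto_atTop_add_const_right _ _ (tendsto_natCast_atTop_atTop.const_mul_atTop ha)
  have hratio : Tendsto (fun m : ℕ => a + b / (m : ℝ)) atTop (𝓝 (a + 0)) :=
    tendsto_const_nhds.add (tendsto_const_div_atTop_nhds_zero_nat b)
  have hmul := (hf.comp haff).mul hratio
  rw [add_zero, one_mul] at hmul
  refine hmul.congr' ?_
  filter_upwards [haff.eventually_gt_atTop 0, eventually_gt_atTop 0] with m hpos hm
  have hm' : (m : ℝ) ≠ 0 := by exact_mod_cast hm.ne'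
  rw [Function.comp_apply]
  field_simp

/-- The limit as `m → ∞` of `1 / m` times the sum of `log p` over the good primes `p` for
`halfWidths m` with `⌊2 * m / p⌋ = K` that are supplied by `goodLower` and `goodUpper`. -/
noncomputable def goodDensity (K : ℕ) : ℝ := ∑ j, (2 / (K + goodLower j) - 2 / (K + goodUpper j))

lemma tendsto_sum_theta_sub_theta_div (K : ℕ) :
    Tendsto (fun m : ℕ => (∑ j, (Chebyshev.theta (2 * m / (K + goodLower j)) -
      Chebyshev.theta ((2 * m + 1) / (K + goodUpper j)))) / m) atTop (𝓝 (goodDensity K)) := by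
  have hpos (j : Fin 5) : 0 < goodLower j ∧ 0 < goodUpper j := by
    fin_cases j <;> norm_num [goodLower, goodUpper]
  simp_rw [Finset.sum_div, sub_div]
  refine tendsto_finsetSum _ fun j _ => ?_
  obtain ⟨hlower, hupper⟩ := hpos j
  have hl := tendsto_comp_affine_div tendsto_chebyshevTheta_div
    (a := 2 / (K + goodLower j)) (by positivity) 0
  have hu := tendsto_comp_affine_div tendsto_chebyshevTheta_div
    (a := 2 / (K + goodUpper j)) (by positivity) (1 / (K + goodUpper j))
  refine (hl.sub hu).congr fun m => ?_
  rw [add_zero, add_div, mul_div_right_comm, mul_div_right_comm]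

lemma eventually_log_reducedLcm_le_sub (M : ℕ) {ε : ℝ} (hε : 0 < ε) :
    ∀ᶠ m : ℕ in atTop, Real.log (reducedLcm (halfWidths m) (14 * m + 1)) ≤
      (14 - ∑ K ∈ Finset.range M, goodDensity K + ε) * m := by
  have hpsi := tendsto_comp_affine_div tendsto_chebyshevPsi_div (by norm_num : (0 : ℝ) < 14) 1
  have htheta := tendsto_finsetSum (Finset.range M) fun K _ => tendsto_sum_theta_sub_theta_div K
  filter_upwards [(hpsi.sub htheta).eventually_lt_const (lt_add_of_pos_right _ hε),
    eventually_gt_atTop 0] with m hlt hm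
  rw [← Finset.sum_div, ← sub_div, div_lt_iff₀ (by exact_mod_cast hm)] at hlt
  have hsum := sum_theta_sub_theta_le_sum_log_goodPrimes m M
  rw [log_reducedLcm]
  push_cast
  linarith

lemma goodDensity_eq (K : ℕ) : goodDensity K = 22 / ((6 * K + 1) * (7 * K + 3)) +
    6 / ((2 * K + 1) * (7 * K + 5)) + 6 / ((4 * K + 3) * (7 * K + 6)) := by
  have h₁ : 22 / ((6 * K + 1) * (7 * K + 3)) = 2 / (K + 1 / 6) - 2 / (K + 3 / 7 : ℝ) := by
    field_simp
    ring
  have h₂ : 6 / ((2 * K + 1) * (7 * K + 5)) = 2 / (K + 1 / 2) - 2 / (K + 5 / 7 : ℝ) := by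
    field_simp
    ring
  have h₃ : 6 / ((4 * K + 3) * (7 * K + 6)) = 2 / (K + 3 / 4) - 2 / (K + 6 / 7 : ℝ) := by
    field_simp
    ring
  simp only [goodDensity, goodLower, goodUpper, Fin.sum_univ_five, h₁, h₂, h₃, Matrix.cons_val]
  ring

-- The tail is compared with the telescoping series of `7 / 6 / (K + 3 / 500)`; the numerator is
-- forced by `goodDensity K ~ 7 / 6 / K ^ 2`.
lemma sub_le_goodDensity (j : ℕ) :
    7 / 6 / (j + 40 + 3 / 500) - 7 / 6 / ((j + 1 : ℕ) + 40 + 3 / 500) ≤ goodDensity (40 + j) := by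
  rw [goodDensity_eq]
  push_cast
  have ht : (0 : ℝ) ≤ j := Nat.cast_nonneg j
  generalize (j : ℝ) = t at *
  rw [div_sub_div _ _ (by positivity) (by positivity),
    div_add_div _ _ (by positivity) (by positivity),
    div_add_div _ _ (by positivity) (by positivity),
    div_le_div_iff₀ (by positivity) (by positivity), ← sub_nonneg]
  ring_nf
  positivity

lemma sub_le_sum_goodDensity_tail (L : ℕ) :
    7 / 6 / (40 + 3 / 500) - 7 / 6 / (L + 40 + 3 / 500) ≤
      ∑ j ∈ Finset.range L, goodDensity (40 + j) := by
  have htel := Finset.sum_range_sub' (fun j : ℕ => (7 / 6 / (j + 40 + 3 / 500) : ℝ)) L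
  have hle := Finset.sum_le_sum fun j (_ : j ∈ Finset.range L) => sub_le_goodDensity j
  rw [htel] at hle
  simpa using hle

lemma sub_le_sum_goodDensity_range_forty :
    9.99020411 - 7 / 6 / (40 + 3 / 500) ≤ ∑ K ∈ Finset.range 40, goodDensity K := by
  simp only [goodDensity_eq]
  norm_num [Finset.sum_range_succ]

theorem eventually_log_reducedLcm_le {ε : ℝ} (hε : 0 < ε) : ∀ᶠ m : ℕ in atTop,
    Real.log (reducedLcm (halfWidths m) (14 * m + 1)) ≤ (4.009796 + ε) * m := by
  obtain ⟨L, hL⟩ := exists_nat_ge (100000000 : ℝ)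
  have hsum : 9.990204 ≤ ∑ K ∈ Finset.range (40 + L), goodDensity K := by
    have hrest : 7 / 6 / ((L : ℝ) + 40 + 3 / 500) ≤ 0.0000001 := by
      rw [div_le_iff₀ (by positivity)]
      linarith
    rw [Finset.sum_range_add]
    linarith [sub_le_sum_goodDensity_tail L, sub_le_sum_goodDensity_range_forty]
  filter_upwards [eventually_log_reducedLcm_le_sub (40 + L) hε] with m hm
  refine hm.trans ?_
  gcongr
  linarith

end GoodPrimesAsymptotics

/-! ### Growth of the rotated polynomials -/

section Growth

open Finset Polynomial Real
open scoped Nat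

/-- An antiderivative of `t ↦ log (y ^ 2 + t ^ 2)`, used to estimate `∏ j, (y ^ 2 + j ^ 2)`. -/
noncomputable def logSqPrimitive (y t : ℝ) : ℝ :=
  t * log (y ^ 2 + t ^ 2) - 2 * t + 2 * y * arctan (t / y)

/-- The main term of `log ((rotatedBinomial h).eval y)`, for real `h`. -/
noncomputable def growthExponent (h y : ℝ) : ℝ :=
  h * log (y ^ 2 + h ^ 2) + 2 * y * arctan (h / y) - 2 * h * log (2 * h)

variable {y : ℝ}

lemma hasDerivAt_logSqPrimitive (hy : 0 < y) (t : ℝ) :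
    HasDerivAt (logSqPrimitive y) (log (y ^ 2 + t ^ 2)) t := by
  have hpos : 0 < y ^ 2 + t ^ 2 := by positivity
  have hsq : HasDerivAt (fun t : ℝ => y ^ 2 + t ^ 2) (2 * t) t := by
    simpa using (hasDerivAt_pow 2 t).const_add (y ^ 2)
  have harctan := ((hasDerivAt_id t).div_const y).arctan.const_mul (2 * y)
  have hadd := (((hasDerivAt_id t).mul (hsq.log hpos.ne')).sub
    ((hasDerivAt_id t).const_mul 2)).add harctan
  refine hadd.congr_deriv ?_
  simp only [id]
  field_simp
  ring

lemma exists_log_eq_logSqPrimitive_sub (hy : 0 < y) (t : ℝ) :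
    ∃ c ∈ Set.Ioo t (t + 1),
      log (y ^ 2 + c ^ 2) = logSqPrimitive y (t + 1) - logSqPrimitive y t := by
  obtain ⟨c, hc, hslope⟩ := exists_hasDerivAt_eq_slope (logSqPrimitive y) _ (lt_add_one t)
    (fun x _ => (hasDerivAt_logSqPrimitive hy x).continuousAt.continuousWithinAt)
    fun x _ => hasDerivAt_logSqPrimitive hy x
  exact ⟨c, hc, by rwa [add_sub_cancel_left, div_one] at hslope⟩

lemma sq_add_sq_le_exp_logSqPrimitive_sub (hy : 0 < y) {t : ℝ} (ht : 0 ≤ t) :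
    y ^ 2 + t ^ 2 ≤ exp (logSqPrimitive y (t + 1) - logSqPrimitive y t) := by
  obtain ⟨c, ⟨htc, -⟩, hc⟩ := exists_log_eq_logSqPrimitive_sub hy t
  rw [← hc, exp_log (by positivity)]
  gcongr

lemma exp_logSqPrimitive_sub_le (hy : 0 < y) {t : ℝ} (ht : 0 ≤ t) :
    exp (logSqPrimitive y (t + 1) - logSqPrimitive y t) ≤ y ^ 2 + (t + 1) ^ 2 := by
  obtain ⟨c, ⟨htc, hct⟩, hc⟩ := exists_log_eq_logSqPrimitive_sub hy t
  rw [← hc, exp_log (by positivity)]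
  have hc₀ : 0 ≤ c := ht.trans htc.le
  gcongr

lemma exp_logSqPrimitive_le_prod (hy : 0 < y) (h : ℕ) :
    exp (logSqPrimitive y h) ≤ ∏ j ∈ range h, (y ^ 2 + (j + 1 : ℝ) ^ 2) := by
  have htel := Finset.sum_range_sub (fun j : ℕ => logSqPrimitive y j) h
  have hzero : logSqPrimitive y 0 = 0 := by simp [logSqPrimitive]
  rw [Nat.cast_zero, hzero, sub_zero] at htel
  rw [← htel, exp_sum]
  push_cast
  exact Finset.prod_le_prod (fun j _ => (exp_pos _).le)
    fun j _ => exp_logSqPrimitive_sub_le hy j.cast_nonneg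

lemma prod_le_exp_logSqPrimitive_sub (hy : 0 < y) (h : ℕ) :
    ∏ j ∈ range h, (y ^ 2 + (j + 1 : ℝ) ^ 2) ≤
      exp (logSqPrimitive y (h + 1) - logSqPrimitive y 1) := by
  have htel := Finset.sum_range_sub (fun j : ℕ => logSqPrimitive y (j + 1)) h
  rw [Nat.cast_zero, zero_add] at htel
  rw [← htel, exp_sum]
  push_cast
  exact Finset.prod_le_prod (fun j _ => by positivity)
    fun j _ => sq_add_sq_le_exp_logSqPrimitive_sub hy (by positivity)

lemma neg_two_le_logSqPrimitive_one (hy : 0 < y) : -2 ≤ logSqPrimitive y 1 := by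
  have hlog : 0 ≤ log (y ^ 2 + 1 ^ 2) := log_nonneg (by nlinarith)
  have harctan : 0 ≤ 2 * y * arctan (1 / y) :=
    mul_nonneg (by positivity) (arctan_nonneg.mpr (by positivity))
  rw [logSqPrimitive, one_mul, mul_one, sub_add_eq_add_sub, le_sub_iff_add_le, neg_add_cancel]
  exact add_nonneg hlog harctan

lemma prod_le_mul_exp_logSqPrimitive (hy : 0 < y) (h : ℕ) :
    ∏ j ∈ range h, (y ^ 2 + (j + 1 : ℝ) ^ 2) ≤
      exp 2 * (y ^ 2 + (h + 1) ^ 2) * exp (logSqPrimitive y h) := by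
  calc ∏ j ∈ range h, (y ^ 2 + (j + 1 : ℝ) ^ 2)
      ≤ exp (logSqPrimitive y (h + 1) - logSqPrimitive y 1) := prod_le_exp_logSqPrimitive_sub hy h
    _ ≤ exp (2 + (logSqPrimitive y (h + 1) - logSqPrimitive y h) + logSqPrimitive y h) :=
        exp_le_exp.mpr (by linarith [neg_two_le_logSqPrimitive_one hy])
    _ ≤ exp 2 * (y ^ 2 + (h + 1) ^ 2) * exp (logSqPrimitive y h) := by
        rw [exp_add, exp_add]
        gcongr
        exact exp_logSqPrimitive_sub_le hy h.cast_nonneg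

lemma exp_mul_log_sub_le_factorial {n : ℕ} (hn : n ≠ 0) : exp (n * log n - n) ≤ n ! := by
  have hlog : 0 ≤ log n := log_natCast_nonneg n
  have hlog' : 0 ≤ log (2 * π) := log_nonneg (by linarith [two_le_pi])
  rw [← le_log_iff_exp_le (by positivity)]
  linarith [Stirling.le_log_factorial_stirling hn]

lemma factorial_le_mul_exp {n : ℕ} (hn : n ≠ 0) : (n ! : ℝ) ≤ n * exp (n * log n - n + 1) := by
  obtain ⟨k, rfl⟩ := Nat.exists_eq_succ_of_ne_zero hn
  have hle : Stirling.stirlingSeq (k + 1) ≤ exp 1 / √2 :=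
    (Stirling.stirlingSeq'_antitone k.zero_le).trans_eq Stirling.stirlingSeq_one
  set n := k + 1
  have hn₁ : (1 : ℝ) ≤ n := by exact_mod_cast Nat.one_le_iff_ne_zero.mpr hn
  have hpow : ((n : ℝ) / exp 1) ^ n = exp (n * log n - n) := by
    rw [← exp_log (show 0 < (n : ℝ) / exp 1 by positivity), ← exp_nat_mul,
      log_div (by positivity) (exp_pos 1).ne', log_exp]
    ring_nf
  rw [Stirling.stirlingSeq, div_le_div_iff₀ (by positivity) (by positivity), hpow,
    sqrt_mul zero_le_two] at hle
  have hle' : (n ! : ℝ) ≤ √n * exp (n * log n - n + 1) := by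
    refine le_of_mul_le_mul_right ?_ (sqrt_pos.mpr zero_lt_two)
    rw [exp_add]
    linarith
  exact hle'.trans (mul_le_mul_of_nonneg_right
    (sqrt_le_iff.mpr ⟨by linarith, by nlinarith⟩) (exp_pos _).le)

lemma growthExponent_eq_logSqPrimitive_sub (h : ℕ) : growthExponent h y =
    logSqPrimitive y h - (((2 * h : ℕ) : ℝ) * log (2 * h : ℕ) - (2 * h : ℕ)) := by
  rw [growthExponent, logSqPrimitive]
  push_cast
  ring

lemma eval_rotatedBinomial_nonneg (h : ℕ) (hy : 0 ≤ y) : 0 ≤ (rotatedBinomial h).eval y := by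
  rw [eval_rotatedBinomial]
  positivity

lemma eval_rotatedBinomial_le {h : ℕ} (hh : h ≠ 0) (hy : 0 < y) : (rotatedBinomial h).eval y ≤
    exp 2 * (y * (y ^ 2 + (h + 1) ^ 2)) * exp (growthExponent h y) := by
  have hfact : exp ((2 * h : ℕ) * log (2 * h : ℕ) - (2 * h : ℕ)) ≤ ((2 * h + 1)! : ℝ) :=
    (exp_mul_log_sub_le_factorial (by positivity)).trans
      (by exact_mod_cast Nat.factorial_le (Nat.le_succ _))
  calc (rotatedBinomial h).eval y
      ≤ y * (exp 2 * (y ^ 2 + (h + 1) ^ 2) * exp (logSqPrimitive y h)) /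
          exp ((2 * h : ℕ) * log (2 * h : ℕ) - (2 * h : ℕ)) := by
        rw [eval_rotatedBinomial]
        gcongr
        exact prod_le_mul_exp_logSqPrimitive hy h
    _ = exp 2 * (y * (y ^ 2 + (h + 1) ^ 2)) * exp (growthExponent h y) := by
        rw [growthExponent_eq_logSqPrimitive_sub, exp_sub (logSqPrimitive y h)]
        ring

lemma le_eval_rotatedBinomial {h : ℕ} (hh : h ≠ 0) (hy : 1 ≤ y) :
    exp (growthExponent h y) / ((2 * h + 1) * (2 * h * exp 1)) ≤ (rotatedBinomial h).eval y := by
  have hfact : ((2 * h + 1)! : ℝ) ≤ (2 * h + 1) *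
      (2 * h * exp 1 * exp ((2 * h : ℕ) * log (2 * h : ℕ) - (2 * h : ℕ))) := by
    have hle := factorial_le_mul_exp (n := 2 * h) (by positivity)
    rw [exp_add] at hle
    rw [Nat.factorial_succ, Nat.cast_mul]
    push_cast at hle ⊢
    gcongr
    linarith
  calc exp (growthExponent h y) / ((2 * h + 1) * (2 * h * exp 1))
      = 1 * exp (logSqPrimitive y h) / ((2 * h + 1) *
          (2 * h * exp 1 * exp ((2 * h : ℕ) * log (2 * h : ℕ) - (2 * h : ℕ)))) := by
        rw [growthExponent_eq_logSqPrimitive_sub, exp_sub]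
        field_simp
    _ ≤ (rotatedBinomial h).eval y := by
        rw [eval_rotatedBinomial]
        gcongr
        exact exp_logSqPrimitive_le_prod (by linarith) h

lemma hasDerivAt_growthExponent (h : ℝ) (hy : 0 < y) :
    HasDerivAt (growthExponent h) (2 * arctan (h / y)) y := by
  have hpos : 0 < y ^ 2 + h ^ 2 := by positivity
  have hsq : HasDerivAt (fun y : ℝ => y ^ 2 + h ^ 2) (2 * y) y := by
    simpa using (hasDerivAt_pow 2 y).add_const (h ^ 2)
  have hdiv : HasDerivAt (fun y : ℝ => h / y) (-h / y ^ 2) y :=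
    ((hasDerivAt_inv hy.ne').const_mul h).congr_deriv (by ring)
  have hadd := (((hsq.log hpos.ne').const_mul h).add
    (((hasDerivAt_id y).const_mul 2).mul hdiv.arctan)).sub_const (2 * h * log (2 * h))
  refine hadd.congr_deriv ?_
  simp only [id]
  field_simp
  ring

lemma exists_growthExponent_sub_eq (h : ℝ) {a b : ℝ} (ha : 0 < a) (hab : a < b) :
    ∃ c ∈ Set.Ioo a b, growthExponent h b - growthExponent h a = 2 * arctan (h / c) * (b - a) := by
  obtain ⟨c, hc, hslope⟩ := exists_hasDerivAt_eq_slope (growthExponent h) _ hab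
    (fun x hx => (hasDerivAt_growthExponent h
      (ha.trans_le hx.1)).continuousAt.continuousWithinAt)
    fun x hx => hasDerivAt_growthExponent h (ha.trans hx.1)
  exact ⟨c, hc, by rw [hslope, div_mul_cancel₀ _ (sub_pos.mpr hab).ne']⟩

lemma growthExponent_le_tangent {h y₀ : ℝ} (hh : 0 ≤ h) (hy₀ : 0 < y₀) (hy : 0 < y) :
    growthExponent h y ≤ growthExponent h y₀ + 2 * arctan (h / y₀) * (y - y₀) := by
  rcases lt_trichotomy y y₀ with hlt | rfl | hlt
  · obtain ⟨c, hc, hsub⟩ := exists_growthExponent_sub_eq h hy hlt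
    have harctan : arctan (h / y₀) ≤ arctan (h / c) := arctan_mono
      (div_le_div_of_nonneg_left hh (hy.trans hc.1) hc.2.le)
    nlinarith
  · simp
  · obtain ⟨c, hc, hsub⟩ := exists_growthExponent_sub_eq h hy₀ hlt
    have harctan : arctan (h / c) ≤ arctan (h / y₀) := arctan_mono
      (div_le_div_of_nonneg_left hh hy₀ hc.1.le)
    nlinarith

lemma monotoneOn_growthExponent {h : ℝ} (hh : 0 ≤ h) :
    MonotoneOn (growthExponent h) (Set.Ioi 0) := by
  intro a ha b hb hab
  have htangent := growthExponent_le_tangent hh hb ha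
  have harctan : 0 ≤ arctan (h / b) := arctan_nonneg.mpr (div_nonneg hh (Set.mem_Ioi.mp hb).le)
  nlinarith

variable {ι : Type*} [Fintype ι]

/-- The slope at `y = η * m` of the logarithm of the main term of
`∏ i, rotatedBinomial (c i * m)`; it does not depend on `m`. -/
noncomputable def tangentSlope (c : ι → ℕ) (η : ℝ) : ℝ := ∑ i, 2 * arctan (c i / η)

/-- The value at `y = 0`, divided by `m`, of the tangent whose slope is `tangentSlope c η`. -/
noncomputable def tangentIntercept (c : ι → ℕ) (η : ℝ) : ℝ :=
  ∑ i, c i * log ((η ^ 2 + c i ^ 2) / (4 * c i ^ 2))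

lemma growthExponent_mul_mul {c η m : ℝ} (hc : 0 < c) (hη : 0 < η) (hm : 0 < m) :
    growthExponent (c * m) (η * m) =
      m * (c * log ((η ^ 2 + c ^ 2) / (4 * c ^ 2))) + 2 * arctan (c / η) * (η * m) := by
  rw [growthExponent, mul_div_mul_right _ _ hm.ne',
    show (η * m) ^ 2 + (c * m) ^ 2 = m ^ 2 * (η ^ 2 + c ^ 2) by ring,
    log_mul (by positivity) (by positivity), log_div (by positivity) (by positivity),
    show 2 * (c * m) = 2 * c * m by ring, log_mul (by positivity) hm.ne',
    show 4 * c ^ 2 = (2 * c) ^ 2 by ring, log_pow, log_pow]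
  push_cast
  ring

variable {c : ι → ℕ} {η : ℝ} {m : ℕ}

lemma eval_prod_rotatedBinomial_nonneg (h : ι → ℕ) (hy : 0 ≤ y) :
    0 ≤ (∏ i, rotatedBinomial (h i)).eval y := by
  rw [eval_prod]
  exact Finset.prod_nonneg fun i _ => eval_rotatedBinomial_nonneg _ hy

lemma exp_tangent_eq_prod : exp (m * tangentIntercept c η + tangentSlope c η * y) =
    ∏ i, exp (m * (c i * log ((η ^ 2 + c i ^ 2) / (4 * c i ^ 2))) + 2 * arctan (c i / η) * y) := by
  rw [← exp_sum, Finset.sum_add_distrib, tangentIntercept, tangentSlope, Finset.mul_sum,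
    Finset.sum_mul]

lemma eval_prod_rotatedBinomial_le (hc : ∀ i, c i ≠ 0) (hη : 0 < η) (hm : m ≠ 0) (hy : 0 < y) :
    (∏ i, rotatedBinomial (c i * m)).eval y ≤
      (∏ i, exp 2 * (c i * m + 1) ^ 2) * (y * (y ^ 2 + 1)) ^ Fintype.card ι *
        exp (m * tangentIntercept c η + tangentSlope c η * y) := by
  rw [exp_tangent_eq_prod, eval_prod, ← Finset.card_univ, ← Finset.prod_const,
    ← Finset.prod_mul_distrib, ← Finset.prod_mul_distrib]
  refine Finset.prod_le_prod (fun i _ => eval_rotatedBinomial_nonneg _ hy.le) fun i _ => ?_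
  have hci : 0 < c i := Nat.pos_of_ne_zero (hc i)
  have hm₀ : (0 : ℝ) < m := by positivity
  have htangent : growthExponent (c i * m) y ≤
      m * (c i * log ((η ^ 2 + c i ^ 2) / (4 * c i ^ 2))) + 2 * arctan (c i / η) * y := by
    have hle := growthExponent_le_tangent (h := c i * m) (y₀ := η * m) (by positivity)
      (by positivity) hy
    rw [growthExponent_mul_mul (by positivity) hη hm₀, mul_div_mul_right _ _ hm₀.ne'] at hle
    linarith
  have hsq : y ^ 2 + (c i * m + 1 : ℝ) ^ 2 ≤ (c i * m + 1) ^ 2 * (y ^ 2 + 1) := by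
    have hone : (1 : ℝ) ≤ (c i * m + 1) ^ 2 :=
      one_le_pow₀ (le_add_of_nonneg_left (by positivity))
    nlinarith [sq_nonneg y]
  calc (rotatedBinomial (c i * m)).eval y
      ≤ exp 2 * (y * (y ^ 2 + (c i * m + 1) ^ 2)) * exp (growthExponent (c i * m) y) := by
        simpa using eval_rotatedBinomial_le (h := c i * m) (by positivity) hy
    _ ≤ exp 2 * (y * ((c i * m + 1) ^ 2 * (y ^ 2 + 1))) *
          exp (m * (c i * log ((η ^ 2 + c i ^ 2) / (4 * c i ^ 2))) + 2 * arctan (c i / η) * y) := by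
        gcongr
    _ = _ := by ring

lemma le_eval_prod_rotatedBinomial (hc : ∀ i, c i ≠ 0) (hη : 0 < η) (hm : m ≠ 0) (hy : 1 ≤ y)
    (hηy : η * m ≤ y) :
    exp (m * tangentIntercept c η + tangentSlope c η * (η * m)) /
      (∏ i, (2 * (c i * m) + 1) * (2 * (c i * m) * exp 1)) ≤
        (∏ i, rotatedBinomial (c i * m)).eval y := by
  rw [exp_tangent_eq_prod, eval_prod, ← Finset.prod_div_distrib]
  refine Finset.prod_le_prod (fun i _ => by positivity) fun i _ => ?_
  have hci : 0 < c i := Nat.pos_of_ne_zero (hc i)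
  have hm₀ : (0 : ℝ) < m := by positivity
  rw [← growthExponent_mul_mul (by positivity) hη hm₀]
  calc exp (growthExponent (c i * m) (η * m)) /
        ((2 * (c i * m) + 1) * (2 * (c i * m) * exp 1))
      ≤ exp (growthExponent (c i * m) y) / ((2 * (c i * m) + 1) * (2 * (c i * m) * exp 1)) := by
        gcongr
        exact monotoneOn_growthExponent (by positivity) (Set.mem_Ioi.mpr (by positivity))
          (Set.mem_Ioi.mpr (by linarith)) hηy
    _ ≤ (rotatedBinomial (c i * m)).eval y := by
        simpa using le_eval_rotatedBinomial (h := c i * m) (by positivity) hy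

end Growth

/-! ### Growth of the integrals -/

section IntegralGrowth

open Filter Topology MeasureTheory Set Polynomial Real

lemma eventually_eval_natCast_le_exp (Q : ℝ[X]) {δ : ℝ} (hδ : 0 < δ) :
    ∀ᶠ m : ℕ in atTop, Q.eval (m : ℝ) ≤ exp (δ * m) := by
  have hlim := (tendsto_div_exp_atTop (Q.comp (C δ⁻¹ * X))).comp
    ((tendsto_natCast_atTop_atTop (R := ℝ)).const_mul_atTop hδ)
  filter_upwards [hlim.eventually_le_const one_pos] with m hm
  simpa [div_le_one₀ (exp_pos _), hδ.ne'] using hm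

lemma isExpDecayKernel_one_add_one_div_sq_mul_exp_neg (μ : ℝ) :
    IsExpDecayKernel (fun y => (1 + 1 / y) ^ 2 * exp (-μ * y)) μ where
  continuousOn := ContinuousOn.mul (ContinuousOn.pow (continuousOn_const.add
    (continuousOn_const.div continuousOn_id fun _ hy => ne_of_gt hy)) 2) (by fun_prop)
  nonneg y _ := by positivity
  le_exp := ⟨1, one_pos, fun y _ => by rw [one_mul]⟩
  exp_le := by
    refine ⟨1, one_pos, fun y hy => ?_⟩
    gcongr
    exact one_le_pow₀ (le_add_of_nonneg_right (by positivity))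

variable {ι : Type*} [Fintype ι] {c : ι → ℕ} {η : ℝ} {K : ℝ → ℝ} {μ : ℝ}

lemma le_eval_prod_rotatedBinomial_mul (hμ : 0 ≤ μ) (hc : ∀ i, c i ≠ 0) (hη : 0 < η)
    (hμ' : μ ≤ tangentSlope c η) {b : ℝ} (hb : 0 ≤ b)
    (hbK : ∀ y, 1 ≤ y → b * exp (-μ * y) ≤ K y) {m : ℕ} (hm : m ≠ 0) {y : ℝ}
    (hy : y ∈ Ioc (η * m + 1) (η * m + 2)) : b * exp (-2 * μ) * exp (m * tangentIntercept c η) /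
      (∏ i, (2 * (c i * m) + 1) * (2 * (c i * m) * exp 1)) ≤
        (∏ i, rotatedBinomial (c i * m)).eval y * K y := by
  obtain ⟨hy₁, hy₂⟩ := hy
  have hηm : 0 ≤ η * m := by positivity
  have hy₀ : 1 ≤ y := by linarith
  set P := ∏ i, ((2 * (c i * m) + 1) * (2 * (c i * m) * exp 1) : ℝ)
  calc b * exp (-2 * μ) * exp (m * tangentIntercept c η) / P
      = exp (m * tangentIntercept c η) / P * (b * exp (-2 * μ)) := by ring
    _ ≤ exp (m * tangentIntercept c η + (tangentSlope c η - μ) * (η * m)) / P *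
          (b * exp (-2 * μ)) := by
        gcongr
        exact le_add_of_nonneg_right (mul_nonneg (sub_nonneg.mpr hμ') hηm)
    _ = exp (m * tangentIntercept c η + tangentSlope c η * (η * m)) / P *
          (b * exp (-μ * (η * m + 2))) := by
        have hexp : exp (m * tangentIntercept c η + (tangentSlope c η - μ) * (η * m)) *
            exp (-2 * μ) = exp (m * tangentIntercept c η + tangentSlope c η * (η * m)) *
              exp (-μ * (η * m + 2)) := by
          rw [← exp_add, ← exp_add]
          ring_nf
        rw [div_mul_eq_mul_div, div_mul_eq_mul_div, mul_left_comm, hexp, mul_left_comm]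
    _ ≤ (∏ i, rotatedBinomial (c i * m)).eval y * (b * exp (-μ * y)) := by
        have hexp : exp (-μ * (η * m + 2)) ≤ exp (-μ * y) := by
          rw [exp_le_exp, neg_mul, neg_mul, neg_le_neg_iff]
          gcongr
        exact mul_le_mul (le_eval_prod_rotatedBinomial hc hη hm hy₀ (by linarith)) (by gcongr)
          (by positivity) (eval_prod_rotatedBinomial_nonneg _ (by linarith))
    _ ≤ (∏ i, rotatedBinomial (c i * m)).eval y * K y := by
        gcongr
        · exact eval_prod_rotatedBinomial_nonneg _ (by linarith)
        · exact hbK y hy₀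

namespace IsExpDecayKernel

lemma exists_integral_le (hK : IsExpDecayKernel K μ) (hι : 2 ≤ Fintype.card ι)
    (hc : ∀ i, c i ≠ 0) (hη : 0 < η) (hμ : tangentSlope c η < μ) :
    ∃ J, ∀ m : ℕ, m ≠ 0 → ∫ y in Ioi 0, (∏ i, rotatedBinomial (c i * m)).eval y * K y ≤
      J * (∏ i, exp 2 * (c i * m + 1) ^ 2) * exp (m * tangentIntercept c η) := by
  obtain ⟨C, -, hC⟩ := hK.le_exp
  set ν := μ - tangentSlope c η with hν
  set k := Fintype.card ι
  set dom : ℝ → ℝ := fun y => ((X * (X ^ 2 + 1)) ^ k : ℝ[X]).eval y *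
    ((1 + 1 / y) ^ 2 * exp (-ν * y)) with hdom
  have hdom_int : IntegrableOn dom (Ioi 0) :=
    (isExpDecayKernel_one_add_one_div_sq_mul_exp_neg ν).integrableOn_eval_mul (sub_pos.mpr hμ)
      ((pow_dvd_pow X hι).trans (pow_dvd_pow_of_dvd (dvd_mul_right _ _) k))
  refine ⟨C * ∫ y in Ioi 0, dom y, fun m hm => ?_⟩
  calc ∫ y in Ioi 0, (∏ i, rotatedBinomial (c i * m)).eval y * K y
      ≤ ∫ y in Ioi 0, C * (∏ i, exp 2 * (c i * m + 1) ^ 2) * exp (m * tangentIntercept c η) *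
          dom y := by
        refine integral_mono_of_nonneg ?_ (hdom_int.const_mul _) ?_
        · filter_upwards [ae_restrict_mem measurableSet_Ioi] with y (hy : 0 < y)
          exact mul_nonneg (eval_prod_rotatedBinomial_nonneg _ hy.le) (hK.nonneg y hy)
        filter_upwards [ae_restrict_mem measurableSet_Ioi] with y (hy : 0 < y)
        calc (∏ i, rotatedBinomial (c i * m)).eval y * K y
            ≤ ((∏ i, exp 2 * (c i * m + 1) ^ 2) * (y * (y ^ 2 + 1)) ^ k *
                exp (m * tangentIntercept c η + tangentSlope c η * y)) *
              (C * (1 + 1 / y) ^ 2 * exp (-μ * y)) :=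
              mul_le_mul (eval_prod_rotatedBinomial_le hc hη hm hy) (hC y hy) (hK.nonneg y hy)
                (by positivity)
          _ = _ := by
              have hexp : exp (tangentSlope c η * y) * exp (-μ * y) = exp (-ν * y) := by
                rw [← exp_add, hν]
                ring_nf
              simp only [hdom, eval_pow, eval_mul, eval_X, eval_add, eval_one, exp_add, ← hexp]
              ring
    _ = _ := by
        rw [integral_const_mul]
        ring

theorem eventually_mul_integral_le (hK : IsExpDecayKernel K μ) (hι : 2 ≤ Fintype.card ι)
    (hc : ∀ i, c i ≠ 0) (hη : 0 < η) (hμ : tangentSlope c η < μ) {A : ℝ} (hA : 0 ≤ A) {δ : ℝ}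
    (hδ : 0 < δ) :
    ∀ᶠ m : ℕ in atTop, A * ∫ y in Ioi 0, (∏ i, rotatedBinomial (c i * m)).eval y * K y ≤
      exp ((tangentIntercept c η + δ) * m) := by
  obtain ⟨J, hJ⟩ := hK.exists_integral_le hι hc hη hμ
  filter_upwards [eventually_ne_atTop 0, eventually_eval_natCast_le_exp
    (C (A * J) * ∏ i, C (exp 2) * (C (c i : ℝ) * X + 1) ^ 2) hδ] with m hm hpoly
  simp only [eval_mul, eval_C, eval_prod, eval_pow, eval_add, eval_X, eval_one] at hpoly
  calc A * ∫ y in Ioi 0, (∏ i, rotatedBinomial (c i * m)).eval y * K y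
      ≤ A * (J * (∏ i, exp 2 * (c i * m + 1) ^ 2) * exp (m * tangentIntercept c η)) := by
        gcongr
        exact hJ m hm
    _ = A * J * (∏ i, exp 2 * (c i * m + 1) ^ 2) * exp (m * tangentIntercept c η) := by ring
    _ ≤ exp (δ * m) * exp (m * tangentIntercept c η) := by gcongr
    _ = _ := by
        rw [← exp_add]
        ring_nf

lemma exists_le_integral (hK : IsExpDecayKernel K μ) (hμ : 0 < μ) (hι : 2 ≤ Fintype.card ι)
    (hc : ∀ i, c i ≠ 0) (hη : 0 < η) (hμ' : μ ≤ tangentSlope c η) :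
    ∃ B, 0 < B ∧ ∀ m : ℕ, m ≠ 0 → B * exp (m * tangentIntercept c η) /
      (∏ i, (2 * (c i * m) + 1) * (2 * (c i * m) * exp 1)) ≤
        ∫ y in Ioi 0, (∏ i, rotatedBinomial (c i * m)).eval y * K y := by
  obtain ⟨b, hb, hbK⟩ := hK.exp_le
  refine ⟨b * exp (-2 * μ), by positivity, fun m hm => ?_⟩
  set T := ∏ i, rotatedBinomial (c i * m)
  set P := ∏ i, ((2 * (c i * m) + 1) * (2 * (c i * m) * exp 1) : ℝ)
  have hηm : 0 ≤ η * m := by positivity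
  have hsub : Ioc (η * m + 1) (η * m + 2) ⊆ Ioi 0 := fun y hy => by
    have hy₁ := hy.1
    rw [mem_Ioi]
    linarith
  have hint := hK.integrableOn_eval_mul hμ (X_sq_dvd_prod_rotatedBinomial hι fun i => c i * m)
  calc b * exp (-2 * μ) * exp (m * tangentIntercept c η) / P
      = ∫ _y in Ioc (η * m + 1) (η * m + 2),
          b * exp (-2 * μ) * exp (m * tangentIntercept c η) / P := by
        simp [add_sub_add_left_eq_sub, show (2 : ℝ) - 1 = 1 by norm_num]
    _ ≤ ∫ y in Ioc (η * m + 1) (η * m + 2), T.eval y * K y :=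
        setIntegral_mono_on (integrableOn_const (by simp)) (hint.mono_set hsub)
          measurableSet_Ioc fun y hy =>
            le_eval_prod_rotatedBinomial_mul hμ.le hc hη hμ' hb.le hbK hm hy
    _ ≤ ∫ y in Ioi 0, T.eval y * K y := by
        refine setIntegral_mono_set hint ?_ hsub.eventuallyLE
        filter_upwards [ae_restrict_mem measurableSet_Ioi] with y (hy : 0 < y)
        exact mul_nonneg (eval_prod_rotatedBinomial_nonneg _ hy.le) (hK.nonneg y hy)

theorem eventually_le_integral (hK : IsExpDecayKernel K μ) (hμ : 0 < μ)
    (hι : 2 ≤ Fintype.card ι) (hc : ∀ i, c i ≠ 0) (hη : 0 < η) (hμ' : μ ≤ tangentSlope c η)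
    (A : ℝ) {δ : ℝ} (hδ : 0 < δ) :
    ∀ᶠ m : ℕ in atTop, A * exp ((tangentIntercept c η - δ) * m) ≤
      ∫ y in Ioi 0, (∏ i, rotatedBinomial (c i * m)).eval y * K y := by
  obtain ⟨B, hB, hle⟩ := hK.exists_le_integral hμ hι hc hη hμ'
  filter_upwards [eventually_ne_atTop 0, eventually_eval_natCast_le_exp (C (A / B) *
    ∏ i, (C 2 * (C (c i : ℝ) * X) + 1) * (C 2 * (C (c i : ℝ) * X) * C (exp 1))) hδ] with m hm hpoly
  simp only [eval_mul, eval_C, eval_prod, eval_add, eval_X, eval_one] at hpoly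
  set P := ∏ i, ((2 * (c i * m) + 1) * (2 * (c i * m) * exp 1) : ℝ)
  have hP : 0 < P := Finset.prod_pos fun i _ => by
    have := Nat.pos_of_ne_zero (hc i)
    positivity
  refine le_trans ?_ (hle m hm)
  rw [le_div_iff₀ hP]
  calc A * exp ((tangentIntercept c η - δ) * m) * P
      = B * exp ((tangentIntercept c η - δ) * m) * (A / B * P) := by
        field_simp
    _ ≤ B * exp ((tangentIntercept c η - δ) * m) * exp (δ * m) := by gcongr
    _ = B * exp (m * tangentIntercept c η) := by
        rw [mul_assoc, ← exp_add]
        ring_nf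

end IsExpDecayKernel

end IntegralGrowth

/-! ### Numerical bounds at the saddle points -/

section Numerics

open Real Finset

lemma abs_log_sub_mul_log_two_add_sum_le {v : ℝ} (k : ℤ) (n : ℕ) (hv : |1 - v / 2 ^ k| < 1) :
    |log v - k * log 2 + ∑ i ∈ range n, (1 - v / 2 ^ k) ^ (i + 1) / (i + 1)| ≤
      |1 - v / 2 ^ k| ^ (n + 1) / (1 - |1 - v / 2 ^ k|) := by
  have hpos : 0 < v / 2 ^ k := by linarith [(abs_lt.mp hv).2]
  have hlog : log v - k * log 2 = log (1 - (1 - v / 2 ^ k)) := by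
    have hv₀ : v ≠ 0 := fun h => by simp [h] at hpos
    rw [sub_sub_cancel, log_div hv₀ (by positivity), log_zpow]
  rw [hlog, add_comm]
  exact abs_log_sub_add_sum_range_le hv n

lemma log_le_mul_log_two_add {v u : ℝ} (k : ℤ) (n : ℕ) (hv : |1 - v / 2 ^ k| < 1)
    (hu : -∑ i ∈ range n, (1 - v / 2 ^ k) ^ (i + 1) / (i + 1 : ℝ) +
      |1 - v / 2 ^ k| ^ (n + 1) / (1 - |1 - v / 2 ^ k|) ≤ u) : log v ≤ k * log 2 + u := by
  linarith [(abs_le.mp (abs_log_sub_mul_log_two_add_sum_le k n hv)).2]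

lemma mul_log_two_add_le_log {v l : ℝ} (k : ℤ) (n : ℕ) (hv : |1 - v / 2 ^ k| < 1)
    (hl : l ≤ -∑ i ∈ range n, (1 - v / 2 ^ k) ^ (i + 1) / (i + 1 : ℝ) -
      |1 - v / 2 ^ k| ^ (n + 1) / (1 - |1 - v / 2 ^ k|)) : k * log 2 + l ≤ log v := by
  linarith [(abs_le.mp (abs_log_sub_mul_log_two_add_sum_le k n hv)).1]

lemma tangentIntercept_eq (η : ℝ) : tangentIntercept ![3, 5, 7] η =
    3 * log ((η ^ 2 + 3 ^ 2) / (4 * 3 ^ 2)) + 5 * log ((η ^ 2 + 5 ^ 2) / (4 * 5 ^ 2)) +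
      7 * log ((η ^ 2 + 7 ^ 2) / (4 * 7 ^ 2)) := by
  simp [tangentIntercept, Fin.sum_univ_three]

-- `3.924014` and `28.265057` approximate from above the saddle points: the solutions `η` of
-- `tangentSlope ![3, 5, 7] η = μ` for the decay rates `μ = 2 * π - π / 3` and `μ = π / 3`.
lemma tangentIntercept_formSaddle_le : tangentIntercept ![3, 5, 7] 3.924014 ≤ -13.4902675 := by
  have h₃ := log_le_mul_log_two_add (v := (3.924014 ^ 2 + 3 ^ 2) / (4 * 3 ^ 2))
    (u := -0.389022453) 0 20 (by norm_num) (by norm_num [sum_range_succ])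
  have h₅ := log_le_mul_log_two_add (v := (3.924014 ^ 2 + 5 ^ 2) / (4 * 5 ^ 2))
    (u := -0.213245550) (-1) 20 (by norm_num) (by norm_num [sum_range_succ])
  have h₇ := log_le_mul_log_two_add (v := (3.924014 ^ 2 + 7 ^ 2) / (4 * 7 ^ 2))
    (u := 0.273260508) (-2) 20 (by norm_num) (by norm_num [sum_range_succ])
  rw [tangentIntercept_eq]
  push_cast at h₃ h₅ h₇
  linarith [log_two_gt_d9]

lemma le_tangentIntercept_formSaddle : -13.4902685 ≤ tangentIntercept ![3, 5, 7] 3.92401399 := by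
  have h₃ := mul_log_two_add_le_log (v := (3.92401399 ^ 2 + 3 ^ 2) / (4 * 3 ^ 2))
    (l := -0.389022459) 0 20 (by norm_num) (by norm_num [sum_range_succ])
  have h₅ := mul_log_two_add_le_log (v := (3.92401399 ^ 2 + 5 ^ 2) / (4 * 5 ^ 2))
    (l := -0.213245555) (-1) 20 (by norm_num) (by norm_num [sum_range_succ])
  have h₇ := mul_log_two_add_le_log (v := (3.92401399 ^ 2 + 7 ^ 2) / (4 * 7 ^ 2))
    (l := 0.273260504) (-2) 20 (by norm_num) (by norm_num [sum_range_succ])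
  rw [tangentIntercept_eq]
  push_cast at h₃ h₅ h₇
  linarith [log_two_lt_d9]

lemma tangentIntercept_coeffSaddle_le : tangentIntercept ![3, 5, 7] 28.265057 ≤ 30.129933 := by
  have h₃ := log_le_mul_log_two_add (v := (28.265057 ^ 2 + 3 ^ 2) / (4 * 3 ^ 2))
    (u := -0.354799907) 5 20 (by norm_num) (by norm_num [sum_range_succ])
  have h₅ := log_le_mul_log_two_add (v := (28.265057 ^ 2 + 5 ^ 2) / (4 * 5 ^ 2))
    (u := 0.029453758) 3 20 (by norm_num) (by norm_num [sum_range_succ])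
  have h₇ := log_le_mul_log_two_add (v := (28.265057 ^ 2 + 7 ^ 2) / (4 * 7 ^ 2))
    (u := 0.078369545) 2 20 (by norm_num) (by norm_num [sum_range_succ])
  rw [tangentIntercept_eq]
  push_cast at h₃ h₅ h₇
  linarith [log_two_lt_d9]

lemma arctan_one_div_sqrt_three : arctan (1 / √3) = π / 6 := by
  rw [← tan_pi_div_six]
  exact arctan_tan (by linarith [pi_pos]) (by linarith [pi_pos])

lemma arctan_lt_pi_div_six {x : ℝ} (hx : x ^ 2 < 1 / 3) : arctan x < π / 6 := by
  rw [← arctan_one_div_sqrt_three, arctan_strictMono.lt_iff_lt]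
  refine lt_of_pow_lt_pow_left₀ 2 (by positivity) ?_
  rwa [div_pow, sq_sqrt zero_le_three, one_pow]

lemma pi_div_six_lt_arctan {x : ℝ} (hx₀ : 0 ≤ x) (hx : 1 / 3 < x ^ 2) : π / 6 < arctan x := by
  rw [← arctan_one_div_sqrt_three, arctan_strictMono.lt_iff_lt]
  refine lt_of_pow_lt_pow_left₀ 2 hx₀ ?_
  rwa [div_pow, sq_sqrt zero_le_three, one_pow]

lemma tangentSlope_eq (η : ℝ) : tangentSlope ![3, 5, 7] η =
    2 * (arctan (3 / η) + arctan (5 / η) + arctan (7 / η)) := by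
  simp [tangentSlope, Fin.sum_univ_three]
  ring

lemma arctan_add_arctan_add_arctan_eq {η : ℝ} (h₁ : √15 < η) (h₂ : η < √71) :
    arctan (3 / η) + arctan (5 / η) + arctan (7 / η) =
      π - arctan ((15 * η ^ 2 - 105) / (71 * η - η ^ 3)) := by
  have hη : 0 < η := (sqrt_nonneg _).trans_lt h₁
  have h₁₅ : 0 < η ^ 2 - 15 := sub_pos.mpr ((sqrt_lt' hη).mp h₁)
  have h₇₁ : 0 < 71 - η ^ 2 := sub_pos.mpr ((lt_sqrt hη.le).mp h₂)
  have hadd : arctan (3 / η) + arctan (5 / η) = arctan (8 * η / (η ^ 2 - 15)) := by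
    have hlt : 3 / η * (5 / η) < 1 := by
      rw [div_mul_div_comm, div_lt_one (by positivity)]
      linarith
    have hden : 1 - 3 / η * (5 / η) = (η ^ 2 - 15) / η ^ 2 := by
      field_simp
      ring
    rw [arctan_add hlt, hden]
    congr 1
    field_simp
    ring
  have hgt : 1 < 8 * η / (η ^ 2 - 15) * (7 / η) := by
    rw [div_mul_div_comm, one_lt_div (by positivity)]
    nlinarith
  have heq : (8 * η / (η ^ 2 - 15) + 7 / η) / (1 - 8 * η / (η ^ 2 - 15) * (7 / η)) =
      -((15 * η ^ 2 - 105) / (71 * η - η ^ 3)) := by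
    have hden : 1 - 8 * η / (η ^ 2 - 15) * (7 / η) = -((71 - η ^ 2) / (η ^ 2 - 15)) := by
      field_simp
      ring
    rw [hden, show 71 * η - η ^ 3 = η * (71 - η ^ 2) by ring]
    field_simp
    ring
  rw [hadd, arctan_add_eq_add_pi hgt (by positivity), heq, arctan_neg, neg_add_eq_sub]

lemma tangentSlope_formSaddle_lt : tangentSlope ![3, 5, 7] 3.924014 < 2 * π - π / 3 := by
  have harctan := pi_div_six_lt_arctan
    (x := (15 * 3.924014 ^ 2 - 105) / (71 * 3.924014 - 3.924014 ^ 3)) (by norm_num) (by norm_num)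
  rw [tangentSlope_eq, arctan_add_arctan_add_arctan_eq
    ((sqrt_lt' (by norm_num)).mpr (by norm_num)) ((lt_sqrt (by norm_num)).mpr (by norm_num))]
  linarith

lemma le_tangentSlope_formSaddle : 2 * π - π / 3 ≤ tangentSlope ![3, 5, 7] 3.92401399 := by
  have harctan := arctan_lt_pi_div_six
    (x := (15 * 3.92401399 ^ 2 - 105) / (71 * 3.92401399 - 3.92401399 ^ 3)) (by norm_num)
  rw [tangentSlope_eq, arctan_add_arctan_add_arctan_eq
    ((sqrt_lt' (by norm_num)).mpr (by norm_num)) ((lt_sqrt (by norm_num)).mpr (by norm_num))]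
  linarith

lemma tangentSlope_coeffSaddle_lt : tangentSlope ![3, 5, 7] 28.265057 < π / 3 := by
  rw [tangentSlope_eq, arctan_add (by norm_num), arctan_add (by norm_num)]
  linarith [arctan_lt_pi_div_six (x := ((3 / 28.265057 + 5 / 28.265057) /
    (1 - 3 / 28.265057 * (5 / 28.265057)) + 7 / 28.265057) / (1 - (3 / 28.265057 + 5 / 28.265057) /
      (1 - 3 / 28.265057 * (5 / 28.265057)) * (7 / 28.265057))) (by norm_num)]

end Numerics

/-! ### The linear forms -/

section MainForms

open Filter MeasureTheory Set Polynomial Real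

/-- The common denominator of the `m`-th linear form. -/
noncomputable def formDenom (m : ℕ) : ℝ := reducedLcm (halfWidths m) (14 * m + 1)

/-- The integral producing the integer coefficient of `√3 * arctan √3` in the `m`-th linear form. -/
noncomputable def coeffIntegral (m : ℕ) : ℝ :=
  ∫ y in Ioi 0, (∏ i, rotatedBinomial (halfWidths m i)).eval y * coeffKernel (π / 3) y

/-- The integral producing the value of the `m`-th linear form. -/
noncomputable def formIntegral (m : ℕ) : ℝ :=
  ∫ y in Ioi 0, (∏ i, rotatedBinomial (halfWidths m i)).eval y * formKernel (π / 3) y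

lemma formDenom_pos (m : ℕ) : 0 < formDenom m := Nat.cast_pos.mpr reducedLcm_pos

lemma exists_linearForm (m : ℕ) : ∃ a b : ℤ, b = formDenom m * (2 * coeffIntegral m) ∧
    b * (√3 * arctan √3) - a = formDenom m * (2 * √3 / π * formIntegral m) := by
  have hL (i : Fin 3) : 2 * halfWidths m i + 1 ≤ 14 * m + 1 := by
    fin_cases i <;> simp [halfWidths] <;> lia
  have heval (n : ℕ) : ∃ z : ℤ,
      (formDenom m : ℂ) * (∏ i, centralBinomial (halfWidths m i)).eval (n : ℂ) = z := by
    obtain ⟨z, hz⟩ := exists_eval_prod_centralBinomial_eq (halfWidths m) n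
    exact ⟨reducedLcm (halfWidths m) (14 * m + 1) * z, by simp [hz, formDenom]⟩
  obtain ⟨a, b, hb, hform⟩ := (isRotation_prod_rotatedBinomial (halfWidths m)).exists_linearForm
    heval (by simpa [formDenom] using exists_reducedLcm_mul_eval_derivative_eq hL)
  refine ⟨a, b, ?_, ?_⟩
  · rw [hb, coeffIntegral]
    ring
  · rw [hform, formIntegral]
    ring

lemma eventually_formDenom_le : ∀ᶠ m : ℕ in atTop, formDenom m ≤ exp (4.0097961 * m) := by
  filter_upwards [eventually_log_reducedLcm_le (ε := 1e-7) (by norm_num)] with m hm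
  rw [← log_le_iff_le_exp (formDenom_pos m)]
  exact hm.trans_eq (by norm_num)

lemma isExpDecayKernel_coeffKernel_pi_div_three :
    IsExpDecayKernel (coeffKernel (π / 3)) (π / 3) :=
  isExpDecayKernel_coeffKernel (by linarith [pi_pos])

lemma isExpDecayKernel_formKernel_pi_div_three :
    IsExpDecayKernel (formKernel (π / 3)) (2 * π - π / 3) :=
  isExpDecayKernel_formKernel (by positivity)

lemma widths_ne_zero (i : Fin 3) : ![3, 5, 7] i ≠ 0 := by
  fin_cases i <;> decide

lemma eventually_two_mul_coeffIntegral_le :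
    ∀ᶠ m : ℕ in atTop, 2 * coeffIntegral m ≤ exp (30.1299331 * m) := by
  filter_upwards [isExpDecayKernel_coeffKernel_pi_div_three.eventually_mul_integral_le (by simp)
    widths_ne_zero (by norm_num) tangentSlope_coeffSaddle_lt zero_le_two
    (by norm_num : (0 : ℝ) < 1e-7)] with m hm
  refine hm.trans (exp_le_exp.mpr ?_)
  gcongr
  linarith [tangentIntercept_coeffSaddle_le]

lemma eventually_coeffIntegral_pos : ∀ᶠ m : ℕ in atTop, 0 < coeffIntegral m := by
  have hslope : π / 3 ≤ tangentSlope ![3, 5, 7] 3.92401399 := by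
    linarith [le_tangentSlope_formSaddle, pi_pos]
  filter_upwards [isExpDecayKernel_coeffKernel_pi_div_three.eventually_le_integral (by positivity)
    (by simp) widths_ne_zero (by norm_num) hslope 1 one_pos] with m hm
  exact (by positivity : (0 : ℝ) < 1 * _).trans_le hm

lemma eventually_mul_formIntegral_le :
    ∀ᶠ m : ℕ in atTop, 2 * √3 / π * formIntegral m ≤ exp (-13.4902674 * m) := by
  filter_upwards [isExpDecayKernel_formKernel_pi_div_three.eventually_mul_integral_le (by simp)
    widths_ne_zero (by norm_num) tangentSlope_formSaddle_lt (by positivity : 0 ≤ 2 * √3 / π)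
    (by norm_num : (0 : ℝ) < 1e-7)] with m hm
  refine hm.trans (exp_le_exp.mpr ?_)
  gcongr
  linarith [tangentIntercept_formSaddle_le]

lemma eventually_le_mul_formIntegral :
    ∀ᶠ m : ℕ in atTop, exp (-13.4902686 * m) ≤ 2 * √3 / π * formIntegral m := by
  filter_upwards [isExpDecayKernel_formKernel_pi_div_three.eventually_le_integral
    (by linarith [pi_pos]) (by simp) widths_ne_zero (by norm_num) le_tangentSlope_formSaddle
    (π / (2 * √3)) (by norm_num : (0 : ℝ) < 1e-7)] with m hm
  have hle : exp (-13.4902686 * m) ≤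
      exp ((tangentIntercept ![3, 5, 7] 3.92401399 - 1e-7) * m) := by
    gcongr
    linarith [le_tangentIntercept_formSaddle]
  calc exp (-13.4902686 * m)
      ≤ 2 * √3 / π * (π / (2 * √3) *
          exp ((tangentIntercept ![3, 5, 7] 3.92401399 - 1e-7) * m)) := by
        rwa [← mul_assoc, div_mul_div_cancel₀ pi_ne_zero, div_self (by positivity), one_mul]
    _ ≤ 2 * √3 / π * formIntegral m := by
        gcongr
        exact hm

lemma eventually_formDenom_mul_le {f : ℕ → ℝ} {r s : ℝ}
    (hf : ∀ᶠ m : ℕ in atTop, f m ≤ exp (r * m)) (hs : 4.0097961 + r ≤ s) :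
    ∀ᶠ m : ℕ in atTop, formDenom m * f m ≤ exp (s * m) := by
  filter_upwards [eventually_formDenom_le, hf] with m hD hm
  have hpos := formDenom_pos m
  calc formDenom m * f m ≤ formDenom m * exp (r * m) := by gcongr
    _ ≤ exp (4.0097961 * m) * exp (r * m) := by gcongr
    _ = exp ((4.0097961 + r) * m) := by rw [← exp_add, ← add_mul]
    _ ≤ exp (s * m) := by gcongr

lemma eventually_exp_mul_coeffIntegral_le : ∀ᶠ m : ℕ in atTop,
    exp (-43.620202 * m) * (2 * coeffIntegral m) ≤ 2 * √3 / π * formIntegral m := by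
  filter_upwards [eventually_two_mul_coeffIntegral_le, eventually_le_mul_formIntegral]
    with m hcoeff hform
  calc exp (-43.620202 * m) * (2 * coeffIntegral m)
      ≤ exp (-43.620202 * m) * exp (30.1299331 * m) := by gcongr
    _ = exp ((-43.620202 + 30.1299331) * m) := by rw [← exp_add, ← add_mul]
    _ ≤ exp (-13.4902686 * m) := by gcongr; norm_num
    _ ≤ 2 * √3 / π * formIntegral m := hform

theorem exists_linearForms_sqrt_three_mul_arctan : ∃ a b : ℕ → ℤ, (∀ᶠ m in atTop, b m ≠ 0) ∧
    (∀ᶠ m : ℕ in atTop, |b m * (√3 * arctan √3) - a m| ≤ exp (-9.480471 * m)) ∧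
    (∀ᶠ m : ℕ in atTop, |(b m : ℝ)| ≤ exp (34.13973 * m)) ∧
    ∀ᶠ m : ℕ in atTop,
      exp (-43.620202 * m) * |(b m : ℝ)| ≤ |b m * (√3 * arctan √3) - a m| := by
  choose a b hb hform using exists_linearForm
  have hb_pos : ∀ᶠ m in atTop, 0 < (b m : ℝ) := by
    filter_upwards [eventually_coeffIntegral_pos] with m hm
    rw [hb]
    exact mul_pos (formDenom_pos m) (mul_pos two_pos hm)
  have hform_pos : ∀ᶠ m in atTop, 0 < b m * (√3 * arctan √3) - a m := by
    filter_upwards [eventually_le_mul_formIntegral] with m hm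
    rw [hform]
    exact mul_pos (formDenom_pos m) ((exp_pos _).trans_le hm)
  refine ⟨a, b, ?_, ?_, ?_, ?_⟩
  · filter_upwards [hb_pos] with m hm
    exact_mod_cast hm.ne'
  · filter_upwards [hform_pos,
      eventually_formDenom_mul_le (s := -9.480471) eventually_mul_formIntegral_le (by norm_num)]
      with m hm hle
    rwa [abs_of_pos hm, hform]
  · filter_upwards [hb_pos,
      eventually_formDenom_mul_le (s := 34.13973) eventually_two_mul_coeffIntegral_le (by norm_num)]
      with m hm hle
    rwa [abs_of_pos hm, hb]
  · filter_upwards [hb_pos, hform_pos, eventually_exp_mul_coeffIntegral_le] with m hm hm' hle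
    rw [abs_of_pos hm, abs_of_pos hm', hform, hb, mul_left_comm]
    exact mul_le_mul_of_nonneg_left hle (formDenom_pos m).le

end MainForms

end BetaTwo

theorem irrationality_measure_beta_18 :
    ∀ κ : ℝ, κ > 4.60106 →
      {pq : ℤ × ℕ+ |
        |Real.sqrt 3 * Real.arctan (Real.sqrt 3 / 1) -
            (pq.1 : ℝ) / ((pq.2 : ℕ) : ℝ)| <
          ((pq.2 : ℕ) : ℝ) ^ (-κ)}.Finite := by
  intro κ hκ
  obtain ⟨a, b, hb₀, hform, hb, hratio⟩ := BetaTwo.exists_linearForms_sqrt_three_mul_arctan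
  rw [div_one]
  exact BetaTwo.finite_setOf_abs_sub_div_lt_of_linearForms (by norm_num) (by norm_num)
    (by norm_num) (lt_trans (by norm_num) hκ) (lt_trans (by norm_num) hκ) hb₀ hform hb hratio
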